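/- arXiv:1907.00061 — 14 statements merged into one kernel-verified Lean document; each statement's English description precedes it below -/
import Mathlib

section
/- For every integer r ≥ 1 and every integer k ≥ 3, there exists a finite digraph H with the following properties: (1) H has at most k^r vertices; (2) H has no acyclic r-coloring; (3) for every arc uv of H, the digraph obtained from H by deleting the arc uv has an acyclic r-coloring; (4) the directed girth of H is exactly k, i.e., H contains a directed cycle of length k and contains no directed cycle of length less than k. -/
/-- A directed cycle of length `ℓ ≥ 2` in the digraph with arc relation `Adj`:
an injective map `c : ZMod ℓ → V` with an arc from each vertex to the next. -/
def IsDicycle {V : Type} (Adj : V → V → Prop) (ℓ : ℕ) (c : ZMod ℓ → V) : Prop :=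
  2 ≤ ℓ ∧ Function.Injective c ∧ ∀ j : ZMod ℓ, Adj (c j) (c (j + 1))

/-- An acyclic `r`-coloring of a digraph: an assignment of `r` colors to the
vertices such that no directed cycle is monochromatic. -/
def HasAcyclicColoring {V : Type} (Adj : V → V → Prop) (r : ℕ) : Prop :=
  ∃ f : V → Fin r, ∀ (ℓ : ℕ) (c : ZMod ℓ → V), IsDicycle Adj ℓ c →
    ∃ i j : ZMod ℓ, f (c i) ≠ f (c j)

/-- part index of a vertex -/
def bidx {n : ℕ} {W : Type} : Option (Fin n × W) → ℕ
  | none => 0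
  | some p => p.1.val + 1

/-- cyclic blow-up with one part a single vertex and `n` parts copies of `A` -/
def BAdj {n : ℕ} {W : Type} (A : W → W → Prop) (a b : Option (Fin n × W)) : Prop :=
  (∃ i w w', a = some (i, w) ∧ b = some (i, w') ∧ A w w') ∨
    bidx b = bidx a + 1 ∨ (bidx a = n ∧ bidx b = 0)

lemma cyc_const {ℓ : ℕ} (hℓ : 2 ≤ ℓ) (g : ZMod ℓ → ℕ) (h : ∀ j, g j ≤ g (j + 1)) (i : ZMod ℓ) :
    g i = g 0 := by
  have hm : Monotone (fun t : ℕ => g (t : ZMod ℓ)) := by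
    apply monotone_nat_of_le_succ
    intro t
    simpa using h (t : ZMod ℓ)
  have : NeZero ℓ := ⟨by omega⟩
  have h1 := hm (Nat.zero_le i.val)
  have h2 := hm (ZMod.val_lt i).le
  simp at h1 h2
  omega

lemma bidx_eq_zero {n : ℕ} {W : Type} {a : Option (Fin n × W)} : bidx a = 0 ↔ a = none := by
  cases a <;> simp [bidx]

lemma badj_le {n : ℕ} {W : Type} {A : W → W → Prop} {a b : Option (Fin n × W)}
    (h : BAdj A a b) : bidx b ≤ bidx a + 1 := by
  rcases h with ⟨i, w, w', rfl, rfl, _⟩ | h | h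
  · simp [bidx]
  · omega
  · omega

/-- a dicycle avoiding `none` lives in one part -/
lemma inner_cycle {n : ℕ} {W : Type} {A : W → W → Prop} {ℓ : ℕ} {c : ZMod ℓ → Option (Fin n × W)}
    (hc : IsDicycle (BAdj A) ℓ c) (h0 : ∀ j, c j ≠ none) :
    ∃ (i : Fin n) (d : ZMod ℓ → W), (∀ j, c j = some (i, d j)) ∧ IsDicycle A ℓ d := by
  obtain ⟨hl, hinj, hadj⟩ := hc
  have hmono : ∀ j, bidx (c j) ≤ bidx (c (j + 1)) := by
    intro j
    rcases hadj j with ⟨i, w, w', h1, h2, _⟩ | h | h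
    · rw [h1, h2]; simp [bidx]
    · omega
    · exact absurd (bidx_eq_zero.1 h.2) (h0 _)
  have hconst := cyc_const hl (fun j => bidx (c j)) hmono
  have hs : ∀ j, ∃ p, c j = some p := fun j => Option.ne_none_iff_exists'.1 (h0 j)
  choose p hp using hs
  have hp1 : ∀ j, (p j).1 = (p 0).1 := by
    intro j
    have := hconst j
    simp only [hp, bidx] at this
    exact Fin.ext (by omega)
  have hc' : ∀ j, c j = some ((p 0).1, (p j).2) := by
    intro j; rw [hp, ← hp1 j]
  refine ⟨(p 0).1, fun j => (p j).2, hc', hl, ?_, ?_⟩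
  · intro a b hab
    apply hinj
    rw [hc', hc' b]
    simp only at hab
    rw [hab]
  · intro j
    rcases hadj j with ⟨i, w, w', h1, h2, h3⟩ | h | h
    · rw [hp] at h1 h2
      simp only [Option.some.injEq] at h1 h2
      simpa [h1, h2] using h3
    · have e1 := hconst j
      have e2 := hconst (j + 1)
      omega
    · exact absurd (bidx_eq_zero.1 h.2) (h0 _)

lemma exists_tight (k : ℕ) (hk : 3 ≤ k) (r : ℕ) (hr : 1 ≤ r) :
    ∃ (V : Type) (_ : Fintype V) (Adj : V → V → Prop),
      (∀ v : V, ¬ Adj v v) ∧ Fintype.card V ≤ k ^ r ∧ ¬ HasAcyclicColoring Adj r ∧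
      (∀ (ℓ : ℕ) (c : ZMod ℓ → V), IsDicycle Adj ℓ c → k ≤ ℓ) ∧
      (∀ B : V → V → Prop, (∀ a b, B a b → Adj a b) → (¬ ∃ c : ZMod k → V, IsDicycle B k c) →
        HasAcyclicColoring B r) := by
  have : NeZero k := ⟨by omega⟩
  have : Fact (1 < k) := ⟨by omega⟩
  induction r, hr using Nat.le_induction with
  | base =>
    have key : ∀ (ℓ : ℕ) (c : ZMod ℓ → ZMod k),
        IsDicycle (fun a b : ZMod k => b = a + 1) ℓ c → ℓ = k := by
      intro ℓ c ⟨hl, hinj, hadj⟩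
      have : NeZero ℓ := ⟨by omega⟩
      have h1 : ∀ t : ℕ, c (t : ZMod ℓ) = c 0 + (t : ZMod k) := by
        intro t
        induction t with
        | zero => simp
        | succ t ih => push_cast; rw [hadj, ih]; ring
      have h2 := h1 ℓ
      simp only [ZMod.natCast_self, left_eq_add] at h2
      have h3 := Nat.le_of_dvd (by omega) ((ZMod.natCast_eq_zero_iff _ _).1 h2)
      have h4 := Fintype.card_le_of_injective c hinj
      simp only [ZMod.card] at h4
      omega
    refine ⟨ZMod k, inferInstance, fun a b => b = a + 1, ?_, ?_, ?_, ?_, ?_⟩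
    · intro v h; simp at h
    · simp [ZMod.card]
    · rintro ⟨f, hf⟩
      obtain ⟨i, j, hij⟩ := hf k id ⟨by omega, Function.injective_id, fun j => rfl⟩
      exact hij (Subsingleton.elim _ _)
    · intro ℓ c hc; exact (key ℓ c hc).ge
    · intro B hB hno
      refine ⟨fun _ => 0, ?_⟩
      intro ℓ c hc
      exfalso
      have := key ℓ c ⟨hc.1, hc.2.1, fun j => hB _ _ (hc.2.2 j)⟩
      subst this
      exact hno ⟨c, hc⟩
  | succ r hr ih =>
    obtain ⟨W, hW, A, hirr, hcard, hnc, hgirth, htight⟩ := ih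
    refine ⟨Option (Fin (k - 1) × W), inferInstance, BAdj A, ?_, ?_, ?_, ?_, ?_⟩
    · intro v h
      rcases h with ⟨i, w, w', h1, h2, h3⟩ | h | h
      · rw [h1] at h2
        simp only [Option.some.injEq, Prod.mk.injEq, true_and] at h2
        subst h2
        exact hirr _ h3
      · omega
      · omega
    · simp only [Fintype.card_option, Fintype.card_prod, Fintype.card_fin]
      have h1 : (k - 1) * Fintype.card W ≤ (k - 1) * k ^ r := Nat.mul_le_mul_left _ hcard
      have h2 : 1 ≤ k ^ r := Nat.one_le_pow _ _ (by omega)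
      obtain ⟨m, rfl⟩ : ∃ m, k = m + 1 := ⟨k - 1, by omega⟩
      simp only [Nat.add_sub_cancel] at *
      rw [pow_succ (m + 1) r]
      nlinarith
    · rintro ⟨f, hf⟩
      have hex : ∀ i : Fin (k - 1), ∃ w, f (some (i, w)) = f none := by
        intro i
        by_contra hcon
        push Not at hcon
        have : ∀ w, ∃ y, (f none).succAbove y = f (some (i, w)) :=
          fun w => Fin.exists_succAbove_eq (hcon w)
        choose g hg using this
        apply hnc
        refine ⟨g, ?_⟩
        intro ℓ c hc
        have hd : IsDicycle (BAdj A) ℓ (fun j => some (i, c j)) := by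
          refine ⟨hc.1, ?_, ?_⟩
          · intro a b h
            apply hc.2.1
            simpa using h
          · intro j
            exact Or.inl ⟨i, _, _, rfl, rfl, hc.2.2 j⟩
        obtain ⟨a, b, hab⟩ := hf ℓ _ hd
        refine ⟨a, b, fun h => hab ?_⟩
        rw [← hg, ← hg, h]
      choose w hw using hex
      let c : ZMod k → Option (Fin (k - 1) × W) := fun j =>
        if h : j.val = 0 then none
        else some (⟨j.val - 1, by have := ZMod.val_lt j; omega⟩,
          w ⟨j.val - 1, by have := ZMod.val_lt j; omega⟩)
      have hidx : ∀ j, bidx (c j) = j.val := by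
        intro j
        simp only [c]
        split_ifs with h
        · simp [bidx, h]
        · simp only [bidx]; omega
      have hcol : ∀ j, f (c j) = f none := by
        intro j
        simp only [c]
        split_ifs with h
        · rfl
        · exact hw _
      have hd : IsDicycle (BAdj A) k c := by
        refine ⟨by omega, ?_, ?_⟩
        · intro a b h
          apply ZMod.val_injective k
          rw [← hidx, ← hidx, h]
        · intro j
          right
          rw [hidx, hidx, ZMod.val_add, ZMod.val_one]
          have hj := ZMod.val_lt j
          rcases Nat.lt_or_ge (j.val + 1) k with h | h
          · left; exact Nat.mod_eq_of_lt h
          · right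
            have : j.val + 1 = k := by omega
            refine ⟨by omega, ?_⟩
            rw [this]; exact Nat.mod_self k
      obtain ⟨a, b, hab⟩ := hf k c hd
      exact hab (by rw [hcol, hcol])
    · intro ℓ c hc
      by_cases h0 : ∀ j, c j ≠ none
      · obtain ⟨i, d, -, hd⟩ := inner_cycle hc h0
        exact hgirth _ _ hd
      · push Not at h0
        obtain ⟨j0, hj0⟩ := h0
        obtain ⟨hl, hinj, hadj⟩ := hc
        have hle : ∀ t : ℕ, bidx (c (j0 + t)) ≤ t := by
          intro t
          induction t with
          | zero => simp [hj0, bidx]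
          | succ t ih =>
            have := badj_le (hadj (j0 + t))
            push_cast
            rw [← add_assoc]
            omega
        have hlast := hadj (j0 + ((ℓ - 1 : ℕ) : ZMod ℓ))
        have hz : j0 + ((ℓ - 1 : ℕ) : ZMod ℓ) + 1 = j0 := by
          rw [Nat.cast_sub (by omega)]; simp
        have h1 := hle (ℓ - 1)
        rw [hz, hj0] at hlast
        rcases hlast with ⟨i, w, w', _, h2, _⟩ | h | h
        · cases h2
        · simp [bidx] at h
        · omega
    · intro B hB hno
      have hin : ∀ i : Fin (k - 1),
          HasAcyclicColoring (fun w w' => A w w' ∧ B (some (i, w)) (some (i, w'))) r := by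
        intro i
        apply htight _ (fun a b h => h.1)
        rintro ⟨c, hc⟩
        refine hno ⟨fun j => some (i, c j), hc.1, ?_, fun j => (hc.2.2 j).2⟩
        intro a b h
        apply hc.2.1
        simpa using h
      choose g hg using hin
      let f : Option (Fin (k - 1) × W) → Fin (r + 1) := fun v =>
        match v with
        | none => 0
        | some p => (g p.1 p.2).succ
      refine ⟨f, ?_⟩
      intro ℓ c hc
      by_contra hmono
      push Not at hmono
      have hcD : IsDicycle (BAdj A) ℓ c := ⟨hc.1, hc.2.1, fun j => hB _ _ (hc.2.2 j)⟩
      by_cases h0 : ∀ j, c j ≠ none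
      · obtain ⟨i, d, hd, hdc⟩ := inner_cycle hcD h0
        obtain ⟨a, b, hab⟩ := hg i ℓ d ⟨hdc.1, hdc.2.1, fun j => ⟨hdc.2.2 j, by
          rw [← hd, ← hd]; exact hc.2.2 j⟩⟩
        apply hab
        have := hmono a b
        rw [hd, hd] at this
        exact Fin.succ_injective _ this
      · push Not at h0
        obtain ⟨j0, hj0⟩ := h0
        have hall : ∀ j, c j = none := by
          intro j
          have := hmono j j0
          rw [hj0] at this
          cases hcj : c j with
          | none => rfl
          | some p =>
            rw [hcj] at this
            exact absurd this (Fin.succ_ne_zero _)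
        have : Fact (1 < ℓ) := ⟨by have := hc.1; omega⟩
        have : (0 : ZMod ℓ) = 1 := hc.2.1 (by rw [hall, hall])
        exact zero_ne_one this

theorem exists_critical_digraph (r k : ℕ) (hr : 1 ≤ r) (hk : 3 ≤ k) :
    ∃ (V : Type) (_ : Fintype V) (Adj : V → V → Prop),
      (∀ v : V, ¬ Adj v v) ∧
      Fintype.card V ≤ k ^ r ∧
      ¬ HasAcyclicColoring Adj r ∧
      (∀ u v : V, Adj u v →
        HasAcyclicColoring (fun a b => Adj a b ∧ ¬(a = u ∧ b = v)) r) ∧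
      (∃ c : ZMod k → V, IsDicycle Adj k c) ∧
      (∀ (ℓ : ℕ) (c : ZMod ℓ → V), IsDicycle Adj ℓ c → k ≤ ℓ) := by
  obtain ⟨V, hV, D, hirr, hcard, hnc, hgirth, htight⟩ := exists_tight k hk r hr
  have hfin : Set.Finite {B : V → V → Prop | B ≤ D ∧ ¬ HasAcyclicColoring B r} := Set.toFinite _
  obtain ⟨B, hB⟩ := hfin.exists_minimal ⟨D, le_refl _, hnc⟩
  obtain ⟨⟨hBD, hBnc⟩, hmin⟩ := hB
  refine ⟨V, hV, B, fun v h => hirr v (hBD v v h), hcard, hBnc, ?_, ?_, ?_⟩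
  · intro u v huv
    by_contra hcon
    have hle : (fun a b => B a b ∧ ¬(a = u ∧ b = v)) ≤ B := fun a b h => h.1
    have := hmin ⟨hle.trans hBD, hcon⟩ hle u v huv
    exact this.2 ⟨rfl, rfl⟩
  · by_contra hno
    exact hBnc (htight B hBD hno)
  · intro ℓ c hc
    exact hgirth ℓ c ⟨hc.1, hc.2.1, fun j => hBD _ _ (hc.2.2 j)⟩
end

section
/- For all integers r and k with 3 ≤ k ≤ r, there exists a finite digraph H with at most k^{⌈k(1 + ln(r/k))⌉} vertices such that: H has no acyclic r-coloring; for every arc uv of H, the digraph obtained from H by deleting the arc uv has an acyclic r-coloring; and the directed girth of H is exactly k. -/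
open Relation

def Wk {V : Type} (R : V → V → Prop) : ℕ → V → V → Prop
  | 0, a, b => a = b
  | n + 1, a, b => ∃ c, Wk R n a c ∧ R c b

theorem Wk.trans {V : Type} {R : V → V → Prop} {m n : ℕ} {a b c : V}
    (h1 : Wk R m a b) (h2 : Wk R n b c) : Wk R (m + n) a c := by
  induction n generalizing c with
  | zero => cases h2; exact h1
  | succ n ih =>
    obtain ⟨d, hd, hr⟩ := h2
    exact ⟨d, ih hd, hr⟩

theorem Wk.mono {V : Type} {R S : V → V → Prop} (h : ∀ a b, R a b → S a b) {n : ℕ} {a b : V}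
    (h1 : Wk R n a b) : Wk S n a b := by
  induction n generalizing b with
  | zero => exact h1
  | succ n ih =>
    obtain ⟨d, hd, hr⟩ := h1
    exact ⟨d, ih hd, h _ _ hr⟩

theorem wk_iff {V : Type} {R : V → V → Prop} {n : ℕ} {a b : V} :
    Wk R n a b ↔ ∃ p : ℕ → V, p 0 = a ∧ p n = b ∧ ∀ i < n, R (p i) (p (i + 1)) := by
  constructor
  · intro h
    induction n generalizing b with
    | zero => exact ⟨fun _ => a, rfl, h, by simp⟩
    | succ n ih =>
      obtain ⟨d, hd, hr⟩ := h
      obtain ⟨p, h0, hn, hp⟩ := ih hd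
      refine ⟨fun i => if i ≤ n then p i else b, by simp [h0], by simp, ?_⟩
      intro i hi
      rcases Nat.lt_succ_iff_lt_or_eq.1 hi with h | h
      · simp only [h.le, if_true, Nat.succ_le_of_lt h]; exact hp i h
      · subst h; simpa [hn] using hr
  · rintro ⟨p, h0, hn, hp⟩
    induction n generalizing b with
    | zero => exact h0.symm.trans hn
    | succ n ih =>
      exact ⟨p n, ih rfl (fun i hi => hp i (by omega)), hn ▸ hp n (by omega)⟩

theorem transGen_iff {V : Type} {R : V → V → Prop} {a b : V} :
    TransGen R a b ↔ ∃ n, 1 ≤ n ∧ Wk R n a b := by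
  constructor
  · intro h
    induction h with
    | single h => exact ⟨1, le_rfl, _, rfl, h⟩
    | tail _ h ih =>
      obtain ⟨n, hn, hw⟩ := ih
      exact ⟨n + 1, by omega, _, hw, h⟩
  · rintro ⟨n, hn, hw⟩
    induction n generalizing b with
    | zero => omega
    | succ n ih =>
      obtain ⟨d, hd, hr⟩ := hw
      rcases Nat.eq_zero_or_pos n with h | h
      · subst h; cases hd; exact .single hr
      · exact .tail (ih h hd) hr

def GirthGe {V : Type} (R : V → V → Prop) (k : ℕ) : Prop :=
  ∀ n a, 1 ≤ n → Wk R n a a → k ≤ n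

def Mono {V C : Type} (R : V → V → Prop) (f : V → C) : V → V → Prop :=
  fun a b => R a b ∧ f a = f b

def Good {V : Type} (R : V → V → Prop) (r : ℕ) : Prop :=
  ∃ f : V → Fin r, ∀ a, ¬ TransGen (Mono R f) a a

theorem IsDicycle.wk {V : Type} {R : V → V → Prop} {l : ℕ} {c : ZMod l → V}
    (h : IsDicycle R l c) : Wk R l (c 0) (c 0) := by
  rw [wk_iff]
  refine ⟨fun i => c i, by simp, by simp, ?_⟩
  intro i _
  simpa using h.2.2 i

theorem exists_dicycle {V : Type} {R : V → V → Prop} (hR : ∀ a, ¬ R a a) {n : ℕ} {a : V}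
    (hn : 1 ≤ n) (hw : Wk R n a a) : ∃ l ≤ n, ∃ c : ZMod l → V, IsDicycle R l c := by
  classical
  have hex : ∃ m, 1 ≤ m ∧ ∃ a, Wk R m a a := ⟨n, hn, a, hw⟩
  obtain ⟨hm1, b, hb⟩ := Nat.find_spec hex
  have hmin : ∀ m', 1 ≤ m' → (∃ a, Wk R m' a a) → Nat.find hex ≤ m' :=
    fun m' h1 h2 => Nat.find_min' hex ⟨h1, h2⟩
  have hle : Nat.find hex ≤ n := hmin n hn ⟨a, hw⟩
  generalize Nat.find hex = m at *
  refine ⟨m, hle, ?_⟩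
  obtain ⟨p, h0, hpm, hp⟩ := wk_iff.1 hb
  have hm2 : 2 ≤ m := by
    by_contra h
    have : m = 1 := by omega
    subst this
    have := hp 0 (by omega)
    rw [h0] at this
    simp only [zero_add, hpm] at this
    exact hR _ this
  have hinj : ∀ i j, i < j → j < m → p i ≠ p j := by
    intro i j hij hj he
    have := hmin (j - i) (by omega) ⟨p i, wk_iff.2 ⟨fun s => p (i + s), by simp, ?_, ?_⟩⟩
    · omega
    · simp only [Nat.add_sub_cancel' hij.le]; exact he.symm
    · intro s hs
      exact hp (i + s) (by omega)
  have : NeZero m := ⟨by omega⟩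
  refine ⟨fun j => p j.val, hm2, ?_, ?_⟩
  · intro x y hxy
    apply ZMod.val_injective m
    rcases lt_trichotomy x.val y.val with h | h | h
    · exact absurd hxy (hinj _ _ h (ZMod.val_lt y))
    · exact h
    · exact absurd hxy.symm (hinj _ _ h (ZMod.val_lt x))
  · intro j
    have hj := ZMod.val_lt j
    have hs := hp j.val hj
    have : Fact (1 < m) := ⟨by omega⟩
    have hv : (j + 1).val = (j.val + 1) % m := by
      rw [ZMod.val_add, ZMod.val_one]
    show R (p j.val) (p (j + 1).val)
    rw [hv]
    rcases Nat.lt_or_ge (j.val + 1) m with h | h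
    · rwa [Nat.mod_eq_of_lt h]
    · have : j.val + 1 = m := by omega
      rw [this, Nat.mod_self, h0, ← hpm]; rwa [this] at hs

theorem good_iff {V : Type} {R : V → V → Prop} (hR : ∀ a, ¬ R a a) {r : ℕ} :
    Good R r ↔ HasAcyclicColoring R r := by
  constructor
  · rintro ⟨f, hf⟩
    refine ⟨f, fun l c hc => ?_⟩
    by_contra hcon
    push Not at hcon
    have : IsDicycle (Mono R f) l c := ⟨hc.1, hc.2.1, fun j => ⟨hc.2.2 j, hcon _ _⟩⟩
    exact hf _ (transGen_iff.2 ⟨l, by have := hc.1; omega, this.wk⟩)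
  · rintro ⟨f, hf⟩
    refine ⟨f, fun a ha => ?_⟩
    obtain ⟨n, hn, hw⟩ := transGen_iff.1 ha
    obtain ⟨l, _, c, hc⟩ := exists_dicycle (R := Mono R f) (fun a h => hR a h.1) hn hw
    obtain ⟨i, j, hij⟩ := hf l c ⟨hc.1, hc.2.1, fun j => (hc.2.2 j).1⟩
    apply hij
    have hc0 : ∀ s : ℕ, f (c s) = f (c 0) := by
      intro s
      induction s with
      | zero => simp
      | succ s ih => rw [← ih, Nat.cast_succ]; exact (hc.2.2 s).2.symm
    have : NeZero l := ⟨by have := hc.1; omega⟩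
    have h1 := hc0 i.val
    have h2 := hc0 j.val
    rw [ZMod.natCast_zmod_val] at h1 h2
    rw [h1, h2]

theorem GirthGe.irrefl {V : Type} {R : V → V → Prop} {k : ℕ} (h : GirthGe R k) (hk : 2 ≤ k) (a : V) :
    ¬ R a a := fun ha => by
  have := h 1 a le_rfl ⟨a, rfl, ha⟩
  omega

/-- blow-up -/
def Blow {V : Type} (k : ℕ) (R : V → V → Prop) : ZMod k × V → ZMod k × V → Prop :=
  fun x y => y.1 = x.1 + 1 ∨ (x.1 = y.1 ∧ R x.2 y.2)

theorem blow_girth {V : Type} {k : ℕ} {R : V → V → Prop} (h : GirthGe R k) :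
    GirthGe (Blow k R) k := by
  intro n a hn hw
  by_contra hlt
  have key : ∀ n (b : ZMod k × V), Wk (Blow k R) n a b →
      ∃ s ≤ n, b.1 = a.1 + s ∧ (s = 0 → Wk R n a.2 b.2) := by
    intro n
    induction n with
    | zero => intro b hb; cases hb; exact ⟨0, le_rfl, by simp, fun _ => rfl⟩
    | succ n ih =>
      rintro b ⟨d, hd, hr⟩
      obtain ⟨s, hs, he, hz⟩ := ih d hd
      rcases hr with hr | ⟨hr, hr2⟩
      · exact ⟨s + 1, by omega, by rw [hr, he]; push_cast; ring, by omega⟩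
      · exact ⟨s, by omega, hr ▸ he, fun h0 => ⟨_, hz h0, hr2⟩⟩
  obtain ⟨s, hs, he, hz⟩ := key n a hw
  have : (s : ZMod k) = 0 := by simpa using he
  rw [ZMod.natCast_eq_zero_iff] at this
  have h0 : s = 0 := Nat.eq_zero_of_dvd_of_lt this (by omega)
  have := h n _ hn (hz h0)
  omega

theorem blow_good {V : Type} {k r : ℕ} (hk : 1 ≤ k) {R : V → V → Prop}
    (h : Good (Blow k R) r) : ∃ r', Good R r' ∧ k * r' ≤ (k - 1) * r := by
  classical
  obtain ⟨f, hf⟩ := h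
  have : NeZero k := ⟨by omega⟩
  let C : ZMod k → Finset (Fin r) := fun i => Finset.univ.filter (fun c => ∃ a, f (i, a) = c)
  have hmiss : ∀ c, ∃ i, c ∉ C i := by
    intro c
    by_contra hcon
    push Not at hcon
    have : ∀ i, ∃ a, f (i, a) = c := fun i => by simpa [C] using hcon i
    choose p hp using this
    apply hf (0, p 0)
    refine transGen_iff.2 ⟨k, hk, wk_iff.2 ⟨fun s => ((s : ZMod k), p s), by simp, by simp, ?_⟩⟩
    intro i _
    exact ⟨Or.inl (by simp), by rw [hp, hp]⟩
  have hsum : ∑ i, (C i).card ≤ (k - 1) * r := by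
    have h1 : ∑ i, (C i).card = ∑ c : Fin r, (Finset.univ.filter (fun i => c ∈ C i)).card := by
      have := Finset.sum_card_bipartiteAbove_eq_sum_card_bipartiteBelow
        (s := (Finset.univ : Finset (ZMod k))) (t := (Finset.univ : Finset (Fin r)))
        (fun i c => c ∈ C i)
      simpa [Finset.bipartiteAbove, Finset.bipartiteBelow] using this
    rw [h1]
    calc _ ≤ ∑ c : Fin r, (k - 1) := by
          apply Finset.sum_le_sum
          intro c _
          obtain ⟨i, hi⟩ := hmiss c
          have : (Finset.univ.filter (fun i => c ∈ C i)) ⊆ Finset.univ.erase i := by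
            intro j hj
            simp only [Finset.mem_filter, Finset.mem_univ, true_and] at hj
            simp only [Finset.mem_erase, Finset.mem_univ, and_true]
            rintro rfl; exact hi hj
          have := Finset.card_le_card this
          simpa [Finset.card_erase_of_mem, ZMod.card] using this
      _ = _ := by simp [mul_comm]
  have hex : ∃ i, k * (C i).card ≤ (k - 1) * r := by
    by_contra hcon
    push Not at hcon
    have h2 : ∑ i : ZMod k, (k - 1) * r < ∑ i : ZMod k, k * (C i).card :=
      Finset.sum_lt_sum_of_nonempty ⟨0, Finset.mem_univ _⟩ (fun i _ => hcon i)
    rw [← Finset.mul_sum Finset.univ (fun i => (C i).card) k, Finset.sum_const, Finset.card_univ,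
      ZMod.card, smul_eq_mul] at h2
    exact absurd (Nat.mul_le_mul_left k hsum) (not_le.2 h2)
  obtain ⟨i, hi⟩ := hex
  refine ⟨_, ⟨fun a => (C i).equivFin ⟨f (i, a), by simp [C]⟩, ?_⟩, hi⟩
  intro a ha
  apply hf (i, a)
  refine TransGen.lift (p := Mono (Blow k R) f) (fun a => (i, a)) ?_ a a ha
  rintro x y ⟨hxy, he⟩
  refine ⟨Or.inr ⟨rfl, hxy⟩, ?_⟩
  simpa using he

theorem exists_tower (k : ℕ) (hk : 3 ≤ k) (t : ℕ) : ∃ (V : Type) (_ : Fintype V) (R : V → V → Prop),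
    Fintype.card V = k ^ t ∧ GirthGe R k ∧ (∀ r, Good R r → t + 1 ≤ r) ∧
    (∀ s, t = k - 1 + s → ∀ r, Good R r → k ^ s * k ≤ (k - 1) ^ s * r) := by
  induction t with
  | zero =>
    refine ⟨Unit, inferInstance, fun _ _ => False, by simp, ?_, ?_, ?_⟩
    · intro n a hn hw
      obtain ⟨n, rfl⟩ := Nat.exists_eq_add_of_le' hn
      obtain ⟨_, _, h⟩ := hw
      exact h.elim
    · rintro r ⟨f, _⟩
      have := (f ()).2
      omega
    · intro s hs; omega
  | succ t ih =>
    obtain ⟨V, _, R, hc, hg, h1, h2⟩ := ih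
    have : NeZero k := ⟨by omega⟩
    have h1' : ∀ r, Good (Blow k R) r → t + 1 + 1 ≤ r := by
      intro r hr
      obtain ⟨r', hr', hle⟩ := blow_good (by omega) hr
      have h3 := h1 r' hr'
      obtain ⟨j, rfl⟩ : ∃ j, k = j + 1 := ⟨k - 1, by omega⟩
      simp only [Nat.add_sub_cancel] at hle
      by_contra hcon
      have : r ≤ r' := by omega
      nlinarith [Nat.mul_le_mul_left j this]
    refine ⟨ZMod k × V, inferInstance, Blow k R, ?_, blow_girth hg, h1', ?_⟩
    · rw [Fintype.card_prod, ZMod.card, hc, pow_succ, mul_comm]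
    · intro s hs r hr
      rcases s with _ | s
      · have := h1' r hr
        simp only [pow_zero, one_mul]; omega
      · obtain ⟨r', hr', hle⟩ := blow_good (by omega) hr
        have h3 := h2 s (by omega) r' hr'
        calc k ^ (s + 1) * k = k * (k ^ s * k) := by ring
          _ ≤ k * ((k - 1) ^ s * r') := Nat.mul_le_mul_left _ h3
          _ = (k - 1) ^ s * (k * r') := by ring
          _ ≤ (k - 1) ^ s * ((k - 1) * r) := Nat.mul_le_mul_left _ hle
          _ = _ := by ring

theorem numeric (r k : ℕ) (hk : 3 ≤ k) (hkr : k ≤ r) (s : ℕ)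
    (hs : k - 1 + s = ⌈(k : ℝ) * (1 + Real.log ((r : ℝ) / (k : ℝ)))⌉₊) :
    (k - 1) ^ s * r < k ^ s * k := by
  have hk0 : (0 : ℝ) < k := by positivity
  have hr0 : (0 : ℝ) < r := by exact_mod_cast (by omega : 0 < r)
  set L := Real.log ((r : ℝ) / k) with hL
  have h1 : (k : ℝ) * (1 + L) ≤ (k - 1 + s : ℕ) := by rw [hs]; exact Nat.le_ceil _
  have hc1 : ((k - 1 : ℕ) : ℝ) = (k : ℝ) - 1 := by rw [Nat.cast_sub (by omega)]; simp
  rw [Nat.cast_add, hc1] at h1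
  have h2 : (k : ℝ) * L < s := by linarith
  have h3 : ((k : ℝ) - 1) ≤ k * Real.exp (-(1 / k)) := by
    have := Real.add_one_le_exp (-(1 / (k : ℝ)))
    calc (k : ℝ) - 1 = k * (-(1 / k) + 1) := by field_simp; ring
      _ ≤ _ := by gcongr
  have hk1 : (0 : ℝ) ≤ (k : ℝ) - 1 := by
    have : (3 : ℝ) ≤ k := by exact_mod_cast hk
    linarith
  have h4 : ((k : ℝ) - 1) ^ s ≤ k ^ s * Real.exp (-(s / k)) := by
    calc ((k : ℝ) - 1) ^ s ≤ (k * Real.exp (-(1 / k))) ^ s := pow_le_pow_left₀ hk1 h3 s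
      _ = _ := by rw [mul_pow, ← Real.exp_nat_mul]; congr 2; ring
  have h5 : Real.exp (-(s / k : ℝ)) < k / r := by
    have : (k / r : ℝ) = Real.exp (-L) := by
      rw [Real.exp_neg, hL, Real.exp_log (by positivity), inv_div]
    rw [this, Real.exp_lt_exp, neg_lt_neg_iff, lt_div_iff₀ hk0]
    linarith
  have : ((k : ℝ) - 1) ^ s * r < k ^ s * k := by
    calc ((k : ℝ) - 1) ^ s * r ≤ k ^ s * Real.exp (-(s / k)) * r := by gcongr
      _ < k ^ s * (k / r) * r := by gcongr
      _ = _ := by field_simp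
  rw [← hc1] at this
  exact_mod_cast this

/-- bypass a vertex -/
def Byp {V : Type} (R : V → V → Prop) (x : V) : {y // y ≠ x} → {y // y ≠ x} → Prop :=
  fun a b => R a b ∨ (R a x ∧ R x b)

theorem byp_girth {V : Type} {R : V → V → Prop} {k : ℕ} (h : GirthGe R (k + 1)) (x : V) :
    GirthGe (Byp R x) k := by
  intro n a hn hw
  have key : ∀ n b, Wk (Byp R x) n a b → Wk R n a b ∨
      ∃ i j, 1 ≤ i ∧ 1 ≤ j ∧ i + j ≤ n + 1 ∧ Wk R i a x ∧ Wk R j x b := by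
    intro n
    induction n with
    | zero => intro b hb; cases hb; exact Or.inl rfl
    | succ n ih =>
      rintro b ⟨d, hd, hr⟩
      rcases ih d hd with h1 | ⟨i, j, hi, hj, hij, hw1, hw2⟩
      · rcases hr with hr | ⟨hr1, hr2⟩
        · exact Or.inl ⟨_, h1, hr⟩
        · exact Or.inr ⟨n + 1, 1, by omega, le_rfl, by omega, ⟨_, h1, hr1⟩, ⟨_, rfl, hr2⟩⟩
      · rcases hr with hr | ⟨hr1, hr2⟩
        · exact Or.inr ⟨i, j + 1, hi, by omega, by omega, hw1, ⟨_, hw2, hr⟩⟩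
        · exact Or.inr ⟨i, 1, hi, le_rfl, by omega, hw1, ⟨_, rfl, hr2⟩⟩
  rcases key n a hw with h1 | ⟨i, j, hi, hj, hij, hw1, hw2⟩
  · have := h n _ hn h1; omega
  · have := h (i + j) _ (by omega) (hw1.trans hw2); omega

theorem byp_good {V : Type} {R : V → V → Prop} {r : ℕ} (hr : 1 ≤ r) (hR : ∀ a, ¬ R a a) (x : V)
    (h : Good (Byp R x) r) : Good R r := by
  classical
  obtain ⟨f, hf⟩ := h
  let g : V → Fin r := fun y => if h : y ≠ x then f ⟨y, h⟩ else ⟨0, hr⟩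
  have hg : ∀ y : {y // y ≠ x}, g y = f y := fun y => by simp [g, y.2]
  refine ⟨g, ?_⟩
  have step1 : ∀ a b : {y // y ≠ x}, Mono R g a b → Mono (Byp R x) f a b := by
    rintro a b ⟨h1, h2⟩
    exact ⟨Or.inl h1, by rw [← hg, ← hg, h2]⟩
  have step2 : ∀ a b : {y // y ≠ x}, Mono R g a x → Mono R g x b → Mono (Byp R x) f a b := by
    rintro a b ⟨h1, h2⟩ ⟨h3, h4⟩
    exact ⟨Or.inr ⟨h1, h3⟩, by rw [← hg, ← hg, h2, h4]⟩
  have key : ∀ (a : {y // y ≠ x}) (b : V), TransGen (Mono R g) a b →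
      (∀ hb : b ≠ x, TransGen (Mono (Byp R x) f) a ⟨b, hb⟩) ∧
      (b = x → ∃ c : {y // y ≠ x}, ReflTransGen (Mono (Byp R x) f) a c ∧ Mono R g c x) := by
    intro a b hab
    induction hab with
    | single h =>
      refine ⟨fun hb => .single (step1 a ⟨_, hb⟩ h), ?_⟩
      rintro rfl
      exact ⟨a, .refl, h⟩
    | @tail c d _ h ih =>
      by_cases hc : c = x
      · subst hc
        obtain ⟨e, he1, he2⟩ := ih.2 rfl
        refine ⟨fun hb => TransGen.tail' he1 (step2 e ⟨_, hb⟩ he2 h), ?_⟩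
        rintro rfl
        exact absurd h.1 (hR _)
      · have h1 := ih.1 hc
        refine ⟨fun hb => h1.tail (step1 ⟨c, hc⟩ ⟨_, hb⟩ h), ?_⟩
        rintro rfl
        exact ⟨⟨c, hc⟩, h1.to_reflTransGen, h⟩
  intro a ha
  by_cases hax : a = x
  · subst hax
    obtain ⟨y, hy, hya⟩ := TransGen.head'_iff.1 ha
    have hyn : y ≠ a := by rintro rfl; exact hR _ hy.1
    rcases reflTransGen_iff_eq_or_transGen.1 hya with h | h
    · exact hyn h.symm
    · obtain ⟨c, hc1, hc2⟩ := (key ⟨y, hyn⟩ a h).2 rfl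
      exact hf _ (TransGen.tail' hc1 (step2 c ⟨y, hyn⟩ hc2 hy))
  · exact hf _ ((key ⟨a, hax⟩ a ha).1 hax)

theorem exists_small_critical_digraph (r k : ℕ) (hk : 3 ≤ k) (hkr : k ≤ r) :
    ∃ (V : Type) (_ : Fintype V) (Adj : V → V → Prop),
      (∀ v : V, ¬ Adj v v) ∧
      Fintype.card V ≤ k ^ (⌈(k : ℝ) * (1 + Real.log ((r : ℝ) / (k : ℝ)))⌉₊) ∧
      ¬ HasAcyclicColoring Adj r ∧
      (∀ u v : V, Adj u v →
        HasAcyclicColoring (fun a b => Adj a b ∧ ¬(a = u ∧ b = v)) r) ∧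
      (∃ c : ZMod k → V, IsDicycle Adj k c) ∧
      (∀ (ℓ : ℕ) (c : ZMod ℓ → V), IsDicycle Adj ℓ c → k ≤ ℓ) := by
  classical
  set T := ⌈(k : ℝ) * (1 + Real.log ((r : ℝ) / (k : ℝ)))⌉₊ with hT
  have hTk : k ≤ T := by
    have h1 : (k : ℝ) * (1 + Real.log ((r : ℝ) / (k : ℝ))) ≤ T := Nat.le_ceil _
    have hk0 : (0 : ℝ) < k := by positivity
    have h2 : 0 ≤ Real.log ((r : ℝ) / (k : ℝ)) := by
      apply Real.log_nonneg
      rw [one_le_div hk0]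
      exact_mod_cast hkr
    have : (k : ℝ) ≤ T := by nlinarith
    exact_mod_cast this
  have hex : ∃ n, ∃ (V : Type) (_ : Fintype V) (R : V → V → Prop),
      Fintype.card V = n ∧ GirthGe R k ∧ ¬ Good R r := by
    obtain ⟨V, i, R, hc, hg, _, h2⟩ := exists_tower k hk T
    refine ⟨k ^ T, V, i, R, hc, hg, fun hgood => ?_⟩
    have hs : k - 1 + (T - (k - 1)) = T := by omega
    have := h2 _ hs.symm r hgood
    have := numeric r k hk hkr _ hs
    omega
  have hle : Nat.find hex ≤ k ^ T := by
    apply Nat.find_min'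
    obtain ⟨V, i, R, hc, hg, _, h2⟩ := exists_tower k hk T
    refine ⟨V, i, R, hc, hg, fun hgood => ?_⟩
    have hs : k - 1 + (T - (k - 1)) = T := by omega
    have := h2 _ hs.symm r hgood
    have := numeric r k hk hkr _ hs
    omega
  obtain ⟨V, iV, R, hc, hg, hng⟩ := Nat.find_spec hex
  have wf : WellFounded (fun a b : V → V → Prop => a < b) := wellFounded_lt
  obtain ⟨S, ⟨hSR, hSng⟩, hmin⟩ := wf.has_min {S | S ≤ R ∧ ¬ Good S r} ⟨R, le_rfl, hng⟩
  have hSg : GirthGe S k := fun n a hn hw => hg n a hn (hw.mono hSR)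
  have hirr : ∀ a, ¬ S a a := hSg.irrefl (by omega)
  have hlow : ∀ (l : ℕ) (c : ZMod l → V), IsDicycle S l c → k ≤ l :=
    fun l c hlc => hSg l _ (by have := hlc.1; omega) hlc.wk
  refine ⟨V, iV, S, hirr, hc ▸ hle, fun h => hSng ((good_iff hirr).2 h), ?_, ?_, hlow⟩
  · intro u v huv
    rw [← good_iff (fun a h => hirr a h.1)]
    by_contra hcon
    refine hmin _ ⟨fun a b h => hSR a b h.1, hcon⟩ (lt_of_le_not_ge (fun a b h => h.1) ?_)
    intro h
    exact (h u v huv).2 ⟨rfl, rfl⟩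
  · by_contra hno
    have hg1 : GirthGe S (k + 1) := by
      intro n a hn hw
      have h1 := hSg n a hn hw
      by_contra h2
      have : n = k := by omega
      subst this
      obtain ⟨l, hl, c, hlc⟩ := exists_dicycle hirr hn hw
      have : l = n := le_antisymm hl (hlow l c hlc)
      subst this
      exact hno ⟨c, hlc⟩
    have hne : Nonempty V := by
      by_contra hE
      rw [not_nonempty_iff] at hE
      exact hSng ⟨fun a => hE.elim a, fun a => hE.elim a⟩
    obtain ⟨x⟩ := hne
    have hcard : Fintype.card {y // y ≠ x} < Nat.find hex := by
      rw [← hc]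
      exact Fintype.card_subtype_lt (x := x) (by simp)
    exact Nat.find_min hex hcard ⟨{y // y ≠ x}, inferInstance, Byp S x, rfl, byp_girth hg1 x,
      fun h => hSng (byp_good (by omega) hirr x h)⟩
end

section
/- For all integers r ≥ 3 and k ≥ 3, there exists a finite simple graph G whose girth is at least k and whose chromatic number is greater than r (i.e., G is not r-colorable). -/
open Finset in
lemma hg_count {α V : Type} [Fintype α] [DecidableEq α] [Fintype V] [DecidableEq V]
    (S : Finset (α → V)) (T : Finset α) (A : α → Finset V) (b : ℕ)
    (hA : ∀ a ∈ T, (A a).card ≤ b) (hS : ∀ F ∈ S, ∀ a ∈ T, F a ∈ A a) :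
    S.card * Fintype.card V ^ T.card ≤ b ^ T.card * Fintype.card (α → V) := by
  have h1 : S ⊆ Fintype.piFinset (fun a => if a ∈ T then A a else univ) := by
    intro F hF
    rw [Fintype.mem_piFinset]
    intro a
    split_ifs with h
    · exact hS F hF a h
    · simp
  have h2 := card_le_card h1
  rw [Fintype.card_piFinset] at h2
  have h3 : ∏ a, (if a ∈ T then A a else univ).card ≤
      b ^ T.card * Fintype.card V ^ (Tᶜ).card := by
    rw [← Finset.prod_mul_prod_compl T]
    gcongr
    · apply Finset.prod_le_pow_card
      intro a ha
      simpa [ha] using hA a ha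
    · apply Finset.prod_le_pow_card
      intro a ha
      rw [mem_compl] at ha
      simp [ha, Finset.card_univ]
  calc S.card * Fintype.card V ^ T.card
      ≤ (b ^ T.card * Fintype.card V ^ (Tᶜ).card) * Fintype.card V ^ T.card :=
        Nat.mul_le_mul_right _ (h2.trans h3)
    _ = b ^ T.card * Fintype.card (α → V) := by
        rw [mul_assoc, ← pow_add, Fintype.card_fun]
        congr 2
        rw [add_comm, card_add_card_compl]

lemma hg_pow (a b K : ℕ) (h : a < b) : ∃ d, K * a ^ d ≤ b ^ d := by
  have hb : (0 : ℝ) < b := by exact_mod_cast (Nat.zero_le a).trans_lt h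
  have hK : (0 : ℝ) < 1 / (K + 1) := by positivity
  have hab : (a : ℝ) / b < 1 := by
    rw [div_lt_one hb]; exact_mod_cast h
  obtain ⟨d, hd⟩ := exists_pow_lt_of_lt_one hK hab
  refine ⟨d, ?_⟩
  rw [div_pow, div_lt_div_iff₀ (by positivity) (by positivity)] at hd
  have h2 : (K : ℝ) * a ^ d ≤ b ^ d := by
    have : (0 : ℝ) ≤ a ^ d := by positivity
    nlinarith
  exact_mod_cast h2

def hgGraph {V : Type} {d : ℕ} (F : Fin d × V → V) : SimpleGraph V :=
  SimpleGraph.fromRel (fun x y => ∃ c, F (c, x) = y)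

lemma hgGraph_adj {V : Type} {d : ℕ} {F : Fin d × V → V} {x y : V} (h : (hgGraph F).Adj x y) :
    x ≠ y ∧ ((∃ c, F (c, x) = y) ∨ ∃ c, F (c, y) = x) := by
  rw [hgGraph, SimpleGraph.fromRel_adj] at h
  exact h

def hgSrc {V : Type} {d l : ℕ} (code : Fin (l + 1) → V × Fin d × Bool) (i : Fin (l + 1)) : V :=
  if (code i).2.2 then (code i).1 else (code (i + 1)).1

def hgTgt {V : Type} {d l : ℕ} (code : Fin (l + 1) → V × Fin d × Bool) (i : Fin (l + 1)) : V :=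
  if (code i).2.2 then (code (i + 1)).1 else (code i).1

def hgMatch {V : Type} {d l : ℕ} (code : Fin (l + 1) → V × Fin d × Bool)
    (F : Fin d × V → V) : Prop :=
  Function.Injective (fun i => ((code i).2.1, hgSrc code i)) ∧
    ∀ i, F ((code i).2.1, hgSrc code i) = hgTgt code i

def hgBad {V : Type} {d : ℕ} (k : ℕ) (F : Fin d × V → V) (v : V) : Prop :=
  ∃ w : (hgGraph F).Walk v v, w.IsCycle ∧ w.length < k

lemma hg_bad_code {V : Type} {d k : ℕ} (F : Fin d × V → V) (v : V) (h : hgBad k F v) :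
    ∃ l < k, ∃ code : Fin (l + 1) → V × Fin d × Bool, hgMatch code F ∧ (code 0).1 = v := by
  obtain ⟨w, hw, hk⟩ := h
  have h3 := hw.three_le_length
  obtain ⟨l, hl⟩ : ∃ l, w.length = l + 1 := ⟨w.length - 1, by omega⟩
  refine ⟨l, by omega, ?_⟩
  have hnext : ∀ i : Fin (l + 1), w.getVert ((i + 1 : Fin (l + 1)) : ℕ) = w.getVert (i + 1) := by
    intro i
    rw [Fin.val_add_one]
    split_ifs with h
    · subst h
      simp [← hl]
    · rfl
  have hadj : ∀ i : Fin (l + 1), (hgGraph F).Adj (w.getVert i) (w.getVert (i + 1)) :=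
    fun i => w.adj_getVert_succ (by have := i.2; omega)
  have hinj : ∀ i j : Fin (l + 1), s(w.getVert i, w.getVert (i + 1)) =
      s(w.getVert j, w.getVert (j + 1)) → i = j := by
    have hn := List.nodup_iff_injective_getElem.mp hw.edges_nodup
    have he : ∀ i (hi : i < w.edges.length), w.edges[i] = s(w.getVert i, w.getVert (i + 1)) := by
      intro i hi
      rw [SimpleGraph.Walk.getElem_edges_eq_edge_getElem_darts]
      have h1 := SimpleGraph.Walk.fst_darts_getElem (p := w) (i := i) (by simpa using hi)
      have h2 := SimpleGraph.Walk.snd_darts_getElem (p := w) (i := i) (by simpa using hi)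
      rw [SimpleGraph.Walk.getVert_eq_support_getElem _ (by simp at hi; omega),
        SimpleGraph.Walk.getVert_eq_support_getElem _ (by simp at hi; omega)]
      simp only [SimpleGraph.Dart.edge, Sym2.mk]
      grind
    intro i j hij
    have hi : (i : ℕ) < w.edges.length := by simp; omega
    have hj : (j : ℕ) < w.edges.length := by simp; omega
    have := @hn ⟨i, hi⟩ ⟨j, hj⟩ (by simpa [he] using hij)
    simpa [Fin.ext_iff] using this
  have hch : ∀ i : Fin (l + 1), ∃ p : Fin d × Bool,
      F (p.1, if p.2 then w.getVert i else w.getVert (i + 1)) =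
        if p.2 then w.getVert (i + 1) else w.getVert i := by
    intro i
    have := hadj i
    rcases (hgGraph_adj this).2 with ⟨c, hc⟩ | ⟨c, hc⟩
    · exact ⟨(c, true), by simpa using hc⟩
    · exact ⟨(c, false), by simpa using hc⟩
  choose p hp using hch
  refine ⟨fun i => (w.getVert i, p i), ⟨?_, ?_⟩, by simp⟩
  · intro i j hij
    simp only [hgSrc, hnext] at hij
    have hF := congrArg F hij
    rw [hp, hp] at hF
    have h2 := (Prod.ext_iff.mp hij).2
    simp only at h2
    apply hinj
    cases hpi : (p i).2 <;> cases hpj : (p j).2 <;> simp [hpi, hpj] at hF h2 <;> simp [hF, h2]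
  · intro i
    simp only [hgSrc, hgTgt, hnext]
    exact hp i

open Finset Classical in
lemma hg_match_count {V : Type} [Fintype V] {d l : ℕ}
    (code : Fin (l + 1) → V × Fin d × Bool) :
    #{F : Fin d × V → V | hgMatch code F} * Fintype.card V ^ (l + 1) ≤
      Fintype.card (Fin d × V → V) := by
  by_cases h : ∃ F0 : Fin d × V → V, hgMatch code F0
  · obtain ⟨F0, h0⟩ := h
    have := hg_count {F : Fin d × V → V | hgMatch code F}
      (univ.image (fun i => ((code i).2.1, hgSrc code i))) (fun a => {F0 a}) 1 (by simp) (by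
        intro F hF a ha
        simp only [mem_filter, mem_univ, true_and] at hF
        simp only [mem_image, mem_univ, true_and] at ha
        obtain ⟨i, rfl⟩ := ha
        rw [mem_singleton, hF.2, h0.2])
    rw [card_image_of_injective _ h0.1] at this
    simpa using this
  · have : ({F : Fin d × V → V | hgMatch code F} : Finset _) = ∅ := by
      ext F
      simp
      exact fun hF => h ⟨F, hF⟩
    rw [this]; simp

open Finset Classical in
lemma hg_bad_count {V : Type} [Fintype V] [Nonempty V] (d k : ℕ) :
    ∑ F : Fin d × V → V, #{v | hgBad k F v} ≤
      (∑ l ∈ range k, (d * 2) ^ (l + 1)) * Fintype.card (Fin d × V → V) := by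
  have hN : 0 < Fintype.card V := Fintype.card_pos
  calc ∑ F : Fin d × V → V, #{v | hgBad k F v}
      ≤ ∑ F : Fin d × V → V, ∑ l ∈ range k, ∑ code : Fin (l + 1) → V × Fin d × Bool,
          (if hgMatch code F then 1 else 0) := by
        apply sum_le_sum
        intro F _
        have : ({v | hgBad k F v} : Finset V) ⊆ (range k).biUnion fun l =>
            ({code : Fin (l + 1) → V × Fin d × Bool | hgMatch code F} : Finset _).image
              (fun code => (code 0).1) := by
          intro v hv
          simp only [mem_filter, mem_univ, true_and] at hv
          obtain ⟨l, hl, code, hc, hv⟩ := hg_bad_code F v hv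
          simp only [mem_biUnion, mem_range, mem_image, mem_filter, mem_univ, true_and]
          exact ⟨l, hl, code, hc, hv⟩
        refine (card_le_card this).trans (card_biUnion_le.trans ?_)
        apply sum_le_sum
        intro l _
        refine card_image_le.trans ?_
        rw [card_filter]
    _ = ∑ l ∈ range k, ∑ code : Fin (l + 1) → V × Fin d × Bool,
          #{F : Fin d × V → V | hgMatch code F} := by
        rw [sum_comm]
        apply sum_congr rfl
        intro l _
        rw [sum_comm]
        simp only [card_filter]
    _ ≤ _ := by
        rw [sum_mul]
        apply sum_le_sum
        intro l _
        apply Nat.le_of_mul_le_mul_right _ (pow_pos hN (l + 1))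
        rw [sum_mul]
        refine (sum_le_sum fun code _ => hg_match_count code).trans ?_
        rw [sum_const, card_univ, Fintype.card_fun (α := Fin (l+1))]
        simp only [Fintype.card_prod, Fintype.card_fin, Fintype.card_bool, smul_eq_mul]
        rw [mul_pow]
        apply le_of_eq
        ring

open Finset Classical in
lemma hg_indep_count (d r t : ℕ) (hr : 0 < r) (ht : 0 < t) (S : Finset (Fin (4 * r * t)))
    (hS : #S = 2 * t) :
    #{F : Fin d × Fin (4 * r * t) → Fin (4 * r * t) | ∀ x ∈ S, ∀ y ∈ S, ¬ (hgGraph F).Adj x y}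
      * (4 * r) ^ (2 * d * t) ≤ (4 * r - 1) ^ (2 * d * t) *
        Fintype.card (Fin d × Fin (4 * r * t) → Fin (4 * r * t)) := by
  have := hg_count
    {F : Fin d × Fin (4 * r * t) → Fin (4 * r * t) | ∀ x ∈ S, ∀ y ∈ S, ¬ (hgGraph F).Adj x y}
    (univ ×ˢ S) (fun a => insert a.2 Sᶜ) ((4 * r - 1) * t) (by
      intro a ha
      refine (card_insert_le _ _).trans ?_
      rw [card_compl, hS, Fintype.card_fin, Nat.sub_mul]
      have : 4 * t ≤ 4 * r * t := by nlinarith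
      omega) (by
      intro F hF a ha
      simp only [mem_filter, mem_univ, true_and] at hF
      simp only [mem_product, mem_univ, true_and] at ha
      rw [mem_insert, mem_compl]
      by_contra! hcon
      refine hF a.2 ha (F a) hcon.2 ?_
      rw [hgGraph, SimpleGraph.fromRel_adj]
      exact ⟨hcon.1.symm, Or.inl ⟨a.1, rfl⟩⟩)
  rw [card_product, hS, card_univ, Fintype.card_fin, Fintype.card_fin,
    mul_pow (4 * r) t, mul_pow (4 * r - 1) t] at this
  have e : d * (2 * t) = 2 * d * t := by ring
  rw [e] at this
  apply Nat.le_of_mul_le_mul_right _ (pow_pos ht (2 * d * t))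
  calc _ = _ := by ring
    _ ≤ _ := this
    _ = _ := by ring

open Finset Classical in
lemma hg_indep_count' (d r t : ℕ) (hr : 0 < r) (ht : 0 < t)
    (hd : 2 ^ (4 * r + 1) * ((4 * r - 1) ^ 2) ^ d ≤ ((4 * r) ^ 2) ^ d) :
    2 * #{F : Fin d × Fin (4 * r * t) → Fin (4 * r * t) | ∃ S : Finset (Fin (4 * r * t)),
        #S = 2 * t ∧ ∀ x ∈ S, ∀ y ∈ S, ¬ (hgGraph F).Adj x y} ≤
        Fintype.card (Fin d × Fin (4 * r * t) → Fin (4 * r * t)) := by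
  set N := Fintype.card (Fin d × Fin (4 * r * t) → Fin (4 * r * t)) with hN
  set X := ({F : Fin d × Fin (4 * r * t) → Fin (4 * r * t) | ∃ S : Finset (Fin (4 * r * t)),
        #S = 2 * t ∧ ∀ x ∈ S, ∀ y ∈ S, ¬ (hgGraph F).Adj x y} : Finset _) with hX
  have hsub : X ⊆ ({S : Finset (Fin (4 * r * t)) | #S = 2 * t} : Finset _).biUnion fun S =>
      {F : Fin d × Fin (4 * r * t) → Fin (4 * r * t) | ∀ x ∈ S, ∀ y ∈ S, ¬ (hgGraph F).Adj x y} := by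
    intro F hF
    simp only [hX, mem_filter, mem_univ, true_and] at hF
    simp only [mem_biUnion, mem_filter, mem_univ, true_and]
    exact hF
  have h1 : #X * (4 * r) ^ (2 * d * t) ≤
      2 ^ (4 * r * t) * ((4 * r - 1) ^ (2 * d * t) * N) := by
    refine (Nat.mul_le_mul_right _ ((card_le_card hsub).trans card_biUnion_le)).trans ?_
    rw [sum_mul]
    refine (sum_le_card_nsmul _ _ ((4 * r - 1) ^ (2 * d * t) * N) ?_).trans ?_
    · intro S hS
      simp only [mem_filter, mem_univ, true_and] at hS
      exact hg_indep_count d r t hr ht S hS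
    · rw [smul_eq_mul]
      apply Nat.mul_le_mul_right
      refine (card_le_univ _).trans ?_
      simp
  have h2 : 2 * 2 ^ (4 * r * t) * (4 * r - 1) ^ (2 * d * t) ≤ (4 * r) ^ (2 * d * t) := by
    have := Nat.pow_le_pow_left hd t
    rw [mul_pow, ← pow_mul, ← pow_mul, ← pow_mul, ← pow_mul, ← pow_mul] at this
    rw [← mul_assoc 2 d t] at this
    refine le_trans ?_ this
    apply Nat.mul_le_mul_right
    rw [add_mul, pow_add, mul_comm]
    apply Nat.mul_le_mul_left
    rw [one_mul]
    exact Nat.le_self_pow ht.ne' 2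
  apply Nat.le_of_mul_le_mul_right _ (pow_pos (show 0 < 4 * r by omega) (2 * d * t))
  calc 2 * #X * (4 * r) ^ (2 * d * t) = 2 * (#X * (4 * r) ^ (2 * d * t)) := by ring
    _ ≤ 2 * (2 ^ (4 * r * t) * ((4 * r - 1) ^ (2 * d * t) * N)) := by gcongr
    _ = (2 * 2 ^ (4 * r * t) * (4 * r - 1) ^ (2 * d * t)) * N := by ring
    _ ≤ (4 * r) ^ (2 * d * t) * N := by gcongr
    _ = _ := by ring

open Finset Classical in
lemma hg_main (r k : ℕ) (hr : 0 < r) : ∃ d t, 0 < t ∧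
    ∃ F : Fin d × Fin (4 * r * t) → Fin (4 * r * t), #{v | hgBad k F v} ≤ 2 * r * t ∧
      ∀ S : Finset (Fin (4 * r * t)), #S = 2 * t →
        ∃ x ∈ S, ∃ y ∈ S, (hgGraph F).Adj x y := by
  obtain ⟨d, hd⟩ := hg_pow ((4 * r - 1) ^ 2) ((4 * r) ^ 2) (2 ^ (4 * r + 1))
    (Nat.pow_lt_pow_left (by omega) (by norm_num))
  set C := ∑ l ∈ range k, (d * 2) ^ (l + 1) with hC
  refine ⟨d, C + 1, by omega, ?_⟩
  set t := C + 1 with ht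
  have hn : 0 < 4 * r * t := by positivity
  have : Nonempty (Fin (4 * r * t)) := ⟨⟨0, hn⟩⟩
  have h1 : ∑ F : Fin d × Fin (4 * r * t) → Fin (4 * r * t), #{v | hgBad k F v} ≤
      C * Fintype.card (Fin d × Fin (4 * r * t) → Fin (4 * r * t)) := by
    convert hg_bad_count (V := Fin (4 * r * t)) d k
  have h2 := hg_indep_count' d r t hr (by omega) hd
  have hNpos : 0 < Fintype.card (Fin d × Fin (4 * r * t) → Fin (4 * r * t)) := Fintype.card_pos
  by_contra! hcon
  set N := Fintype.card (Fin d × Fin (4 * r * t) → Fin (4 * r * t)) with hN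
  set X := ({F : Fin d × Fin (4 * r * t) → Fin (4 * r * t) | ∃ S : Finset (Fin (4 * r * t)),
        #S = 2 * t ∧ ∀ x ∈ S, ∀ y ∈ S, ¬ (hgGraph F).Adj x y} : Finset _) with hX
  have h3 : #Xᶜ * (2 * r * t) ≤ C * N := by
    refine le_trans ?_ h1
    refine le_trans ?_ (sum_le_sum_of_subset (subset_univ Xᶜ))
    rw [← smul_eq_mul]
    apply card_nsmul_le_sum
    intro F hF
    by_contra! hlt
    obtain ⟨S, hS, hS'⟩ := hcon F hlt.le
    apply mem_compl.mp hF
    simp only [hX, mem_filter, mem_univ, true_and]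
    exact ⟨S, hS, hS'⟩
  have h4 : #X + #Xᶜ = N := card_add_card_compl X
  have h5 : N ≤ 2 * #Xᶜ := by omega
  have h6 : t * N ≤ C * N := by
    calc t * N ≤ t * (2 * #Xᶜ) := by gcongr
      _ ≤ r * (t * (2 * #Xᶜ)) := Nat.le_mul_of_pos_left _ hr
      _ = #Xᶜ * (2 * r * t) := by ring
      _ ≤ _ := h3
  have := Nat.le_of_mul_le_mul_right h6 hNpos
  omega

/-- For all `r ≥ 3` and `k ≥ 3` there is a finite simple graph with girth at
least `k` which is not `r`-colorable. -/
theorem exists_high_girth_high_chromatic (r k : ℕ) (hr : 3 ≤ r) (hk : 3 ≤ k) :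
    ∃ (V : Type) (_ : Fintype V) (G : SimpleGraph V),
      (k : ℕ∞) ≤ G.egirth ∧ ¬ G.Colorable r := by
  classical
  obtain ⟨d, t, ht, F, hB, hI⟩ := hg_main r k (by omega)
  refine ⟨{v // ¬ hgBad k F v}, inferInstance,
    (hgGraph F).comap (Function.Embedding.subtype _), ?_, ?_⟩
  · rw [SimpleGraph.le_egirth]
    intro a w hw
    by_contra! hlt
    have hlt' : w.length < k := by exact_mod_cast hlt
    apply a.2
    exact ⟨w.map (SimpleGraph.Embedding.comap (Function.Embedding.subtype _) (hgGraph F)).toHom,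
      hw.map (SimpleGraph.Embedding.comap (Function.Embedding.subtype _) (hgGraph F)).injective,
      (SimpleGraph.Walk.length_map _ _).trans_lt hlt'⟩
  · rintro ⟨c⟩
    have : Nonempty (Fin r) := ⟨⟨0, by omega⟩⟩
    have hcard : Fintype.card (Fin r) * (2 * t) ≤ Fintype.card {v // ¬ hgBad k F v} := by
      rw [Fintype.card_subtype_compl, Fintype.card_fin, Fintype.card_fin, Fintype.card_subtype]
      have e : 4 * r * t = 2 * r * t + 2 * r * t := by ring
      have e2 : r * (2 * t) = 2 * r * t := by ring
      omega
    obtain ⟨col, hcol⟩ := Fintype.exists_le_card_fiber_of_mul_le_card (fun v => c v) hcard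
    obtain ⟨S, hS, hS2⟩ := Finset.exists_subset_card_eq hcol
    obtain ⟨x, hx, y, hy, hxy⟩ := hI (S.map (Function.Embedding.subtype _)) (by simpa using hS2)
    rw [Finset.mem_map] at hx hy
    obtain ⟨x, hx, rfl⟩ := hx
    obtain ⟨y, hy, rfl⟩ := hy
    have hx' := hS hx
    have hy' := hS hy
    simp only [Finset.mem_filter, Finset.mem_univ, true_and] at hx' hy'
    exact c.valid (v := x) (w := y) hxy (hx'.trans hy'.symm)
end

section
/- For all integers r ≥ 3 and k ≥ 3, there exists a finite digraph G whose directed girth is at least k (every directed cycle of G has length at least k, and G contains at least one directed cycle) and which admits no acyclic r-coloring. -/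
theorem hg_aux (k : ℕ) (hk : 3 ≤ k) (r : ℕ) :
    ∃ (V : Type) (_ : Fintype V) (Adj : V → V → Prop),
      (∀ v : V, ¬ Adj v v) ∧
      (∀ (ℓ : ℕ) (c : ZMod ℓ → V), IsDicycle Adj ℓ c → k ≤ ℓ) ∧
      ¬ HasAcyclicColoring Adj r := by
  induction r with
  | zero =>
    refine ⟨Unit, inferInstance, fun _ _ => False, fun _ h => h, ?_, ?_⟩
    · rintro ℓ c ⟨_, _, h⟩
      exact (h 0).elim
    · rintro ⟨f, _⟩
      exact (f ()).elim0
  | succ r ih =>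
    obtain ⟨W, hW, A, hirr, hg, hc⟩ := ih
    haveI : NeZero k := ⟨by omega⟩
    haveI : Fact (1 < k) := ⟨by omega⟩
    refine ⟨ZMod k × W, inferInstance,
      fun p q => q.1 = p.1 + 1 ∨ (q.1 = p.1 ∧ A p.2 q.2), ?_, ?_, ?_⟩
    · rintro ⟨i, x⟩ (h | h)
      · simp at h
      · exact hirr _ h.2
    · rintro ℓ c ⟨hl, hinj, hadj⟩
      haveI : NeZero ℓ := ⟨by omega⟩
      have hsum : ∑ j : ZMod ℓ, ((c (j + 1)).1 - (c j).1) = 0 := by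
        rw [Finset.sum_sub_distrib, sub_eq_zero]
        exact Equiv.sum_comp (Equiv.addRight (1 : ZMod ℓ)) (fun j => (c j).1)
      classical
      have hstep : ∀ j : ZMod ℓ, (c (j + 1)).1 - (c j).1
          = if (c (j + 1)).1 = (c j).1 + 1 then 1 else 0 := by
        intro j
        split_ifs with h
        · rw [h]; ring
        · rcases hadj j with h' | h'
          · exact absurd h' h
          · rw [h'.1]; ring
      rw [Finset.sum_congr rfl (fun j _ => hstep j), Finset.sum_boole,
        ZMod.natCast_eq_zero_iff] at hsum
      have hle : (Finset.univ.filter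
          (fun j : ZMod ℓ => (c (j + 1)).1 = (c j).1 + 1)).card ≤ ℓ := by
        refine (Finset.card_le_univ _).trans ?_
        rw [ZMod.card]
      rcases Nat.eq_zero_or_pos (Finset.univ.filter
          (fun j : ZMod ℓ => (c (j + 1)).1 = (c j).1 + 1)).card with h0 | h0
      · rw [Finset.card_eq_zero, Finset.filter_eq_empty_iff] at h0
        have hs : ∀ j : ZMod ℓ, (c (j + 1)).1 = (c j).1 ∧ A (c j).2 (c (j + 1)).2 := by
          intro j
          exact (hadj j).resolve_left (h0 (Finset.mem_univ j))
        have hn : ∀ n : ℕ, (c (n : ZMod ℓ)).1 = (c 0).1 := by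
          intro n
          induction n with
          | zero => simp
          | succ n ihn => rw [Nat.cast_succ, (hs _).1, ihn]
        have hall : ∀ j : ZMod ℓ, (c j).1 = (c 0).1 := by
          intro j
          obtain ⟨n, rfl⟩ := ZMod.natCast_zmod_surjective j
          exact hn n
        refine hg ℓ (fun j => (c j).2) ⟨hl, ?_, fun j => (hs j).2⟩
        intro a b hab
        exact hinj (Prod.ext ((hall a).trans (hall b).symm) hab)
      · exact (Nat.le_of_dvd h0 hsum).trans hle
    · rintro ⟨f, hf⟩
      have key : ∀ i : ZMod k, ∃ x, f (i, x) = 0 := by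
        intro i
        by_contra hne
        push Not at hne
        have : ∀ x, ∃ b : Fin r, (0 : Fin (r + 1)).succAbove b = f (i, x) :=
          fun x => Fin.exists_succAbove_eq (hne x)
        choose g hgf using this
        refine hc ⟨g, ?_⟩
        rintro ℓ c ⟨hl, hinj, hadj⟩
        obtain ⟨a, b, hab⟩ := hf ℓ (fun j => (i, c j))
          ⟨hl, fun a b h => hinj (Prod.ext_iff.1 h).2, fun j => Or.inr ⟨rfl, hadj j⟩⟩
        refine ⟨a, b, fun h => hab ?_⟩
        simp only [← hgf, h]
      choose x hx using key
      obtain ⟨a, b, hab⟩ := hf k (fun j => (j, x j))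
        ⟨by omega, fun a b h => (Prod.ext_iff.1 h).1, fun j => Or.inl rfl⟩
      exact hab (by simp only [hx])

/-- For all `r ≥ 3` and `k ≥ 3` there is a finite digraph with directed girth
at least `k` (containing at least one directed cycle) which has no acyclic
`r`-coloring. -/
theorem exists_high_girth_high_dichromatic (r k : ℕ) (hr : 3 ≤ r) (hk : 3 ≤ k) :
    ∃ (V : Type) (_ : Fintype V) (Adj : V → V → Prop),
      (∀ v : V, ¬ Adj v v) ∧
      (∃ (ℓ : ℕ) (c : ZMod ℓ → V), IsDicycle Adj ℓ c) ∧
      (∀ (ℓ : ℕ) (c : ZMod ℓ → V), IsDicycle Adj ℓ c → k ≤ ℓ) ∧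
      ¬ HasAcyclicColoring Adj r := by
  obtain ⟨V, hV, Adj, h1, h2, h3⟩ := hg_aux k hk r
  refine ⟨V, hV, Adj, h1, ?_, h2, h3⟩
  by_contra hne
  exact h3 ⟨fun _ => ⟨0, by omega⟩, fun ℓ c hc => (hne ⟨ℓ, c, hc⟩).elim⟩
end

section
/- For all integers r ≥ 3 and k ≥ 3, there exists a finite set X and a family E of k-element subsets of X such that: (1) for every function f : X → {1, …, r} there is a member e ∈ E on which f is constant (i.e., the instance of r-valued not-all-equal k-satisfiability has no solution); and (2) the instance has girth at least k, meaning there is no integer ℓ with 2 ≤ ℓ < k, distinct elements y_0, …, y_{ℓ-1} of X, and distinct members e_0, …, e_{ℓ-1} of E with {y_j, y_{j+1}} ⊆ e_j for every j (indices modulo ℓ). -/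
namespace NAE

open Classical

/-- `E` is a forest on every subfamily of size at most `p`. -/
def Good (p : ℕ) {X I : Type} (E : I → Finset X) : Prop :=
  ∀ F : Finset I, 2 ≤ F.card → F.card ≤ p → ∀ e0 ∈ F, ∃ e ∈ F, e ≠ e0 ∧
    ∀ x ∈ E e, ∀ y ∈ E e, (∃ e' ∈ F, e' ≠ e ∧ x ∈ E e') → (∃ e' ∈ F, e' ≠ e ∧ y ∈ E e') → x = y

def Main (r p k : ℕ) : Prop :=
  ∃ (X I : Type) (_ : Fintype X) (_ : Fintype I) (E : I → Finset X),
    (∀ e, (E e).card = k) ∧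
    (∀ f : X → Fin r, ∃ e, ∀ x ∈ E e, ∀ y ∈ E e, f x = f y) ∧ Good p E

def Part (r p k a : ℕ) (T : Finset (Fin a)) : Prop :=
  ∃ (X I : Type) (_ : Fintype X) (_ : Fintype I) (E : I → Finset X) (π : X → Fin a),
    (∀ e, (E e).card = k) ∧
    (∀ e, ∀ x ∈ E e, ∀ y ∈ E e, π x = π y → x = y) ∧
    (∀ (f : X → Fin r) (c : Fin a → Fin r), (∀ x, π x ∉ T → f x = c (π x)) →
      ∃ e, ∀ x ∈ E e, ∀ y ∈ E e, f x = f y) ∧ Good p E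

lemma pigeon (r k : ℕ) (c : Fin (r * k + 1) → Fin r) :
    ∃ s : Finset (Fin (r * k + 1)), s.card = k ∧ ∀ x ∈ s, ∀ y ∈ s, c x = c y := by
  obtain ⟨y, -, hy⟩ := Finset.exists_lt_card_fiber_of_mul_lt_card_of_maps_to
    (s := (Finset.univ : Finset (Fin (r * k + 1)))) (t := (Finset.univ : Finset (Fin r)))
    (f := c) (n := k) (fun _ _ => Finset.mem_univ _) (by simp)
  obtain ⟨s, hs, hc⟩ := Finset.exists_subset_card_eq hy.le
  refine ⟨s, hc, fun x hx z hz => ?_⟩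
  have h1 := (Finset.mem_filter.1 (hs hx)).2
  have h2 := (Finset.mem_filter.1 (hs hz)).2
  rw [h1, h2]

lemma base (r k : ℕ) : Main r 1 k := by
  refine ⟨Fin (r * k + 1), {s : Finset (Fin (r * k + 1)) // s.card = k}, inferInstance,
    inferInstance, fun s => s.1, fun e => e.2, fun f => ?_, ?_⟩
  · obtain ⟨s, hs, h⟩ := pigeon r k f
    exact ⟨⟨s, hs⟩, h⟩
  · intro F h1 h2; omega

lemma part_zero (r p k : ℕ) : Part r p k (r * k + 1) ∅ := by
  refine ⟨{s : Finset (Fin (r * k + 1)) // s.card = k} × Fin (r * k + 1),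
    {s : Finset (Fin (r * k + 1)) // s.card = k}, inferInstance, inferInstance,
    fun s => s.1.map ⟨fun j => (s, j), fun _ _ h => (Prod.ext_iff.1 h).2⟩, fun x => x.2,
    ?_, ?_, ?_, ?_⟩
  · intro e; simp [e.2]
  · intro e x hx y hy h
    simp only [Finset.mem_map, Function.Embedding.coeFn_mk] at hx hy
    obtain ⟨_, _, rfl⟩ := hx
    obtain ⟨_, _, rfl⟩ := hy
    exact Prod.ext rfl h
  · intro f c h
    obtain ⟨s, hs, hc⟩ := pigeon r k c
    refine ⟨⟨s, hs⟩, fun x hx y hy => ?_⟩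
    rw [h x (by simp), h y (by simp)]
    simp only [Finset.mem_map, Function.Embedding.coeFn_mk] at hx hy
    obtain ⟨_, hx, rfl⟩ := hx
    obtain ⟨_, hy, rfl⟩ := hy
    exact hc _ hx _ hy
  · intro F h1 h2 e0 he0
    obtain ⟨e, he, hne⟩ := Finset.exists_mem_ne (s := F) (by omega) e0
    refine ⟨e, he, hne, ?_⟩
    rintro x hx y hy ⟨e', he', hne', hx'⟩
    simp only [Finset.mem_map, Function.Embedding.coeFn_mk] at hx hx'
    obtain ⟨_, _, rfl⟩ := hx
    obtain ⟨_, _, h⟩ := hx'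
    exact absurd (Prod.ext_iff.1 h).1 hne'

/-- Goodness of the amalgamation. -/
lemma good_step {p : ℕ} {X I Y J Z : Type} (E : I → Finset X) (H : J → Finset Y)
    (q : X → Prop) (g : J → X ↪ Z) (w : Z → Option Y)
    (hq : ∀ e, ∀ x ∈ E e, ∀ y ∈ E e, q x → q y → x = y)
    (h1 : ∀ j j' x x', g j x = g j' x' → j ≠ j' → q x)
    (h2 : ∀ j x, q x → ∃ v ∈ H j, w (g j x) = some v)
    (h3 : ∀ j x x', q x → q x' → w (g j x) = w (g j x') → x = x')
    (hE : Good (p + 1) E) (hH : Good p H) :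
    Good (p + 1) (fun e : J × I => (E e.2).map (g e.1)) := by
  intro F hF hFp ⟨j0, i0⟩ he0
  by_cases hall : ∀ e ∈ F, e.1 = j0
  · have hinj : Set.InjOn Prod.snd (F : Set (J × I)) := by
      intro a ha b hb h
      exact Prod.ext ((hall a ha).trans (hall b hb).symm) h
    have hcard := Finset.card_image_of_injOn hinj
    obtain ⟨e, he, hne, hl⟩ := hE (F.image Prod.snd) (by rw [hcard]; exact hF)
      (by rw [hcard]; exact hFp) i0 (Finset.mem_image_of_mem Prod.snd he0)
    have heF : (j0, e) ∈ F := by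
      obtain ⟨a, ha, rfl⟩ := Finset.mem_image.1 he
      have := hall a ha
      subst this; exact ha
    refine ⟨(j0, e), heF, fun h => hne (Prod.ext_iff.1 h).2, ?_⟩
    have key : ∀ x, (∃ e' ∈ F, e' ≠ (j0, e) ∧ g j0 x ∈ (E e'.2).map (g e'.1)) →
        ∃ e' ∈ F.image Prod.snd, e' ≠ e ∧ x ∈ E e' := by
      rintro x ⟨⟨j', e'⟩, he', hne', hx⟩
      have := hall _ he'
      simp only at this
      subst this
      refine ⟨e', Finset.mem_image_of_mem Prod.snd he', ?_, by simpa using hx⟩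
      rintro rfl; exact hne' rfl
    intro x hx y hy hx' hy'
    obtain ⟨x, hxe, rfl⟩ := Finset.mem_map.1 hx
    obtain ⟨y, hye, rfl⟩ := Finset.mem_map.1 hy
    rw [hl x hxe y hye (key x hx') (key y hy')]
  push Not at hall
  obtain ⟨⟨j1, i1⟩, hm1, hj1⟩ := hall
  simp only at hj1
  by_cases hs : ∃ e ∈ F, e.1 ≠ j0 ∧ ∀ e' ∈ F, e'.1 = e.1 → e' = e
  · obtain ⟨⟨j, e⟩, he, hj, hu⟩ := hs
    refine ⟨(j, e), he, fun h => hj (Prod.ext_iff.1 h).1, ?_⟩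
    have key : ∀ x, (∃ e' ∈ F, e' ≠ (j, e) ∧ g j x ∈ (E e'.2).map (g e'.1)) → q x := by
      rintro x ⟨⟨j', e'⟩, he', hne', hx⟩
      obtain ⟨x', _, hx'⟩ := Finset.mem_map.1 hx
      refine h1 j j' x x' hx'.symm ?_
      rintro rfl
      exact hne' (hu _ he' rfl)
    intro x hx y hy hx' hy'
    obtain ⟨x, hxe, rfl⟩ := Finset.mem_map.1 hx
    obtain ⟨y, hye, rfl⟩ := Finset.mem_map.1 hy
    rw [hq e x hxe y hye (key x hx') (key y hy')]
  push Not at hs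
  obtain ⟨⟨j2, i2⟩, hm2, hj2, hn2⟩ := hs _ hm1 hj1
  simp only at hj2
  subst hj2
  have hS0 : j0 ∈ F.image Prod.fst := Finset.mem_image_of_mem Prod.fst he0
  have hS1 : j2 ∈ F.image Prod.fst := Finset.mem_image_of_mem Prod.fst hm1
  have hlt : (F.image Prod.fst).card < F.card := by
    refine lt_of_le_of_ne Finset.card_image_le fun h => hn2 ?_
    exact Finset.card_image_iff.1 h hm2 hm1 rfl
  obtain ⟨j, hjS, hj0, hl⟩ := hH (F.image Prod.fst)
    (Finset.one_lt_card.2 ⟨_, hS1, _, hS0, hj1⟩) (by omega) j0 hS0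
  obtain ⟨⟨j', e1⟩, hm, hjj⟩ := Finset.mem_image.1 hjS
  simp only at hjj
  subst hjj
  obtain ⟨⟨j3, e2⟩, hm3, hj3, hn3⟩ := hs _ hm hj0
  simp only at hj3
  subst hj3
  have hmem : ∀ e, e ∈ (F.filter (fun a => a.1 = j3)).image Prod.snd ↔ (j3, e) ∈ F := by
    intro e; simp
  have hc : ((F.filter (fun a => a.1 = j3)).image Prod.snd).card ≤ p + 1 :=
    (Finset.card_image_le.trans (Finset.card_filter_le _ _)).trans hFp
  generalize (F.filter (fun a => a.1 = j3)).image Prod.snd = G at hmem hc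
  have hG2 : 2 ≤ G.card := Finset.one_lt_card.2 ⟨e2, (hmem _).2 hm3, e1, (hmem _).2 hm,
    fun h => hn3 (by rw [h])⟩
  have hex : ∀ x y, (∃ a ∈ F, a.1 ≠ j3 ∧ g j3 x ∈ (E a.2).map (g a.1)) →
      (∃ a ∈ F, a.1 ≠ j3 ∧ g j3 y ∈ (E a.2).map (g a.1)) → x = y := by
    have key : ∀ x, (∃ a ∈ F, a.1 ≠ j3 ∧ g j3 x ∈ (E a.2).map (g a.1)) →
        q x ∧ ∃ v ∈ H j3, w (g j3 x) = some v ∧ ∃ j' ∈ F.image Prod.fst, j' ≠ j3 ∧ v ∈ H j' := by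
      rintro x ⟨⟨j', e'⟩, ha, hne, hx⟩
      obtain ⟨x', _, hx'⟩ := Finset.mem_map.1 hx
      have qx := h1 _ _ _ _ hx'.symm hne.symm
      obtain ⟨v, hv, hwv⟩ := h2 _ _ qx
      obtain ⟨v', hv', hwv'⟩ := h2 _ _ (h1 _ _ _ _ hx' hne)
      rw [hx', hwv, Option.some_inj] at hwv'
      subst hwv'
      exact ⟨qx, v, hv, hwv, j', Finset.mem_image_of_mem Prod.fst ha, hne, hv'⟩
    intro x y hx hy
    obtain ⟨qx, v, hv, hwv, hx⟩ := key x hx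
    obtain ⟨qy, v', hv', hwv', hy⟩ := key y hy
    exact h3 j3 x y qx qy (by rw [hwv, hwv', hl v hv v' hv' hx hy])
  have fin : ∀ e ∈ G, (∀ x ∈ E e, ∀ y ∈ E e, (∃ e' ∈ G, e' ≠ e ∧ x ∈ E e') →
        (∃ e' ∈ G, e' ≠ e ∧ y ∈ E e') → x = y) →
      (∀ x ∈ E e, (∃ a ∈ F, a.1 ≠ j3 ∧ g j3 x ∈ (E a.2).map (g a.1)) →
        (∃ e' ∈ G, e' ≠ e ∧ x ∈ E e')) →
      ∃ e ∈ F, e ≠ (j0, i0) ∧ ∀ x ∈ (E e.2).map (g e.1), ∀ y ∈ (E e.2).map (g e.1),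
        (∃ e' ∈ F, e' ≠ e ∧ x ∈ (E e'.2).map (g e'.1)) →
        (∃ e' ∈ F, e' ≠ e ∧ y ∈ (E e'.2).map (g e'.1)) → x = y := by
    intro e he hle hsub
    refine ⟨(j3, e), (hmem e).1 he, fun h => hj0 (Prod.ext_iff.1 h).1, ?_⟩
    have key : ∀ x ∈ E e, (∃ e' ∈ F, e' ≠ (j3, e) ∧ g j3 x ∈ (E e'.2).map (g e'.1)) →
        ∃ e' ∈ G, e' ≠ e ∧ x ∈ E e' := by
      rintro x hxe ⟨⟨j', e'⟩, ha, hne, hx⟩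
      by_cases hj : j' = j3
      · subst hj
        exact ⟨e', (hmem _).2 ha, fun h => hne (by rw [h]), by simpa using hx⟩
      · exact hsub x hxe ⟨_, ha, hj, hx⟩
    intro x hx y hy hx' hy'
    obtain ⟨x, hxe, rfl⟩ := Finset.mem_map.1 hx
    obtain ⟨y, hye, rfl⟩ := Finset.mem_map.1 hy
    rw [hle x hxe y hye (key x hxe hx') (key y hye hy')]
  obtain ⟨a, ha, -, hla⟩ := hE G hG2 hc e1 ((hmem _).2 hm)
  obtain ⟨b, hb, hba, hlb⟩ := hE G hG2 hc a ha
  by_cases hA : ∀ x ∈ E a, (∃ a ∈ F, a.1 ≠ j3 ∧ g j3 x ∈ (E a.2).map (g a.1)) →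
        (∃ e' ∈ G, e' ≠ a ∧ x ∈ E e')
  · exact fin a ha hla hA
  · push Not at hA
    obtain ⟨x, hxa, hx, hno⟩ := hA
    refine fin b hb hlb fun y hyb hy => ?_
    obtain rfl := hex x y hx hy
    exact absurd hyb (hno b hb hba)

lemma part_step (r p k a : ℕ) (hM : ∀ s, Main r p s) (T : Finset (Fin a)) (i : Fin a)
    (hT : Part r (p + 1) k a T) : Part r (p + 1) k a (insert i T) := by
  obtain ⟨X, I, _, _, E, π, hk, hπ, hcol, hgood⟩ := hT
  obtain ⟨Y, J, _, _, H, hs, hcolH, hgoodH⟩ := hM (Fintype.card {x // π x = i})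
  have φ : ∀ j, {x // π x = i} ≃ {y // y ∈ H j} := fun j =>
    Fintype.equivOfCardEq (by rw [Fintype.card_coe, hs])
  let g0 : J → X → Y ⊕ (J × X) := fun j x =>
    if h : π x = i then Sum.inl (φ j ⟨x, h⟩).1 else Sum.inr (j, x)
  have g0l : ∀ j x (h : π x = i), g0 j x = Sum.inl (φ j ⟨x, h⟩).1 := fun j x h => dif_pos h
  have g0r : ∀ j x (h : π x ≠ i), g0 j x = Sum.inr (j, x) := fun j x h => dif_neg h
  have ginj : ∀ j, Function.Injective (g0 j) := by
    intro j x y hxy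
    by_cases hx : π x = i <;> by_cases hy : π y = i
    · rw [g0l j x hx, g0l j y hy] at hxy
      have := (φ j).injective (Subtype.ext (Sum.inl_injective hxy))
      exact congrArg Subtype.val this
    · rw [g0l j x hx, g0r j y hy] at hxy; simp at hxy
    · rw [g0r j x hx, g0l j y hy] at hxy; simp at hxy
    · rw [g0r j x hx, g0r j y hy] at hxy; simpa using hxy
  let π' : Y ⊕ (J × X) → Fin a := Sum.elim (fun _ => i) (fun z => π z.2)
  have hπ' : ∀ j x, π' (g0 j x) = π x := by
    intro j x
    by_cases hx : π x = i
    · rw [g0l j x hx, hx]; rfl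
    · rw [g0r j x hx]; rfl
  refine ⟨Y ⊕ (J × X), J × I, inferInstance, inferInstance,
    fun e => (E e.2).map ⟨g0 e.1, ginj e.1⟩, π', ?_, ?_, ?_, ?_⟩
  · intro e; simp [hk]
  · intro e x hx y hy h
    obtain ⟨x, hxe, rfl⟩ := Finset.mem_map.1 hx
    obtain ⟨y, hye, rfl⟩ := Finset.mem_map.1 hy
    simp only [Function.Embedding.coeFn_mk, hπ'] at h
    rw [hπ _ x hxe y hye h]
  · intro f c hf
    obtain ⟨j, hj⟩ := hcolH (fun y => f (Sum.inl y))
    obtain ⟨d, hd⟩ : ∃ d, ∀ y ∈ H j, f (Sum.inl y) = d := by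
      by_cases h : ∃ y, y ∈ H j
      · obtain ⟨y, hy⟩ := h
        exact ⟨f (Sum.inl y), fun z hz => hj z hz y hy⟩
      · push Not at h
        exact ⟨c i, fun y hy => absurd hy (h y)⟩
    obtain ⟨e, he⟩ := hcol (fun x => f (g0 j x)) (Function.update c i d) (by
      intro x hx
      by_cases h : π x = i
      · rw [h, Function.update_self, g0l j x h]
        exact hd _ (φ j ⟨x, h⟩).2
      · rw [Function.update_of_ne h, hf _ (by rw [hπ']; simp [h, hx]), hπ'])
    refine ⟨(j, e), fun x hx y hy => ?_⟩
    obtain ⟨x, hxe, rfl⟩ := Finset.mem_map.1 hx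
    obtain ⟨y, hye, rfl⟩ := Finset.mem_map.1 hy
    exact he x hxe y hye
  · refine good_step E H (fun x => π x = i) (fun j => ⟨g0 j, ginj j⟩)
      (Sum.elim some (fun _ => none)) ?_ ?_ ?_ ?_ hgood hgoodH
    · intro e x hx y hy h h'
      exact hπ e x hx y hy (h.trans h'.symm)
    · intro j j' x x' h hne
      by_contra hx
      simp only [Function.Embedding.coeFn_mk] at h
      by_cases hx' : π x' = i
      · rw [g0r j x hx, g0l j' x' hx'] at h; simp at h
      · rw [g0r j x hx, g0r j' x' hx'] at h
        simp only [Sum.inr.injEq, Prod.mk.injEq] at h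
        exact hne h.1
    · intro j x hx
      simp only [Function.Embedding.coeFn_mk, g0l j x hx]
      exact ⟨_, (φ j ⟨x, hx⟩).2, rfl⟩
    · intro j x x' hx hx' h
      simp only [Function.Embedding.coeFn_mk, g0l j x hx, g0l j x' hx', Sum.elim_inl, Option.some_inj] at h
      exact congrArg Subtype.val ((φ j).injective (Subtype.ext h))

lemma main (r p : ℕ) (hr : 0 < r) : ∀ k, Main r (p + 1) k := by
  induction p with
  | zero => exact base r
  | succ p ih =>
    intro k
    have h : ∀ T, Part r (p + 1 + 1) k (r * k + 1) T := by
      intro T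
      induction T using Finset.induction_on with
      | empty => exact part_zero _ _ _
      | insert i T _ hT => exact part_step _ _ _ _ ih T i hT
    obtain ⟨X, I, i1, i2, E, π, hk, _, hcol, hg⟩ := h Finset.univ
    refine ⟨X, I, i1, i2, E, hk, fun f => ?_, hg⟩
    exact hcol f (fun _ => ⟨0, hr⟩) (by simp)

end NAE

/-- For all `r ≥ 3` and `k ≥ 3` there is an instance of `r`-valued
not-all-equal `k`-satisfiability with girth at least `k` and no solution. -/
theorem exists_high_girth_nae_instance (r k : ℕ) (hr : 3 ≤ r) (hk : 3 ≤ k) :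
    ∃ (X : Type) (_ : Fintype X) (E : Finset (Finset X)),
      (∀ e ∈ E, e.card = k) ∧
      (∀ f : X → Fin r, ∃ e ∈ E, ∀ x ∈ e, ∀ y ∈ e, f x = f y) ∧
      ¬ ∃ (ℓ : ℕ), 2 ≤ ℓ ∧ ℓ < k ∧
        ∃ (y : ZMod ℓ → X) (e : ZMod ℓ → Finset X),
          Function.Injective y ∧ Function.Injective e ∧
          (∀ j : ZMod ℓ, e j ∈ E) ∧
          (∀ j : ZMod ℓ, y j ∈ e j ∧ y (j + 1) ∈ e j) := by
  classical
  obtain ⟨X, I, i1, i2, E, hE, hcol, hg⟩ := NAE.main r k (by omega) k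
  refine ⟨X, i1, Finset.univ.image E, ?_, ?_, ?_⟩
  · intro e he
    obtain ⟨e, -, rfl⟩ := Finset.mem_image.1 he
    exact hE e
  · intro f
    obtain ⟨e, he⟩ := hcol f
    exact ⟨E e, Finset.mem_image_of_mem _ (Finset.mem_univ _), he⟩
  · rintro ⟨ℓ, h2, hlk, y, e, hy, he, hmem, hinc⟩
    have : NeZero ℓ := ⟨by omega⟩
    have : Fact (1 < ℓ) := ⟨h2⟩
    have hex : ∀ j, ∃ a, E a = e j := fun j => by
      obtain ⟨a, -, h⟩ := Finset.mem_image.1 (hmem j)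
      exact ⟨a, h⟩
    choose u hu using hex
    have huinj : Function.Injective u := fun a b h => he (by rw [← hu, ← hu, h])
    have hcard : (Finset.univ.image u).card = ℓ := by
      rw [Finset.card_image_of_injective _ huinj, Finset.card_univ, ZMod.card]
    obtain ⟨b, hb, -, hl⟩ := hg (Finset.univ.image u) (by omega) (by omega) (u 0)
      (Finset.mem_image_of_mem _ (Finset.mem_univ _))
    obtain ⟨j, -, rfl⟩ := Finset.mem_image.1 hb
    have hne : j + 1 ≠ j := by simp
    have hne' : j - 1 ≠ j := by simp
    refine hne (hy (hl (y (j + 1)) (by rw [hu]; exact (hinc j).2) (y j)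
      (by rw [hu]; exact (hinc j).1) ⟨u (j + 1), Finset.mem_image_of_mem _ (Finset.mem_univ _),
        fun h => hne (huinj h), by rw [hu]; exact (hinc _).1⟩
      ⟨u (j - 1), Finset.mem_image_of_mem _ (Finset.mem_univ _),
        fun h => hne' (huinj h), by rw [hu]; have := (hinc (j - 1)).2; rwa [sub_add_cancel] at this⟩))
end

section
/- For all integers r ≥ 3 and k ≥ 3, there exists a finite simple graph G whose girth is at least k (and which contains at least one cycle) and which admits no acyclic r-coloring. -/
/-- An acyclic `r`-coloring of a simple graph: an assignment of `r` colors to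
the vertices such that no cycle is monochromatic (each color class induces a
forest). -/
def HasAcyclicGraphColoring {V : Type} (G : SimpleGraph V) (r : ℕ) : Prop :=
  ∃ f : V → Fin r, ∀ (v : V) (w : G.Walk v v), w.IsCycle →
    ∃ x ∈ w.support, f x ≠ f v

open scoped Classical in
/-- Ball of radius `j` around `u`. -/
noncomputable def gBall {V : Type} [Fintype V] (G : SimpleGraph V) (u : V) : ℕ → Finset V
  | 0 => {u}
  | j + 1 => (gBall G u j) ∪ (gBall G u j).biUnion (fun x => G.neighborFinset x)

open scoped Classical in
lemma gBall_card {V : Type} [Fintype V] (G : SimpleGraph V) (u : V) (D : ℕ)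
    (hD : ∀ v, G.degree v ≤ D) (j : ℕ) : (gBall G u j).card ≤ (D + 1) ^ j := by
  induction j with
  | zero => simp [gBall]
  | succ j ih =>
    have h1 : ((gBall G u j).biUnion (fun x => G.neighborFinset x)).card
        ≤ (gBall G u j).card * D :=
      Finset.card_biUnion_le_card_mul _ _ _ (fun x _ => by simpa using hD x)
    have h2 := Finset.card_union_le (gBall G u j)
      ((gBall G u j).biUnion (fun x => G.neighborFinset x))
    simp only [gBall]
    rw [pow_succ]
    nlinarith

lemma gBall_mono {V : Type} [Fintype V] (G : SimpleGraph V) (u : V) {i j : ℕ} (h : i ≤ j) :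
    gBall G u i ⊆ gBall G u j := by
  induction j, h using Nat.le_induction with
  | base => exact subset_rfl
  | succ j _ ih => exact ih.trans (by simp [gBall])

lemma mem_gBall_of_walk {V : Type} [Fintype V] (G : SimpleGraph V) {a u v : V} (w : G.Walk u v)
    (i : ℕ) (h : u ∈ gBall G a i) : v ∈ gBall G a (i + w.length) := by
  induction w generalizing i with
  | nil => simpa using h
  | @cons x y z hxy p ih =>
    have := ih (i + 1) (by
      simp only [gBall, Finset.mem_union, Finset.mem_biUnion, SimpleGraph.mem_neighborFinset]
      exact Or.inr ⟨x, h, hxy⟩)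
    rw [SimpleGraph.Walk.length_cons]
    convert this using 2
    omega

lemma walk_split {V : Type} {G : SimpleGraph V} {a b : V} (w : G.Walk a b) (d : G.Dart)
    (hd : d ∈ w.darts) : ∃ (p : G.Walk a d.fst) (q : G.Walk d.snd b),
      w.edges = p.edges ++ d.edge :: q.edges := by
  induction w with
  | nil => simp at hd
  | @cons x y z hxy p ih =>
    simp only [SimpleGraph.Walk.darts_cons, List.mem_cons] at hd
    rcases hd with rfl | hd
    · exact ⟨.nil, p, by simp [SimpleGraph.Dart.edge]⟩
    · obtain ⟨p', q', h⟩ := ih hd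
      exact ⟨.cons hxy p', q', by simp [h]⟩

lemma girth_step {V : Type} (G : SimpleGraph V) (k : ℕ) (u v : V)
    (hG : ∀ a (w : G.Walk a a), w.IsCycle → k ≤ w.length)
    (huv : ∀ w : G.Walk u v, k ≤ w.length) :
    ∀ a (w : (G ⊔ SimpleGraph.edge u v).Walk a a), w.IsCycle → k ≤ w.length := by
  intro a w hw
  have key : ∀ e ∈ (G ⊔ SimpleGraph.edge u v).edgeSet, e ≠ s(u, v) → e ∈ G.edgeSet := by
    intro e
    induction e with | _ x y
    simp only [SimpleGraph.mem_edgeSet, SimpleGraph.sup_adj, SimpleGraph.adj_edge]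
    rintro (h | ⟨h, _⟩) h2
    · exact h
    · exact absurd h.symm h2
  by_cases he : s(u, v) ∈ w.edges
  · obtain ⟨d, hd, hde⟩ := List.mem_map.1 he
    obtain ⟨p, q, hpq⟩ := walk_split w d hd
    have hnd := hw.isTrail.edges_nodup
    rw [hpq, hde] at hnd
    have hlen : w.length = p.length + 1 + q.length := by
      have := congrArg List.length hpq
      simp at this
      omega
    have hn : s(u, v) ∉ (q.append p).edges := by
      rw [SimpleGraph.Walk.edges_append]
      simp only [List.nodup_append, List.nodup_cons, List.mem_cons, List.mem_append] at hnd ⊢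
      rintro (h | h)
      · exact hnd.2.1.1 h
      · exact hnd.2.2 _ h _ (Or.inl rfl) rfl
    let W := (q.append p).transfer G (fun e h => key e ((q.append p).edges_subset_edgeSet h)
      (fun h' => hn (h' ▸ h)))
    have hW : W.length = q.length + p.length := by simp [W]
    have hde' : s(d.fst, d.snd) = s(u, v) := hde
    rcases Sym2.eq_iff.1 hde' with ⟨h1, h2⟩ | ⟨h1, h2⟩
    · have := huv (W.reverse.copy h1 h2)
      simp at this
      omega
    · have := huv (W.copy h2 h1)
      simp at this
      omega
  · have := hG a (w.transfer G (fun e h => key e (w.edges_subset_edgeSet h)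
      (fun h' => he (h' ▸ h)))) (hw.transfer _)
    simpa using this

open scoped Classical in
lemma mono_pairs {V κ : Type} [Fintype V] [Fintype κ] (f : V → κ) :
    Fintype.card V ^ 2 ≤ Fintype.card κ *
      ((Finset.univ : Finset (V × V)).filter (fun p => f p.1 = f p.2)).card := by
  have h1 : Fintype.card V = ∑ c : κ, (Finset.univ.filter (fun v => f v = c)).card := by
    rw [← Finset.card_univ]
    exact Finset.card_eq_sum_card_fiberwise (fun _ _ => Finset.mem_coe.2 (Finset.mem_univ _))
  have h2 : ((Finset.univ : Finset (V × V)).filter (fun p => f p.1 = f p.2)).card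
      = ∑ c : κ, (Finset.univ.filter (fun v => f v = c)).card ^ 2 := by
    rw [Finset.card_eq_sum_card_fiberwise (f := fun p => f p.1) (t := Finset.univ)
      (fun _ _ => Finset.mem_coe.2 (Finset.mem_univ _))]
    refine Finset.sum_congr rfl fun c _ => ?_
    rw [sq, ← Finset.card_product]
    congr 1
    ext ⟨x, y⟩
    simp
    grind
  rw [h2, h1]
  exact sq_sum_le_card_mul_sum_sq

open scoped Classical in
/-- The set of proper colorings. -/
noncomputable def propCol {V : Type} [Fintype V] (κ : Type) [Fintype κ] (G : SimpleGraph V) :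
    Finset (V → κ) := Finset.univ.filter (fun f => ∀ x y, G.Adj x y → f x ≠ f y)

open scoped Classical in
lemma main_step {V κ : Type} [Fintype V] [Fintype κ] (G : SimpleGraph V) (k D C : ℕ)
    (hV : 0 < Fintype.card V)
    (hD0 : D = 16 * Fintype.card κ * C)
    (hC : 0 < C) (hR : 0 < Fintype.card κ)
    (hn : 4 * Fintype.card κ * (D + 1) ^ k ≤ Fintype.card V)
    (hD : ∀ v, G.degree v ≤ D)
    (hE : G.edgeFinset.card ≤ C * Fintype.card V)
    (hG : ∀ a (w : G.Walk a a), w.IsCycle → k ≤ w.length)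
    (hX : (propCol κ G).Nonempty) :
    ∃ G' : SimpleGraph V, (∀ v, G'.degree v ≤ D) ∧ G'.edgeFinset.card ≤ G.edgeFinset.card + 1 ∧
      (∀ a (w : G'.Walk a a), w.IsCycle → k ≤ w.length) ∧
      2 * Fintype.card κ * (propCol κ G').card + (propCol κ G).card
        ≤ 2 * Fintype.card κ * (propCol κ G).card := by
  set n := Fintype.card V with hndef
  set R := Fintype.card κ with hRdef
  -- saturated vertices
  set S : Finset V := Finset.univ.filter (fun v => G.degree v = D) with hS
  have hScard : D * S.card ≤ 2 * (C * n) := by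
    have h1 : ∑ v ∈ S, G.degree v = S.card * D :=
      Finset.sum_const_nat (fun v hv => (Finset.mem_filter.1 hv).2)
    have h2 : ∑ v ∈ S, G.degree v ≤ ∑ v, G.degree v :=
      Finset.sum_le_sum_of_subset (Finset.subset_univ _)
    rw [G.sum_degrees_eq_twice_card_edges] at h2
    nlinarith
  have hS8 : 8 * R * S.card ≤ n := by
    rw [hD0] at hScard
    have : (2 * C) * (8 * R * S.card) ≤ (2 * C) * n := by nlinarith
    exact Nat.le_of_mul_le_mul_left this (by omega)
  set A : Finset (V × V) := Finset.univ.filter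
    (fun p => p.1 ∉ S ∧ p.2 ∉ S ∧ p.2 ∉ gBall G p.1 k) with hA
  -- forbidden pairs
  have hforb : (Finset.univ.filter (fun p : V × V => p ∉ A)).card
      ≤ 2 * (n * S.card) + n * (D + 1) ^ k := by
    have hsub : Finset.univ.filter (fun p : V × V => p ∉ A) ⊆
        (S ×ˢ Finset.univ ∪ Finset.univ ×ˢ S) ∪
        (Finset.univ : Finset V).biUnion (fun u => (gBall G u k).image (fun v => (u, v))) := by
      rintro ⟨x, y⟩ h
      simp only [hA, Finset.mem_filter, Finset.mem_univ, true_and, Finset.mem_union,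
        Finset.mem_product, and_true, Finset.mem_biUnion, Finset.mem_image, Prod.mk.injEq] at h ⊢
      by_cases h1 : x ∈ S
      · exact Or.inl (Or.inl h1)
      by_cases h2 : y ∈ S
      · exact Or.inl (Or.inr h2)
      by_cases h3 : y ∈ gBall G x k
      · exact Or.inr ⟨x, y, h3, rfl, rfl⟩
      · exact absurd ⟨h1, h2, h3⟩ h
    have hb : ((Finset.univ : Finset V).biUnion
        (fun u => (gBall G u k).image (fun v => (u, v)))).card ≤ n * (D + 1) ^ k := by
      refine Finset.card_biUnion_le_card_mul _ _ _ fun u _ => ?_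
      exact Finset.card_image_le.trans (gBall_card G u D hD k)
    refine (Finset.card_le_card hsub).trans ?_
    refine (Finset.card_union_le _ _).trans ?_
    have := Finset.card_union_le (S ×ˢ (Finset.univ : Finset V)) (Finset.univ ×ˢ S)
    rw [Finset.card_product, Finset.card_product, Finset.card_univ] at this
    nlinarith
  have hforb2 : 2 * R * (Finset.univ.filter (fun p : V × V => p ∉ A)).card ≤ n ^ 2 := by
    have a1 : 2 * R * (Finset.univ.filter (fun p : V × V => p ∉ A)).card
      ≤ 2 * R * (2 * (n * S.card) + n * (D + 1) ^ k) := Nat.mul_le_mul_left _ hforb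
    have a2 := Nat.mul_le_mul_left n hS8
    have a3 := Nat.mul_le_mul_left n hn
    nlinarith
  have hmono : ∀ f : V → κ, n ^ 2 ≤ 2 * R * (A.filter (fun p => f p.1 = f p.2)).card := by
    intro f
    have h1 := mono_pairs f
    have h2 : ((Finset.univ : Finset (V × V)).filter (fun p => f p.1 = f p.2)).card ≤
        (A.filter (fun p => f p.1 = f p.2)).card +
        (Finset.univ.filter (fun p : V × V => p ∉ A)).card := by
      refine le_trans (Finset.card_le_card ?_) (Finset.card_union_le _ _)
      intro p hp
      simp only [Finset.mem_union, Finset.mem_filter, Finset.mem_univ, true_and] at hp ⊢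
      tauto
    have h3 := Nat.mul_le_mul_left (2 * R) h2
    rw [← hndef, ← hRdef] at h1
    nlinarith
  -- averaging
  have havg : ∃ p ∈ A, (propCol κ G).card ≤
      2 * R * ((propCol κ G).filter (fun f => f p.1 = f p.2)).card := by
    by_contra! hcon
    have hsum : ∑ p ∈ A, ((propCol κ G).filter (fun f => f p.1 = f p.2)).card
        = ∑ f ∈ propCol κ G, (A.filter (fun p => f p.1 = f p.2)).card := by
      exact (Finset.sum_card_bipartiteAbove_eq_sum_card_bipartiteBelow
        (fun (f : V → κ) (p : V × V) => f p.1 = f p.2)).symm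
    have hlow : (propCol κ G).card * n ^ 2 ≤
        2 * R * ∑ p ∈ A, ((propCol κ G).filter (fun f => f p.1 = f p.2)).card := by
      rw [hsum, Finset.mul_sum, ← smul_eq_mul]
      exact Finset.card_nsmul_le_sum _ _ _ (fun f _ => hmono f)
    have hAne : A.Nonempty := by
      obtain ⟨f, hf⟩ := hX
      have := hmono f
      rw [Finset.nonempty_iff_ne_empty]
      intro h0
      rw [h0] at this
      simp at this
      omega
    have hup : 2 * R * ∑ p ∈ A, ((propCol κ G).filter (fun f => f p.1 = f p.2)).card
        < ∑ p ∈ A, (propCol κ G).card := by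
      rw [Finset.mul_sum]
      exact Finset.sum_lt_sum_of_nonempty hAne hcon
    rw [Finset.sum_const, smul_eq_mul] at hup
    have hAc : A.card ≤ n ^ 2 := by
      have := Finset.card_le_univ A
      rw [Fintype.card_prod] at this
      rw [sq]; exact this
    nlinarith [Nat.mul_le_mul_left (propCol κ G).card hAc]
  obtain ⟨⟨u, v⟩, hp, hcard⟩ := havg
  simp only [hA, hS, Finset.mem_filter, Finset.mem_univ, true_and] at hp
  obtain ⟨hu, hv, hball⟩ := hp
  simp only at hcard
  have hne : u ≠ v := by
    rintro rfl
    exact hball (gBall_mono G u (Nat.zero_le k) (by simp [gBall]))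
  have hadj : ∀ x y, (G ⊔ SimpleGraph.edge u v).Adj x y →
      G.Adj x y ∨ (x = u ∧ y = v) ∨ (x = v ∧ y = u) := by
    intro x y h
    rw [SimpleGraph.sup_adj, SimpleGraph.edge_adj] at h
    tauto
  have hgirth := girth_step G k u v hG (by
    intro w
    by_contra! hlt
    refine hball (gBall_mono G u hlt.le ?_)
    have := mem_gBall_of_walk G w 0 (by simp [gBall] : u ∈ gBall G u 0)
    simpa using this)
  have hle : ∀ x y, G.Adj x y → (G ⊔ SimpleGraph.edge u v).Adj x y := fun x y h => by simp [h]
  have huvadj : (G ⊔ SimpleGraph.edge u v).Adj u v := by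
    rw [SimpleGraph.sup_adj, SimpleGraph.edge_adj]
    tauto
  generalize G ⊔ SimpleGraph.edge u v = G' at hadj hgirth hle huvadj
  refine ⟨G', ?_, ?_, hgirth, ?_⟩
  · intro x
    by_cases hxu : x = u
    · subst hxu
      have : G'.neighborFinset x ⊆ insert v (G.neighborFinset x) := by
        intro y hy
        rw [SimpleGraph.mem_neighborFinset] at hy
        rw [Finset.mem_insert, SimpleGraph.mem_neighborFinset]
        have := hadj _ _ hy
        tauto
      have h1 := (Finset.card_le_card this).trans (Finset.card_insert_le _ _)
      rw [SimpleGraph.card_neighborFinset_eq_degree, SimpleGraph.card_neighborFinset_eq_degree] at h1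
      have := hD x
      omega
    by_cases hxv : x = v
    · subst hxv
      have : G'.neighborFinset x ⊆ insert u (G.neighborFinset x) := by
        intro y hy
        rw [SimpleGraph.mem_neighborFinset] at hy
        rw [Finset.mem_insert, SimpleGraph.mem_neighborFinset]
        have := hadj _ _ hy
        tauto
      have h1 := (Finset.card_le_card this).trans (Finset.card_insert_le _ _)
      rw [SimpleGraph.card_neighborFinset_eq_degree, SimpleGraph.card_neighborFinset_eq_degree] at h1
      have := hD x
      omega
    · have : G'.neighborFinset x ⊆ G.neighborFinset x := by
        intro y hy
        rw [SimpleGraph.mem_neighborFinset] at hy ⊢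
        have := hadj _ _ hy
        tauto
      have h1 := Finset.card_le_card this
      rw [SimpleGraph.card_neighborFinset_eq_degree, SimpleGraph.card_neighborFinset_eq_degree] at h1
      exact h1.trans (hD x)
  · refine le_trans (Finset.card_le_card ?_) (Finset.card_insert_le s(u, v) _)
    intro e
    induction e with | _ x y
    rw [SimpleGraph.mem_edgeFinset, Finset.mem_insert, SimpleGraph.mem_edgeFinset,
      SimpleGraph.mem_edgeSet, SimpleGraph.mem_edgeSet, Sym2.eq_iff]
    intro h
    have := hadj _ _ h
    tauto
  · have hsub : propCol κ G' ⊆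
        (propCol κ G).filter (fun f => ¬ f u = f v) := by
      intro f hf
      simp only [propCol, Finset.mem_filter, Finset.mem_univ, true_and] at hf ⊢
      refine ⟨fun x y h => hf x y (hle x y h), hf u v huvadj⟩
    have h1 := Finset.card_le_card hsub
    have h2 := Finset.card_filter_add_card_filter_not (s := propCol κ G) (fun f => f u = f v)
    have h3 := Nat.mul_le_mul_left (2 * R) h1
    rw [← h2] at hcard ⊢
    nlinarith

open scoped Classical in
lemma exists_girth_no_col (κ : Type) [Fintype κ] (hR : 0 < Fintype.card κ) (k : ℕ) :
    ∃ (V : Type) (_ : Fintype V) (G : SimpleGraph V),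
      (∀ a (w : G.Walk a a), w.IsCycle → k ≤ w.length) ∧ propCol κ G = ∅ := by
  set R := Fintype.card κ with hRdef
  have hRr : (0 : ℝ) < R := by exact_mod_cast hR
  set q : ℝ := 1 - 1 / (2 * R) with hq
  have hR1 : (1 : ℝ) ≤ R := by exact_mod_cast hR
  have hq1 : q < 1 := by
    have : (0 : ℝ) < 1 / (2 * R) := by positivity
    linarith
  have hq0 : 0 ≤ q := by
    have : (1 : ℝ) / (2 * R) ≤ 1 := by
      rw [div_le_one (by positivity)]; linarith
    linarith
  obtain ⟨C₀, hC₀⟩ := exists_pow_lt_of_lt_one (show (0 : ℝ) < 1 / R by positivity) hq1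
  set C := C₀ + 1 with hCdef
  have hC : R * q ^ C < 1 := by
    have : q ^ C ≤ q ^ C₀ := pow_le_pow_of_le_one hq0 hq1.le (by omega)
    have h2 : q ^ C < 1 / R := this.trans_lt hC₀
    rw [lt_div_iff₀ hRr] at h2
    linarith
  set D := 16 * R * C with hDdef
  set n := 4 * R * (D + 1) ^ k with hn
  have hnpos : 0 < n := by positivity
  have main : ∀ m ≤ C * n, ∃ G : SimpleGraph (Fin n), (∀ v, G.degree v ≤ D) ∧
      G.edgeFinset.card ≤ m ∧ (∀ a (w : G.Walk a a), w.IsCycle → k ≤ w.length) ∧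
      ((propCol κ G).card : ℝ) ≤ q ^ m * R ^ n := by
    intro m
    induction m with
    | zero =>
      intro _
      refine ⟨⊥, by simp, by simp, ?_, ?_⟩
      · intro a w hw
        exact absurd hw (SimpleGraph.isAcyclic_bot w)
      · have := Finset.card_le_univ (propCol κ (⊥ : SimpleGraph (Fin n)))
        rw [Fintype.card_fun, Fintype.card_fin] at this
        rw [pow_zero, one_mul]
        exact_mod_cast this
    | succ m ih =>
      intro hm
      obtain ⟨G, h1, h2, h3, h4⟩ := ih (by omega)
      rcases (propCol κ G).eq_empty_or_nonempty with h0 | hX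
      · refine ⟨G, h1, by omega, h3, ?_⟩
        rw [h0]
        simp only [Finset.card_empty, Nat.cast_zero]
        positivity
      · obtain ⟨G', g1, g2, g3, g4⟩ := main_step (κ := κ) G k D C (by simpa using hnpos) hDdef
          (by omega) hR (by simp [← hRdef, hn]) h1 (by simp only [Fintype.card_fin]; omega) h3 hX
        refine ⟨G', g1, by omega, g3, ?_⟩
        rw [← hRdef] at g4
        have g5 : 2 * (R : ℝ) * (propCol κ G').card + (propCol κ G).card
          ≤ 2 * R * (propCol κ G).card := by exact_mod_cast g4
        have g6 : ((propCol κ G').card : ℝ) ≤ q * (propCol κ G).card := by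
          rw [hq]
          have : (1 - 1 / (2 * (R : ℝ))) * (propCol κ G).card =
            (2 * R * (propCol κ G).card - (propCol κ G).card) / (2 * R) := by
            field_simp
          rw [this, le_div_iff₀ (by positivity)]
          linarith
        calc ((propCol κ G').card : ℝ) ≤ q * (propCol κ G).card := g6
          _ ≤ q * (q ^ m * R ^ n) := by gcongr
          _ = q ^ (m + 1) * R ^ n := by ring
  obtain ⟨G, _, _, h3, h4⟩ := main (C * n) le_rfl
  refine ⟨Fin n, inferInstance, G, h3, ?_⟩
  rw [← Finset.card_eq_zero]
  have : q ^ (C * n) * (R : ℝ) ^ n < 1 := by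
    rw [pow_mul, ← mul_pow]
    apply pow_lt_one₀ (by positivity) (by linarith) (by omega)
  have h5 := h4.trans_lt this
  have : (propCol κ G).card < 1 := by exact_mod_cast h5
  omega

lemma col_of_acyclic {V : Type} (G : SimpleGraph V) (r : ℕ) (h : HasAcyclicGraphColoring G r) :
    ∃ g : V → Fin r × Fin 2, ∀ x y, G.Adj x y → g x ≠ g y := by
  obtain ⟨f, hf⟩ := h
  let H : SimpleGraph V :=
    { Adj := fun x y => G.Adj x y ∧ f x = f y
      symm := ⟨fun x y h => ⟨h.1.symm, h.2.symm⟩⟩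
      loopless := ⟨fun x h => G.loopless.irrefl x h.1⟩ }
  have hle : H ≤ G := fun x y h => h.1
  have hconst : ∀ {a b : V} (w : H.Walk a b), ∀ x ∈ w.support, f x = f a := by
    intro a b w
    induction w with
    | nil => simp
    | @cons x y z hxy p ih =>
      intro t ht
      rw [SimpleGraph.Walk.support_cons, List.mem_cons] at ht
      rcases ht with rfl | ht
      · rfl
      · exact (ih t ht).trans hxy.2.symm
  have hH : H.IsAcyclic := by
    intro v w hw
    obtain ⟨x, hx, hne⟩ := hf v (w.mapLe hle) (hw.mapLe hle)
    rw [SimpleGraph.Walk.support_mapLe_eq_support] at hx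
    exact hne (hconst w x hx)
  obtain ⟨c⟩ := hH.colorable_two
  refine ⟨fun v => (f v, c v), fun x y hxy heq => ?_⟩
  rw [Prod.mk.injEq] at heq
  exact c.valid (show H.Adj x y from ⟨hxy, heq.1⟩) heq.2

/-- For all `r ≥ 3` and `k ≥ 3` there is a finite simple graph with girth at
least `k` (containing at least one cycle) which has no acyclic `r`-coloring. -/
theorem exists_high_girth_high_arboricity (r k : ℕ) (hr : 3 ≤ r) (hk : 3 ≤ k) :
    ∃ (V : Type) (_ : Fintype V) (G : SimpleGraph V),
      (k : ℕ∞) ≤ G.egirth ∧ G.egirth ≠ ⊤ ∧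
      ¬ HasAcyclicGraphColoring G r := by
  obtain ⟨V, hV, G, h1, h2⟩ := exists_girth_no_col (Fin r × Fin 2) (by simp; omega) k
  have h3 : ¬ HasAcyclicGraphColoring G r := by
    intro h
    obtain ⟨g, hg⟩ := col_of_acyclic G r h
    have : g ∈ propCol (Fin r × Fin 2) G := by simpa [propCol] using hg
    rw [h2] at this
    simp at this
  refine ⟨V, hV, G, ?_, ?_, h3⟩
  · rw [SimpleGraph.le_egirth]
    intro a w hw
    exact_mod_cast h1 a w hw
  · rw [Ne, SimpleGraph.egirth_eq_top]
    intro hac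
    exact h3 ⟨fun _ => ⟨0, by omega⟩, fun v w hw => absurd hw (hac w)⟩
end

section
/- Every tournament T on n ≥ 1 vertices contains a transitive subtournament on ⌈log₂(n+1)⌉ vertices; that is, there is a set S of vertices with |S| = ⌈log₂(n+1)⌉ such that the tournament relation restricted to S is transitive. -/
theorem trans_aux (V : Type) (T : V → V → Prop) (hirr : ∀ v : V, ¬ T v v)
    (htot : ∀ u v : V, u ≠ v → (T u v ↔ ¬ T v u)) (k : ℕ) :
    ∀ A : Finset V, 2 ^ k ≤ A.card → ∃ S : Finset V, S ⊆ A ∧ S.card = k + 1 ∧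
      ∀ a ∈ S, ∀ b ∈ S, ∀ c ∈ S, T a b → T b c → T a c := by
  classical
  induction k with
  | zero =>
    intro A hA
    obtain ⟨v, hv⟩ := Finset.card_pos.mp (by simpa using hA : 0 < A.card)
    refine ⟨{v}, by simpa using hv, by simp, ?_⟩
    intro a ha b hb c hc h1 h2
    simp only [Finset.mem_singleton] at ha hb hc
    subst ha hb hc
    exact h1
  | succ k ih =>
    intro A hA
    obtain ⟨v, hv⟩ := Finset.card_pos.mp (lt_of_lt_of_le (by positivity) hA)
    have h1 := Finset.card_erase_of_mem hv
    have h2 := Finset.card_filter_add_card_filter_not (s := A.erase v) (fun w => T v w)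
    have h3 : 2 ^ (k + 1) = 2 * 2 ^ k := by ring
    have h4 : 0 < 2 ^ k := by positivity
    have key : ∃ B : Finset V, B ⊆ A.erase v ∧ 2 ^ k ≤ B.card ∧
        ((∀ w ∈ B, T v w ∧ ¬ T w v) ∨ (∀ w ∈ B, ¬ T v w ∧ T w v)) := by
      by_cases h : 2 ^ k ≤ ((A.erase v).filter (fun w => T v w)).card
      · refine ⟨_, Finset.filter_subset _ _, h, Or.inl ?_⟩
        intro w hw
        rw [Finset.mem_filter, Finset.mem_erase] at hw
        exact ⟨hw.2, (htot v w hw.1.1.symm).1 hw.2⟩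
      · refine ⟨(A.erase v).filter (fun w => ¬ T v w), Finset.filter_subset _ _, by omega,
          Or.inr ?_⟩
        intro w hw
        rw [Finset.mem_filter, Finset.mem_erase] at hw
        exact ⟨hw.2, (htot w v hw.1.1).2 hw.2⟩
    obtain ⟨B, hBA, hB, hd⟩ := key
    obtain ⟨S, hSB, hS, ht⟩ := ih B hB
    have hvS : v ∉ S := fun h => (Finset.mem_erase.1 (hBA (hSB h))).1 rfl
    refine ⟨insert v S, ?_, by rw [Finset.card_insert_of_notMem hvS, hS], ?_⟩
    · intro x hx
      rcases Finset.mem_insert.1 hx with rfl | hx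
      · exact hv
      · exact Finset.mem_of_mem_erase (hBA (hSB hx))
    · have hv0 := hirr v
      intro a ha b hb c hc
      rw [Finset.mem_insert] at ha hb hc
      rcases hd with hd | hd <;>
      · have hd' := fun w hw => hd w (hSB hw)
        clear hd htot ih
        rcases ha with rfl | ha <;> rcases hb with rfl | hb <;> rcases hc with rfl | hc <;>
          grind

/-- Every tournament on `n ≥ 1` vertices contains a transitive subtournament
on `⌈log₂ (n + 1)⌉` vertices. -/
theorem tournament_transitive_subtournament (n : ℕ) (hn : 1 ≤ n)
    (V : Type) [Fintype V] (hV : Fintype.card V = n)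
    (T : V → V → Prop) (hirr : ∀ v : V, ¬ T v v)
    (htot : ∀ u v : V, u ≠ v → (T u v ↔ ¬ T v u)) :
    ∃ S : Finset V, S.card = Nat.clog 2 (n + 1) ∧
      ∀ a ∈ S, ∀ b ∈ S, ∀ c ∈ S, T a b → T b c → T a c := by
  have hpos : 0 < Nat.clog 2 (n + 1) := Nat.clog_pos (by norm_num) (by omega)
  have hlt := Nat.pow_pred_clog_lt_self (b := 2) (by norm_num) (x := n + 1) (by omega)
  obtain ⟨S, -, hS, ht⟩ := trans_aux V T hirr htot (Nat.clog 2 (n + 1)).pred Finset.univ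
    (by rw [Finset.card_univ, hV]; exact Nat.lt_succ_iff.1 hlt)
  exact ⟨S, by rw [hS]; exact Nat.succ_pred_eq_of_pos hpos, ht⟩
end

section
/- For every real ε with 0 < ε < 1 and every integer n ≥ 2, every tournament T on n vertices admits an acyclic coloring with at most n/((1−ε)·log₂ n) + n^{1−ε} colors; that is, the vertex set of T can be partitioned into at most that many parts, each of which induces a transitive (acyclic) subtournament. -/
theorem tac_extract {V : Type} (T : V → V → Prop) (hirr : ∀ v : V, ¬ T v v)
    (htot : ∀ u v : V, u ≠ v → (T u v ↔ ¬ T v u)) (k : ℕ) :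
    ∀ S : Finset V, 2 ^ k ≤ S.card → ∃ A ⊆ S, k + 1 ≤ A.card ∧
      ∀ a ∈ A, ∀ b ∈ A, ∀ c ∈ A, T a b → T b c → T a c := by
  classical
  have hasym : ∀ u v, T u v → T v u → False := by
    intro u v h1 h2
    by_cases h : u = v
    · subst h; exact hirr _ h1
    · exact (htot u v h).1 h1 h2
  induction k with
  | zero =>
    intro S hS
    obtain ⟨v, hv⟩ := Finset.card_pos.1 (show 0 < S.card by simpa using hS)
    refine ⟨{v}, by simpa using hv, by simp, ?_⟩
    intro a ha b hb c hc h1 h2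
    simp only [Finset.mem_singleton] at ha hb hc
    subst ha; subst hb; exact absurd h1 (hirr _)
  | succ k ih =>
    intro S hS
    have hpos : 0 < S.card := lt_of_lt_of_le (by positivity) hS
    obtain ⟨v, hv⟩ := Finset.card_pos.1 hpos
    have h1 := Finset.card_erase_of_mem hv
    have h2 := Finset.card_filter_add_card_filter_not (s := S.erase v) (fun u => T v u)
    have h3 : 2 ^ k ≤ ((S.erase v).filter (fun u => T v u)).card ∨
        2 ^ k ≤ ((S.erase v).filter (fun u => ¬ T v u)).card := by
      rw [pow_succ] at hS; omega
    rcases h3 with h3 | h3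
    · obtain ⟨A, hA, hc, ht⟩ := ih _ h3
      have hA' : ∀ u ∈ A, u ≠ v ∧ u ∈ S ∧ T v u := by
        intro u hu
        have := hA hu
        simp only [Finset.mem_filter, Finset.mem_erase] at this
        tauto
      have hvA : v ∉ A := fun h => (hA' v h).1 rfl
      refine ⟨insert v A, ?_, by rw [Finset.card_insert_of_notMem hvA]; omega, ?_⟩
      · intro u hu
        rcases Finset.mem_insert.1 hu with rfl | hu
        · exact hv
        · exact (hA' u hu).2.1
      · intro a ha b hb c hc
        simp only [Finset.mem_insert] at ha hb hc
        grind
    · obtain ⟨A, hA, hc, ht⟩ := ih _ h3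
      have hA' : ∀ u ∈ A, u ≠ v ∧ u ∈ S ∧ T u v := by
        intro u hu
        have := hA hu
        simp only [Finset.mem_filter, Finset.mem_erase] at this
        exact ⟨this.1.1, this.1.2, (htot u v this.1.1).2 this.2⟩
      have hvA : v ∉ A := fun h => (hA' v h).1 rfl
      refine ⟨insert v A, ?_, by rw [Finset.card_insert_of_notMem hvA]; omega, ?_⟩
      · intro u hu
        rcases Finset.mem_insert.1 hu with rfl | hu
        · exact hv
        · exact (hA' u hu).2.1
      · intro a ha b hb c hc
        simp only [Finset.mem_insert] at ha hb hc
        grind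

theorem tac_greedy {V : Type} (T : V → V → Prop) (hirr : ∀ v : V, ¬ T v v)
    (htot : ∀ u v : V, u ≠ v → (T u v ↔ ¬ T v u)) (L M : ℝ) (hL : 0 < L) (hM : 0 < M)
    (hLM : L = Real.logb 2 M) (N : ℕ) :
    ∀ S : Finset V, S.card = N → ∃ (m : ℕ) (f : V → ℕ), (m : ℝ) ≤ N / L + M ∧
      (∀ v ∈ S, f v < m) ∧
      ∀ a ∈ S, ∀ b ∈ S, ∀ c ∈ S, f a = f b → f b = f c → T a b → T b c → T a c := by
  classical
  induction N using Nat.strong_induction_on with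
  | _ N ih =>
  intro S hS
  by_cases hN : (N : ℝ) ≤ M
  · have hp : (0:ℝ) ≤ N / L := by positivity
    refine ⟨N, fun v => if h : v ∈ S then (S.equivFin ⟨v, h⟩).val else 0, by linarith, ?_, ?_⟩
    · intro v hv
      simp only [hv, dif_pos]
      rw [← hS]; exact (S.equivFin ⟨v, hv⟩).2
    · intro a ha b hb c hc h1 h2 h3
      simp only [ha, hb, dif_pos] at h1
      have := S.equivFin.injective (Fin.ext h1)
      simp only [Subtype.mk.injEq] at this
      subst this; exact absurd h3 (hirr _)
  · push Not at hN
    have hN0 : N ≠ 0 := by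
      rintro rfl
      simp at hN; linarith
    obtain ⟨A, hA, hc, ht⟩ := tac_extract T hirr htot (Nat.log 2 N) S
      (by rw [hS]; exact Nat.pow_log_le_self 2 hN0)
    have hlog : L ≤ A.card := by
      have h1 : N < 2 ^ (Nat.log 2 N + 1) := Nat.lt_pow_succ_log_self (by norm_num) N
      have h2 : N < 2 ^ A.card := lt_of_lt_of_le h1 (Nat.pow_le_pow_right (by norm_num) hc)
      have h3 : (N:ℝ) < 2 ^ A.card := by exact_mod_cast h2
      rw [hLM, Real.logb_le_iff_le_rpow (by norm_num) hM, Real.rpow_natCast]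
      linarith
    have hcard := Finset.card_sdiff_add_card_eq_card hA
    obtain ⟨m, f, hm, hf, hft⟩ := ih (S \ A).card (by omega) (S \ A) rfl
    refine ⟨m + 1, fun v => if v ∈ A then m else f v, ?_, ?_, ?_⟩
    · have e : (N:ℝ) = (S \ A).card + A.card := by rw [← hS]; exact_mod_cast hcard.symm
      have h1 : 1 ≤ (A.card : ℝ) / L := (one_le_div hL).2 hlog
      rw [e, add_div]; push_cast; linarith
    · intro v hv
      by_cases h : v ∈ A
      · simp [h]
      · have := hf v (Finset.mem_sdiff.2 ⟨hv, h⟩)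
        simp only [h, if_false]; omega
    · intro a ha b hb c hc h1 h2
      have key : ∀ u ∈ S, u ∉ A → f u < m := fun u h h' => hf u (Finset.mem_sdiff.2 ⟨h, h'⟩)
      have ka := key a ha
      have kb := key b hb
      have kc := key c hc
      by_cases hA1 : a ∈ A <;> by_cases hA2 : b ∈ A <;> by_cases hA3 : c ∈ A <;>
        simp only [hA1, hA2, hA3, if_true, if_false] at h1 h2 <;>
        first
        | exact ht a hA1 b hA2 c hA3
        | exact hft a (Finset.mem_sdiff.2 ⟨ha, hA1⟩) b (Finset.mem_sdiff.2 ⟨hb, hA2⟩) c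
            (Finset.mem_sdiff.2 ⟨hc, hA3⟩) h1 h2
        | (exfalso; grind)

/-- Every tournament on `n ≥ 2` vertices can be partitioned into at most
`n / ((1 - ε) log₂ n) + n ^ (1 - ε)` parts, each inducing a transitive
(acyclic) subtournament. -/
theorem tournament_acyclic_coloring (ε : ℝ) (hε0 : 0 < ε) (hε1 : ε < 1)
    (n : ℕ) (hn : 2 ≤ n)
    (V : Type) [Fintype V] (hV : Fintype.card V = n)
    (T : V → V → Prop) (hirr : ∀ v : V, ¬ T v v)
    (htot : ∀ u v : V, u ≠ v → (T u v ↔ ¬ T v u)) :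
    ∃ (m : ℕ) (f : V → Fin m),
      (m : ℝ) ≤ (n : ℝ) / ((1 - ε) * Real.logb 2 n) + (n : ℝ) ^ (1 - ε) ∧
      ∀ a b c : V, f a = f b → f b = f c → T a b → T b c → T a c := by
  have hn0 : (0:ℝ) < n := by positivity
  have hlog : 0 < Real.logb 2 n := Real.logb_pos (by norm_num) (by exact_mod_cast hn)
  obtain ⟨m, f, hm, hf, ht⟩ := tac_greedy T hirr htot ((1 - ε) * Real.logb 2 n)
    ((n:ℝ) ^ (1 - ε)) (mul_pos (by linarith) hlog) (by positivity)
    (Real.logb_rpow_eq_mul_logb_of_pos hn0).symm n Finset.univ (by rw [Finset.card_univ, hV])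
  refine ⟨m, fun v => ⟨f v, hf v (Finset.mem_univ v)⟩, hm, ?_⟩
  intro a b c h1 h2
  exact ht a (Finset.mem_univ a) b (Finset.mem_univ b) c (Finset.mem_univ c)
    (Fin.ext_iff.1 h1) (Fin.ext_iff.1 h2)
end

section
/- Let n ≥ 2 and let m = ⌊3·log₂ n⌋. The number of tournaments on the vertex set {1, …, n} that contain a transitive subtournament on m vertices is at most n^m · 2^{n(n−1)/2 − m(m−1)/2}. (Consequently, since the total number of tournaments on n labeled vertices is 2^{n(n−1)/2}, the proportion of tournaments containing a transitive subtournament on m vertices is at most n^m · 2^{−m(m−1)/2}, which tends to 0 as n → ∞.) -/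
def TourP {n : ℕ} (t : Fin n → Fin n → Bool) : Prop :=
  (∀ i, t i i = false) ∧ ∀ i j, i ≠ j → t i j = !t j i

theorem tour_enum {α : Type} [Fintype α] {m : ℕ} (r : α → α → Prop)
    [IsStrictTotalOrder α r] (hc : Fintype.card α = m) :
    ∃ e : Fin m → α, Function.Injective e ∧ ∀ i j, i < j → r (e i) (e j) := by
  classical
  let _ : LinearOrder α := linearOrderOfSTO r
  let e := monoEquivOfFin α hc
  refine ⟨e, e.injective, ?_⟩
  intro i j hij
  have : e i < e j := e.strictMono hij
  exact this

theorem tour_exists_order {n m : ℕ} (t : Fin n → Fin n → Bool) (ht : TourP t)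
    (S : Finset (Fin n)) (hS : S.card = m)
    (h : ∀ a ∈ S, ∀ b ∈ S, ∀ c ∈ S, t a b = true → t b c = true → t a c = true) :
    ∃ f : Fin m → Fin n, Function.Injective f ∧ ∀ i j, i < j → t (f i) (f j) = true := by
  classical
  let r : S → S → Prop := fun a b => t a b = true
  have : IsStrictTotalOrder S r :=
    { trichotomous := by
        intro a b h1 h2
        by_contra hab
        have := ht.2 a b (fun h => hab (Subtype.ext h))
        simp only [r] at h1 h2
        simp_all
      irrefl := by
        intro a h1
        have := ht.1 a
        simp only [r] at h1
        simp_all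
      trans := fun a b c h1 h2 => h a a.2 b b.2 c c.2 h1 h2 }
  have hc : Fintype.card S = m := by simpa using hS
  obtain ⟨e, he, hr⟩ := tour_enum r hc
  exact ⟨fun i => (e i : Fin n), fun i j hij => he (Subtype.ext hij), fun i j hij => hr i j hij⟩

open Classical in
theorem tour_count_order {n m : ℕ} (f : Fin m → Fin n) :
    (Finset.univ.filter (fun t : Fin n → Fin n → Bool => TourP t ∧ Function.Injective f ∧
      ∀ i j, i < j → t (f i) (f j) = true)).card
      ≤ 2 ^ (n * (n - 1) / 2 - m * (m - 1) / 2) := by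
  by_cases hf : Function.Injective f
  swap
  · simp [hf]
  let E : Finset (Finset (Fin n)) := Finset.powersetCard 2 Finset.univ \
    Finset.powersetCard 2 (Finset.univ.image f)
  have hE : E.card = n * (n - 1) / 2 - m * (m - 1) / 2 := by
    rw [Finset.card_sdiff_of_subset (Finset.powersetCard_mono (Finset.subset_univ _))]
    simp [Finset.card_image_of_injective _ hf, Nat.choose_two_right]
  have hcard : (Finset.univ : Finset (E → Bool)).card
      = 2 ^ (n * (n - 1) / 2 - m * (m - 1) / 2) := by
    simp [← hE]
  rw [← hcard]
  apply Finset.card_le_card_of_injOn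
    (fun t (s : E) => decide (∃ a b, a < b ∧ (s : Finset (Fin n)) = {a, b} ∧ t a b = true))
  · intro _ _; simp
  intro t ht t' ht' hg
  simp only [Finset.coe_filter, Finset.mem_univ, true_and, Set.mem_ofPred_eq] at ht ht'
  obtain ⟨ht, -, h1⟩ := ht
  obtain ⟨ht', -, h1'⟩ := ht'
  have key : ∀ a b, a < b → t a b = t' a b := by
    intro a b hab
    by_cases hs : ({a, b} : Finset (Fin n)) ∈ E
    · have := congrFun hg ⟨_, hs⟩
      have aux : ∀ u : Fin n → Fin n → Bool, (∃ c d, c < d ∧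
          ({a, b} : Finset (Fin n)) = {c, d} ∧ u c d = true) ↔ u a b = true := by
        intro u
        constructor
        · rintro ⟨c, d, hcd, he, hu⟩
          have hc : c ∈ ({a, b} : Finset (Fin n)) := by rw [he]; simp
          have hd : d ∈ ({a, b} : Finset (Fin n)) := by rw [he]; simp
          simp only [Finset.mem_insert, Finset.mem_singleton] at hc hd
          rcases hc with rfl | rfl <;> rcases hd with rfl | rfl
          · exact absurd hcd (lt_irrefl _)
          · exact hu
          · exact absurd hcd (lt_asymm hab)
          · exact absurd hcd (lt_irrefl _)
        · intro hu
          exact ⟨a, b, hab, rfl, hu⟩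
      simp only [aux, decide_eq_decide] at this
      exact Bool.eq_iff_iff.2 this
    · have hp : ({a, b} : Finset (Fin n)).card = 2 := Finset.card_pair hab.ne
      simp only [E, Finset.mem_sdiff, Finset.mem_powersetCard, hp, Finset.subset_univ,
        true_and, and_true, not_not] at hs
      have ha : a ∈ Finset.univ.image f := hs (by simp)
      have hb : b ∈ Finset.univ.image f := hs (by simp)
      simp only [Finset.mem_image, Finset.mem_univ, true_and] at ha hb
      obtain ⟨i, rfl⟩ := ha
      obtain ⟨j, rfl⟩ := hb
      rcases lt_trichotomy i j with h | h | h
      · rw [h1 _ _ h, h1' _ _ h]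
      · subst h; exact absurd hab (lt_irrefl _)
      · rw [ht.2 _ _ hab.ne, ht'.2 _ _ hab.ne, h1 _ _ h, h1' _ _ h]
  funext a b
  rcases lt_trichotomy a b with h | h | h
  · exact key a b h
  · subst h; rw [ht.1, ht'.1]
  · rw [ht.2 _ _ h.ne', ht'.2 _ _ h.ne', key b a h]

/-- The number of tournaments on the labeled vertex set `Fin n` (encoded as
functions `t : Fin n → Fin n → Bool` with `t i i = false` and
`t i j = !t j i` for `i ≠ j`) that contain a transitive subtournament on
`m = ⌊3 log₂ n⌋` vertices is at most `n ^ m * 2 ^ (n(n-1)/2 - m(m-1)/2)`. -/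
theorem count_tournaments_with_transitive_subtournament (n : ℕ) (hn : 2 ≤ n)
    (m : ℕ) (hm : m = ⌊3 * Real.logb 2 n⌋₊) :
    Nat.card {t : Fin n → Fin n → Bool //
        ((∀ i, t i i = false) ∧ ∀ i j, i ≠ j → t i j = !t j i) ∧
        ∃ S : Finset (Fin n), S.card = m ∧
          ∀ a ∈ S, ∀ b ∈ S, ∀ c ∈ S, t a b = true → t b c = true → t a c = true}
      ≤ n ^ m * 2 ^ (n * (n - 1) / 2 - m * (m - 1) / 2) := by
  classical
  rw [Nat.card_eq_fintype_card, Fintype.card_subtype]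
  have hsub : (Finset.univ.filter (fun t : Fin n → Fin n → Bool =>
        ((∀ i, t i i = false) ∧ ∀ i j, i ≠ j → t i j = !t j i) ∧
        ∃ S : Finset (Fin n), S.card = m ∧
          ∀ a ∈ S, ∀ b ∈ S, ∀ c ∈ S, t a b = true → t b c = true → t a c = true)) ⊆
      (Finset.univ : Finset (Fin m → Fin n)).biUnion (fun f =>
        Finset.univ.filter (fun t : Fin n → Fin n → Bool => TourP t ∧ Function.Injective f ∧
          ∀ i j, i < j → t (f i) (f j) = true)) := by
    intro t ht
    simp only [Finset.mem_filter, Finset.mem_univ, true_and] at ht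
    obtain ⟨ht, S, hS, h⟩ := ht
    obtain ⟨f, hf, hlt⟩ := tour_exists_order t ht S hS h
    simp only [Finset.mem_biUnion, Finset.mem_filter, Finset.mem_univ, true_and]
    exact ⟨f, ht, hf, hlt⟩
  refine le_trans (le_of_eq (by congr)) ((Finset.card_le_card hsub).trans ?_)
  refine (Finset.card_biUnion_le_card_mul _ _ (2 ^ (n * (n - 1) / 2 - m * (m - 1) / 2)) (fun f _ => ?_)).trans (le_of_eq ?_)
  · convert tour_count_order f
  · simp
end

section
/- Fix a real ε with 0 < ε < 1, let n ≥ 1, and let m = ⌈n^ε⌉. Consider orientations of the complete bipartite graph with parts U and V of size n each, i.e., functions assigning to each pair (u, v) ∈ U × V a direction (from u to v or from v to u). The number of such orientations for which there exist subsets U' ⊆ U and V' ⊆ V with |U'| = |V'| = m such that the digraph induced on U' ∪ V' is acyclic is at most n^{2m} · (m+1)^m · 2^{n² − m²}. (Since the total number of orientations is 2^{n²}, the probability that a uniformly random orientation contains such an acyclic pair is at most n^{2m} · (m+1)^m · 2^{−m²}, which tends to 0 as n → ∞.) -/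
/-- The arc relation of the digraph induced on `U' ∪ V'` by an orientation
`g` of the complete bipartite graph between copies of `Fin n`:
`g u v = true` means the edge `{u, v}` is oriented from `u ∈ U` to `v ∈ V`. -/
def BipAdj {n : ℕ} (g : Fin n → Fin n → Bool) (U' V' : Finset (Fin n)) :
    (Fin n ⊕ Fin n) → (Fin n ⊕ Fin n) → Prop
  | Sum.inl u, Sum.inr v => u ∈ U' ∧ v ∈ V' ∧ g u v = true
  | Sum.inr v, Sum.inl u => u ∈ U' ∧ v ∈ V' ∧ g u v = false
  | _, _ => False

theorem no_four_cycle_aux {n : ℕ} (g : Fin n → Fin n → Bool) (U' V' : Finset (Fin n))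
    (h : ∀ (ℓ : ℕ) (c : ZMod ℓ → (Fin n ⊕ Fin n)), ¬ IsDicycle (BipAdj g U' V') ℓ c)
    (u u' v v' : Fin n) (hu : u ∈ U') (hu' : u' ∈ U') (hv : v ∈ V') (hv' : v' ∈ V')
    (h1 : g u v = true) (h2 : g u' v = false) (h3 : g u' v' = true) (h4 : g u v' = false) :
    False := by
  have huu : u ≠ u' := by rintro rfl; simp_all
  have hvv : v ≠ v' := by rintro rfl; simp_all
  let c : Fin 4 → Fin n ⊕ Fin n := ![Sum.inl u, Sum.inr v, Sum.inl u', Sum.inr v']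
  have hc : Function.Injective c := by
    intro i j hij
    fin_cases i <;> fin_cases j <;> simp_all [c]
  have hadj : ∀ j : Fin 4, BipAdj g U' V' (c j) (c (j + 1)) := by
    intro j
    fin_cases j
    · exact ⟨hu, hv, h1⟩
    · exact ⟨hu', hv, h2⟩
    · exact ⟨hu', hv', h3⟩
    · exact ⟨hu, hv', h4⟩
  exact h 4 c ⟨by norm_num, hc, hadj⟩

theorem lower_aux {m : ℕ} (L : Finset (Fin m)) (hL : ∀ i j : Fin m, i < j → j ∈ L → i ∈ L)
    (j : Fin m) : j ∈ L ↔ (j : ℕ) < L.card := by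
  constructor
  · intro hj
    have : Finset.Iic j ⊆ L := by
      intro i hi
      rcases (Finset.mem_Iic.1 hi).lt_or_eq with h | h
      · exact hL i j h hj
      · exact h ▸ hj
    have := Finset.card_le_card this
    rw [Fin.card_Iic] at this
    omega
  · intro hlt
    by_contra hj
    have : L ⊆ Finset.Iio j := by
      intro i hi
      rw [Finset.mem_Iio]
      by_contra hij
      rcases (not_lt.1 hij).lt_or_eq with h | h
      · exact hj (hL j i h hi)
      · exact hj (h ▸ hi)
    have := Finset.card_le_card this
    rw [Fin.card_Iio] at this
    omega

theorem encode_aux {n m : ℕ} (g : Fin n → Fin n → Bool) (U' V' : Finset (Fin n))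
    (hU : U'.card = m) (hV : V'.card = m)
    (h : ∀ (ℓ : ℕ) (c : ZMod ℓ → (Fin n ⊕ Fin n)), ¬ IsDicycle (BipAdj g U' V') ℓ c) :
    ∃ (a b : Fin m → Fin n) (k : Fin m → Fin (m + 1)), Function.Injective a ∧
      Function.Injective b ∧ ∀ i j, g (a i) (b j) = decide ((k i : ℕ) ≤ j) := by
  let a : Fin m → Fin n := fun i => (U'.equivFinOfCardEq hU).symm i
  have ha : Function.Injective a :=
    Subtype.val_injective.comp (U'.equivFinOfCardEq hU).symm.injective
  have haU : ∀ i, a i ∈ U' := fun i => ((U'.equivFinOfCardEq hU).symm i).2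
  let e : Fin m → Fin n := fun i => (V'.equivFinOfCardEq hV).symm i
  have he : Function.Injective e :=
    Subtype.val_injective.comp (V'.equivFinOfCardEq hV).symm.injective
  have heV : ∀ i, e i ∈ V' := fun i => ((V'.equivFinOfCardEq hV).symm i).2
  let f : Fin m → ℕ := fun j => (U'.filter (fun u => g u (e j) = true)).card
  have hmono : Monotone (f ∘ Tuple.sort f) := Tuple.monotone_sort f
  let b : Fin m → Fin n := fun j => e (Tuple.sort f j)
  have hb : Function.Injective b := he.comp (Tuple.sort f).injective
  have hbV : ∀ j, b j ∈ V' := fun j => heV _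
  let L : Fin m → Finset (Fin m) := fun i => Finset.univ.filter (fun j => g (a i) (b j) = false)
  have hL : ∀ i, ∀ j j' : Fin m, j < j' → j' ∈ L i → j ∈ L i := by
    intro i j j' hjj hj'
    have hf : g (a i) (b j') = false := by simpa [L] using hj'
    by_contra hj
    have ht : g (a i) (b j) = true := by simpa [L] using hj
    have hle : (U'.filter (fun u => g u (b j) = true)).card
        ≤ (U'.filter (fun u => g u (b j') = true)).card := hmono hjj.le
    have hex : ∃ u ∈ U', g u (b j') = true ∧ g u (b j) = false := by
      by_contra hne
      push Not at hne
      have hss : U'.filter (fun u => g u (b j') = true) ⊂ U'.filter (fun u => g u (b j) = true) := by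
        rw [Finset.ssubset_iff_of_subset]
        · exact ⟨a i, by simp [haU, ht], by simp [hf]⟩
        · intro u hu
          rw [Finset.mem_filter] at hu ⊢
          exact ⟨hu.1, by simpa using hne u hu.1 hu.2⟩
      exact absurd (Finset.card_lt_card hss) (not_lt.2 hle)
    obtain ⟨u, huU, h1, h2⟩ := hex
    exact no_four_cycle_aux g U' V' h (a i) u (b j) (b j') (haU i) huU (hbV j) (hbV j') ht h2 h1 hf
  refine ⟨a, b, fun i => ⟨(L i).card, ?_⟩, ha, hb, ?_⟩
  · have := Finset.card_le_univ (L i)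
    rw [Fintype.card_fin] at this
    omega
  · intro i j
    have := lower_aux (L i) (hL i) j
    have h2 : j ∈ L i ↔ g (a i) (b j) = false := by simp [L]
    rw [h2] at this
    cases hg : g (a i) (b j)
    · have := this.1 hg
      simpa using this
    · rw [hg] at this
      simpa using this

theorem fiber_aux {n m : ℕ} (a b : Fin m → Fin n) (k : Fin m → Fin (m + 1))
    (ha : Function.Injective a) (hb : Function.Injective b) :
    (Finset.univ.filter (fun g : Fin n → Fin n → Bool =>
      ∀ i j, g (a i) (b j) = decide ((k i : ℕ) ≤ j))).card ≤ 2 ^ (n ^ 2 - m ^ 2) := by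
  classical
  let S : Finset (Fin n × Fin n) := Finset.univ.image (Prod.map a b)
  have hS : S.card = m ^ 2 := by
    rw [Finset.card_image_of_injective _ (ha.prodMap hb)]
    simp [sq]
  have hcard : Fintype.card ({p // p ∈ Sᶜ} → Bool) = 2 ^ (n ^ 2 - m ^ 2) := by
    rw [Fintype.card_fun, Fintype.card_coe, Finset.card_compl, hS]
    simp [sq]
  rw [← hcard, ← Finset.card_univ]
  apply Finset.card_le_card_of_injOn (fun g p => g p.1.1 p.1.2)
  · intro g _
    simp
  · intro g hg g' hg' hgg
    simp only [Finset.coe_filter, Finset.mem_univ, true_and, Set.mem_ofPred_eq] at hg hg'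
    funext x y
    by_cases hxy : (x, y) ∈ S
    · obtain ⟨⟨i, j⟩, -, hij⟩ := Finset.mem_image.1 hxy
      simp only [Prod.map_apply, Prod.mk.injEq] at hij
      rw [← hij.1, ← hij.2, hg, hg']
    · exact congrFun hgg ⟨(x, y), by simpa using hxy⟩

theorem count_orientations_with_acyclic_pair (ε : ℝ) (hε0 : 0 < ε) (hε1 : ε < 1)
    (n : ℕ) (hn : 1 ≤ n) (m : ℕ) (hm : m = ⌈(n : ℝ) ^ ε⌉₊) :
    Nat.card {g : Fin n → Fin n → Bool //
        ∃ U' V' : Finset (Fin n), U'.card = m ∧ V'.card = m ∧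
          ∀ (ℓ : ℕ) (c : ZMod ℓ → (Fin n ⊕ Fin n)),
            ¬ IsDicycle (BipAdj g U' V') ℓ c}
      ≤ n ^ (2 * m) * (m + 1) ^ m * 2 ^ (n ^ 2 - m ^ 2) := by
  classical
  clear hm hn hε0 hε1
  let I : Finset ((Fin m → Fin n) × (Fin m → Fin n) × (Fin m → Fin (m + 1))) :=
    Finset.univ.filter (fun t => Function.Injective t.1 ∧ Function.Injective t.2.1)
  have hI : I.card ≤ n ^ (2 * m) * (m + 1) ^ m := by
    refine (Finset.card_le_univ I).trans (le_of_eq ?_)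
    simp only [Fintype.card_prod, Fintype.card_fun, Fintype.card_fin]
    ring
  rw [Nat.card_eq_fintype_card, Fintype.card_subtype]
  refine le_trans (Finset.card_le_card (t := I.biUnion (fun t =>
    Finset.univ.filter (fun g : Fin n → Fin n → Bool =>
      ∀ i j, g (t.1 i) (t.2.1 j) = decide ((t.2.2 i : ℕ) ≤ j)))) ?_) ?_
  · intro g hg
    obtain ⟨U', V', hU, hV, h⟩ := (Finset.mem_filter.1 hg).2
    obtain ⟨a, b, k, ha, hb, hk⟩ := encode_aux g U' V' hU hV h
    rw [Finset.mem_biUnion]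
    exact ⟨(a, b, k), by simp [I, ha, hb], by simpa using hk⟩
  · refine (Finset.card_biUnion_le_card_mul _ _ (2 ^ (n ^ 2 - m ^ 2)) ?_).trans
      (Nat.mul_le_mul_right _ hI)
    rintro ⟨a, b, k⟩ ht
    have := (Finset.mem_filter.1 ht).2
    exact fiber_aux a b k this.1 this.2
end

section
/- Let k ≥ 1, let U and V be finite sets, and fix an orientation of the complete bipartite graph between U and V (each pair (u, v) ∈ U × V is assigned one of the two arc directions). Suppose U' ⊆ U and V' ⊆ V satisfy |U'| = |V'| = 2k+1 and the digraph induced on U' ∪ V' is acyclic. Then there exist subsets A ⊆ U' and B ⊆ V' with |A| = |B| = k such that either every arc between A and B is oriented from A to B, or every arc between A and B is oriented from B to A. -/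
/-- The arc relation of the digraph induced on `U' ∪ V'` by an orientation `g`
of the complete bipartite graph between `U` and `V`: `g u v = true` means the
edge `{u, v}` is oriented from `u ∈ U` to `v ∈ V`. -/
def BipOrientAdj {U V : Type} (g : U → V → Bool) (U' : Finset U) (V' : Finset V)
    [DecidableEq U] [DecidableEq V] : (U ⊕ V) → (U ⊕ V) → Prop
  | Sum.inl u, Sum.inr v => u ∈ U' ∧ v ∈ V' ∧ g u v = true
  | Sum.inr v, Sum.inl u => u ∈ U' ∧ v ∈ V' ∧ g u v = false
  | _, _ => False

/-- If an orientation of the complete bipartite graph between `U` and `V`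
induces an acyclic digraph on `U' ∪ V'` with `|U'| = |V'| = 2k + 1`, then there
are `A ⊆ U'` and `B ⊆ V'` with `|A| = |B| = k` such that all arcs between `A`
and `B` go from `A` to `B`, or all go from `B` to `A`. -/
theorem acyclic_bipartite_orientation_homogeneous_pair (k : ℕ) (hk : 1 ≤ k)
    (U V : Type) [Fintype U] [Fintype V] [DecidableEq U] [DecidableEq V]
    (g : U → V → Bool) (U' : Finset U) (V' : Finset V)
    (hU : U'.card = 2 * k + 1) (hV : V'.card = 2 * k + 1)
    (hacyc : ∀ (ℓ : ℕ) (c : ZMod ℓ → (U ⊕ V)),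
      ¬ IsDicycle (BipOrientAdj g U' V') ℓ c) :
    ∃ (A : Finset U) (B : Finset V), A ⊆ U' ∧ B ⊆ V' ∧
      A.card = k ∧ B.card = k ∧
      ((∀ a ∈ A, ∀ b ∈ B, g a b = true) ∨ (∀ a ∈ A, ∀ b ∈ B, g a b = false)) := by
  have key : ∀ u ∈ U', ∀ u' ∈ U', ∀ v ∈ V', ∀ v' ∈ V',
      g u v = true → g u' v = false → g u' v' = true → g u v' = false → False := by
    intro u hu u' hu' v hv v' hv' h1 h2 h3 h4
    have hne : u ≠ u' := by rintro rfl; simp_all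
    have hne' : v ≠ v' := by rintro rfl; simp_all
    refine hacyc 4 (![Sum.inl u, Sum.inr v, Sum.inl u', Sum.inr v'] : Fin 4 → U ⊕ V)
      ⟨by norm_num, ?_, ?_⟩
    · intro (i : Fin 4) (j : Fin 4) hij
      fin_cases i <;> fin_cases j <;> first | rfl | (exfalso; simp_all)
    · intro (j : Fin 4)
      fin_cases j
      · exact ⟨hu, hv, h1⟩
      · exact ⟨hu', hv, h2⟩
      · exact ⟨hu', hv', h3⟩
      · exact ⟨hu, hv', h4⟩
  let N : U → Finset V := fun u => V'.filter (fun v => g u v = true)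
  have chain : ∀ u ∈ U', ∀ u' ∈ U', (N u).card ≤ (N u').card → N u ⊆ N u' := by
    intro u hu u' hu' hc
    by_contra hns
    obtain ⟨v, hv, hv2⟩ := Finset.not_subset.mp hns
    have hns' : ¬ N u' ⊆ N u := fun h => by
      have := Finset.eq_of_subset_of_card_le h hc
      exact hv2 (this ▸ hv)
    obtain ⟨w, hw, hw2⟩ := Finset.not_subset.mp hns'
    simp only [N, Finset.mem_filter, not_and, Bool.not_eq_true] at hv hv2 hw hw2
    exact key u hu u' hu' v hv.1 w hw.1 hv.2 (hv2 hv.1) hw.2 (hw2 hw.1)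
  have hsplit := Finset.card_filter_add_card_filter_not (s := U') (fun u => k ≤ (N u).card)
  by_cases hP : k ≤ (U'.filter (fun u => k ≤ (N u).card)).card
  · obtain ⟨A, hA, hAc⟩ := Finset.exists_subset_card_eq hP
    obtain ⟨u0, hu0, hmin⟩ := A.exists_min_image (fun u => (N u).card)
      (Finset.card_pos.mp (by omega))
    have hAU : A ⊆ U' := hA.trans (Finset.filter_subset _ _)
    obtain ⟨B, hB, hBc⟩ := Finset.exists_subset_card_eq (Finset.mem_filter.mp (hA hu0)).2
    refine ⟨A, B, hAU, hB.trans (Finset.filter_subset _ _), hAc, hBc, Or.inl ?_⟩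
    intro a ha b hb
    exact (Finset.mem_filter.mp (chain u0 (hAU hu0) a (hAU ha) (hmin a ha) (hB hb))).2
  · have hQ : k ≤ (U'.filter (fun u => ¬ k ≤ (N u).card)).card := by omega
    obtain ⟨A, hA, hAc⟩ := Finset.exists_subset_card_eq hQ
    obtain ⟨u0, hu0, hmax⟩ := A.exists_max_image (fun u => (N u).card)
      (Finset.card_pos.mp (by omega))
    have hAU : A ⊆ U' := hA.trans (Finset.filter_subset _ _)
    have h0 := (Finset.mem_filter.mp (hA hu0)).2
    have h1 : k ≤ (V' \ N u0).card := by
      have := Finset.le_card_sdiff (N u0) V'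
      omega
    obtain ⟨B, hB, hBc⟩ := Finset.exists_subset_card_eq h1
    refine ⟨A, B, hAU, hB.trans Finset.sdiff_subset, hAc, hBc, Or.inr ?_⟩
    intro a ha b hb
    have hb' := Finset.mem_sdiff.mp (hB hb)
    by_contra hg
    exact hb'.2 (chain a (hAU ha) u0 (hAU hu0) (hmax a ha)
      (Finset.mem_filter.mpr ⟨hb'.1, by simpa using hg⟩))
end

section
/- For all integers r ≥ 2 and k ≥ 3, there exists a finite simple graph J with two distinguished distinct vertices u and v such that: (1) J has girth at least k; (2) J admits an acyclic r-coloring; (3) every acyclic r-coloring of J assigns the same color to u and v; and (4) every path in J from u to v has at least k vertices. -/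
/-- `f` is an acyclic coloring of the simple graph `G`: no cycle of `G` is
monochromatic, i.e. each color class induces a forest. -/
def IsAcyclicGraphColoring {V : Type} {r : ℕ} (G : SimpleGraph V) (f : V → Fin r) : Prop :=
  ∀ (v : V) (w : G.Walk v v), w.IsCycle → ∃ x ∈ w.support, f x ≠ f v

namespace Gadget

open SimpleGraph Finset

section
variable {V : Type} [Fintype V]

open Classical in
/-- neighbours of a vertex -/
noncomputable def nb (G : SimpleGraph V) (v : V) : Finset V := univ.filter (fun w => G.Adj v w)

open Classical in
/-- a ball around a vertex -/
noncomputable def bl (G : SimpleGraph V) : ℕ → V → Finset V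
  | 0, x => {x}
  | j + 1, x => insert x ((nb G x).biUnion (fun z => bl G j z))

lemma bl_card (G : SimpleGraph V) (D : ℕ) (hD : ∀ v, (nb G v).card ≤ D) (j : ℕ) (x : V) :
    (bl G j x).card ≤ (D + 1) ^ j := by
  classical
  induction j generalizing x with
  | zero => simp [bl]
  | succ j ih =>
    rw [bl]
    have h1 := card_insert_le x ((nb G x).biUnion (fun z => bl G j z))
    have h2 := card_biUnion_le_card_mul (nb G x) (fun z => bl G j z) ((D + 1) ^ j)
      (fun z _ => ih z)
    have h3 : (nb G x).card * (D + 1) ^ j ≤ D * (D + 1) ^ j := Nat.mul_le_mul_right _ (hD x)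
    have h4 : 1 ≤ (D + 1) ^ j := Nat.one_le_pow _ _ (by omega)
    have h5 : (D + 1) ^ (j + 1) = D * (D + 1) ^ j + (D + 1) ^ j := by ring
    have h6 := h1.trans (show _ ≤ (D + 1) ^ (j + 1) by omega)
    convert h6

lemma mem_bl (G : SimpleGraph V) {x y : V} (p : G.Walk x y) (j : ℕ) (h : p.length ≤ j) :
    y ∈ bl G j x := by
  classical
  induction p generalizing j with
  | nil => cases j <;> simp [bl]
  | @cons a b c hab p ih =>
    cases j with
    | zero => simp at h
    | succ j =>
      rw [bl]
      refine mem_insert_of_mem (mem_biUnion.2 ⟨b, ?_, ih j ?_⟩)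
      · simpa [nb] using hab
      · simpa using h

lemma edges_sup {G : SimpleGraph V} {x y u v : V} (w : (G ⊔ edge x y).Walk u v)
    (h : s(x, y) ∉ w.edges) : ∀ e ∈ w.edges, e ∈ G.edgeSet := by
  intro e he
  have h1 := w.edges_subset_edgeSet he
  induction e with
  | _ a b =>
    rw [mem_edgeSet, sup_adj, edge_adj] at h1
    rcases h1 with h1 | ⟨⟨rfl, rfl⟩ | ⟨rfl, rfl⟩, _⟩
    · exact h1
    · exact absurd he h
    · rw [Sym2.eq_swap] at he
      exact absurd he h

lemma girth_sup {G : SimpleGraph V} {x y : V} {k : ℕ} (hG : (k : ℕ∞) ≤ G.egirth)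
    (hxy : x ≠ y) (hw : ∀ p : G.Walk x y, k ≤ p.length) :
    (k : ℕ∞) ≤ (G ⊔ edge x y).egirth := by
  classical
  rw [le_egirth] at *
  intro a w hc
  by_cases he : s(x, y) ∈ w.edges
  · have hx := w.fst_mem_support_of_mem_edges he
    have hy := w.snd_mem_support_of_mem_edges he
    have hc' := hc.rotate (u := x) hx
    have hlen := w.length_rotate x hx
    have hy' : y ∈ (w.rotate x hx).support := by
      exact (w.rotate x hx).snd_mem_support_of_mem_edges
        (((w.rotate_edges x hx).mem_iff).2 he)
    generalize w.rotate x hx = c at *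
    rw [← hlen]
    have hspec := c.take_spec hy'
    have hl : (c.takeUntil y hy').length + (c.dropUntil y hy').length = c.length := by
      rw [← Walk.length_append, hspec]
    have hn : ((c.takeUntil y hy').edges ++ (c.dropUntil y hy').edges).Nodup := by
      rw [← Walk.edges_append, hspec]
      exact hc'.1.1.edges_nodup
    rw [List.nodup_append] at hn
    by_cases h1 : s(x, y) ∈ (c.takeUntil y hy').edges
    · have h2 : s(x, y) ∉ (c.dropUntil y hy').edges := fun h => hn.2.2 _ h1 _ h rfl
      have := hw ((c.dropUntil y hy').transfer G (edges_sup _ h2)).reverse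
      rw [Walk.length_reverse, Walk.length_transfer] at this
      exact_mod_cast (by omega)
    · have := hw ((c.takeUntil y hy').transfer G (edges_sup _ h1))
      rw [Walk.length_transfer] at this
      exact_mod_cast (by omega)
  · have := hG a (w.transfer G (edges_sup w he)) (hc.transfer _)
    rwa [Walk.length_transfer] at this

lemma nb_sup (G : SimpleGraph V) {x y : V} (hxy : x ≠ y) [DecidableEq V] (v : V) :
    (nb (G ⊔ edge x y) v).card ≤
      (nb G v).card + ((if v = x then 1 else 0) + (if v = y then 1 else 0)) := by
  by_cases h1 : v = x
  · subst h1
    have : nb (G ⊔ edge v y) v ⊆ insert y (nb G v) := by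
      intro z
      simp only [nb, mem_filter, mem_univ, true_and, sup_adj, edge_adj, mem_insert]
      grind
    have h := (card_le_card this).trans (card_insert_le _ _)
    simpa [hxy] using h
  by_cases h2 : v = y
  · subst h2
    have : nb (G ⊔ edge x v) v ⊆ insert x (nb G v) := by
      intro z
      simp only [nb, mem_filter, mem_univ, true_and, sup_adj, edge_adj, mem_insert]
      grind
    have h := (card_le_card this).trans (card_insert_le _ _)
    simpa [h1] using h
  · have : nb (G ⊔ edge x y) v ⊆ nb G v := by
      intro z
      simp only [nb, mem_filter, mem_univ, true_and, sup_adj, edge_adj]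
      grind
    simpa [h1, h2] using card_le_card this

lemma mono_pairs {α : Type} [Fintype α] [DecidableEq α] (f : V → α) :
    (Fintype.card V) ^ 2 ≤
      Fintype.card α * ((univ : Finset (V × V)).filter (fun p => f p.1 = f p.2)).card := by
  classical
  have h1 : (Fintype.card V) = ∑ a : α, (univ.filter (fun v => f v = a)).card := by
    rw [← card_univ]
    exact card_eq_sum_card_fiberwise (fun _ _ => mem_coe.2 (mem_univ _))
  have h2 : ((univ : Finset (V × V)).filter (fun p => f p.1 = f p.2)).card
      = ∑ a : α, (univ.filter (fun v => f v = a)).card ^ 2 := by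
    rw [card_eq_sum_card_fiberwise (f := fun p : V × V => f p.1) (t := univ)
      (fun _ _ => mem_coe.2 (mem_univ _))]
    refine sum_congr rfl fun a _ => ?_
    rw [sq, ← card_product]
    congr 1
    ext ⟨p, q⟩
    simp only [mem_filter, mem_univ, true_and, mem_product]
    grind
  rw [h2]
  conv_lhs => rw [h1]
  have := sq_sum_le_card_mul_sum_sq (s := (univ : Finset α))
    (f := fun a => (univ.filter (fun v => f v = a)).card)
  simpa using this

open Classical in
/-- proper colourings -/
noncomputable def pc (G : SimpleGraph V) (α : Type) [Fintype α] : Finset (V → α) :=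
  univ.filter (fun f => ∀ x y, G.Adj x y → f x ≠ f y)

lemma step {α : Type} [Fintype α] (G : SimpleGraph V) (k D C i : ℕ)
    (hC : 0 < C) (hq : 0 < Fintype.card α)
    (hD : D = 16 * Fintype.card α * C)
    (hn : 4 * Fintype.card α * (D + 1) ^ k ≤ Fintype.card V)
    (hi : i ≤ C * Fintype.card V)
    (hg : (k : ℕ∞) ≤ G.egirth) (hdeg : ∀ v, (nb G v).card ≤ D)
    (hsum : ∑ v, (nb G v).card ≤ 2 * i) :
    ∃ G' : SimpleGraph V, (k : ℕ∞) ≤ G'.egirth ∧ (∀ v, (nb G' v).card ≤ D) ∧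
      ∑ v, (nb G' v).card ≤ 2 * (i + 1) ∧
      2 * Fintype.card α * (pc G' α).card ≤ (2 * Fintype.card α - 1) * (pc G α).card := by
  classical
  set q := Fintype.card α
  set n := Fintype.card V
  by_cases hP : (pc G α).card = 0
  · exact ⟨G, hg, hdeg, by omega, by simp [hP]⟩
  -- saturated vertices
  set sat : Finset V := univ.filter (fun v => D ≤ (nb G v).card) with hsat
  have hs1 : sat.card * D ≤ 2 * i := by
    refine le_trans ?_ hsum
    refine le_trans ?_ (sum_le_sum_of_subset (subset_univ sat))
    rw [← smul_eq_mul]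
    refine card_nsmul_le_sum _ _ _ fun v hv => ?_
    simpa [hsat] using hv
  have hs2 : 8 * q * sat.card ≤ n := by
    have : (8 * q * sat.card) * (2 * C) ≤ n * (2 * C) := by
      calc (8 * q * sat.card) * (2 * C) = sat.card * D := by rw [hD]; ring
        _ ≤ 2 * i := hs1
        _ ≤ 2 * (C * n) := by omega
        _ = n * (2 * C) := by ring
    exact Nat.le_of_mul_le_mul_right this (by omega)
  set bad : Finset (V × V) := (sat ×ˢ univ) ∪ (univ ×ˢ sat) ∪
    (univ : Finset V).biUnion (fun x => (bl G k x).image (fun y => (x, y))) with hbad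
  have hb : bad.card ≤ sat.card * n + n * sat.card + n * (D + 1) ^ k := by
    refine (card_union_le _ _).trans (add_le_add ((card_union_le _ _).trans ?_) ?_)
    · simp [card_product, n]
    · exact card_biUnion_le_card_mul _ _ _
        (fun x _ => card_image_le.trans (bl_card G D hdeg k x))
  have hb2 : 2 * q * bad.card ≤ n ^ 2 := by
    have h1 : 2 * (2 * q * bad.card) ≤ 2 * n ^ 2 := by
      calc 2 * (2 * q * bad.card) ≤ 2 * (2 * q * (sat.card * n + n * sat.card + n * (D + 1) ^ k)) := by
            gcongr
        _ = n * (8 * q * sat.card) + n * (4 * q * (D + 1) ^ k) := by ring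
        _ ≤ n * n + n * n := by gcongr
        _ = 2 * n ^ 2 := by ring
    omega
  have hf : ∀ f : V → α, n ^ 2 ≤ 2 * q * ((badᶜ).filter (fun p => f p.1 = f p.2)).card := by
    intro f
    have h1 := mono_pairs f
    have h2 : ((univ : Finset (V × V)).filter (fun p => f p.1 = f p.2)).card ≤
        ((badᶜ).filter (fun p => f p.1 = f p.2)).card + bad.card := by
      refine le_trans (card_le_card ?_) (card_union_le _ _)
      intro p
      simp only [mem_filter, mem_univ, true_and, mem_union, mem_compl]
      tauto
    have h3 := Nat.mul_le_mul_left (2 * q) h2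
    change n ^ 2 ≤ q * _ at h1
    nlinarith
  -- averaging
  have hdc := sum_card_bipartiteAbove_eq_sum_card_bipartiteBelow
    (s := pc G α) (t := badᶜ) (fun (f : V → α) (p : V × V) => f p.1 = f p.2)
  have hlow : (pc G α).card * n ^ 2 ≤
      ∑ p ∈ badᶜ, 2 * q * ((pc G α).filter (fun f => f p.1 = f p.2)).card := by
    rw [← mul_sum]
    change _ ≤ 2 * q * ∑ p ∈ badᶜ, ((pc G α).bipartiteBelow
      (fun (f : V → α) (p : V × V) => f p.1 = f p.2) p).card
    rw [← hdc, mul_sum, ← smul_eq_mul]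
    exact card_nsmul_le_sum _ _ _ fun f _ => hf f
  have hnpos : 0 < n := by
    have : 0 < 4 * q * (D + 1) ^ k := by positivity
    omega
  obtain ⟨p, hp, hpc⟩ : ∃ p ∈ badᶜ, (pc G α).card ≤
      2 * q * ((pc G α).filter (fun f => f p.1 = f p.2)).card := by
    by_contra! hcon
    have hne : (badᶜ).Nonempty := by
      rw [nonempty_iff_ne_empty]
      intro h0
      rw [h0, sum_empty] at hlow
      have : 0 < (pc G α).card * n ^ 2 := by positivity
      omega
    have h1 := sum_lt_sum_of_nonempty hne hcon
    rw [sum_const, smul_eq_mul] at h1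
    have h2 : (badᶜ).card ≤ n ^ 2 := by
      refine (card_le_univ _).trans ?_
      simp [n, sq]
    have h3 := Nat.mul_le_mul_right (pc G α).card h2
    nlinarith
  obtain ⟨x, y⟩ := p
  simp only [hbad, mem_compl, mem_union, mem_product, mem_univ, and_true, true_and, not_or,
    mem_biUnion, mem_image, Prod.mk.injEq, not_exists, not_and] at hp
  obtain ⟨⟨hx, hy⟩, hxy⟩ := hp
  have hball : y ∉ bl G k x := fun h => hxy x y h rfl rfl
  have hne : x ≠ y := by
    rintro rfl
    exact hball (mem_bl G Walk.nil k (by simp))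
  have hx' : (nb G x).card < D := by simpa [hsat] using hx
  have hy' : (nb G y).card < D := by simpa [hsat] using hy
  refine ⟨G ⊔ edge x y, girth_sup hg hne ?_, ?_, ?_, ?_⟩
  · intro p
    by_contra! h
    exact hball (mem_bl G p k h.le)
  · intro v
    refine (nb_sup G hne v).trans ?_
    have := hdeg v
    by_cases h1 : v = x
    · subst h1; simp [hne]; omega
    · by_cases h2 : v = y
      · subst h2; simp [h1]; omega
      · simp [h1, h2]; omega
  · refine (sum_le_sum fun v _ => nb_sup G hne v).trans ?_
    simp only [sum_add_distrib, sum_ite_eq', mem_univ, if_true]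
    omega
  · have hsub : pc (G ⊔ edge x y) α ⊆ (pc G α).filter (fun f => ¬ f x = f y) := by
      intro f
      simp only [pc, mem_filter, mem_univ, true_and, sup_adj, edge_adj]
      intro h
      exact ⟨fun a b hab => h a b (Or.inl hab), h x y (Or.inr ⟨Or.inl ⟨rfl, rfl⟩, hne⟩)⟩
    have h1 := card_le_card hsub
    have h2 := card_filter_add_card_filter_not (s := pc G α) (fun f => f x = f y)
    have h3 := Nat.mul_le_mul_left (2 * q) h1
    rw [Nat.sub_mul, one_mul]
    have h4 : 2 * q * (pc G α).card =
      2 * q * ((pc G α).filter (fun f => f x = f y)).card +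
      2 * q * ((pc G α).filter (fun f => ¬ f x = f y)).card := by rw [← h2]; ring
    simp only at hpc
    omega

lemma iter {α : Type} [Fintype α] (k D C : ℕ)
    (hC : 0 < C) (hq : 0 < Fintype.card α)
    (hD : D = 16 * Fintype.card α * C)
    (hn : 4 * Fintype.card α * (D + 1) ^ k ≤ Fintype.card V) (i : ℕ)
    (hi : i ≤ C * Fintype.card V) :
    ∃ G : SimpleGraph V, (k : ℕ∞) ≤ G.egirth ∧ (∀ v, (nb G v).card ≤ D) ∧
      ∑ v, (nb G v).card ≤ 2 * i ∧
      (2 * Fintype.card α) ^ i * (pc G α).card ≤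
        (2 * Fintype.card α - 1) ^ i * Fintype.card α ^ Fintype.card V := by
  classical
  induction i with
  | zero =>
    refine ⟨⊥, by simp, by simp [nb], by simp [nb], ?_⟩
    simp only [pow_zero, one_mul]
    refine (card_le_univ _).trans ?_
    simp
  | succ i ih =>
    obtain ⟨G, h1, h2, h3, h4⟩ := ih (by omega)
    obtain ⟨G', g1, g2, g3, g4⟩ := step (α := α) G k D C i hC hq hD hn (by omega) h1 h2 h3
    refine ⟨G', g1, g2, g3, ?_⟩
    calc (2 * Fintype.card α) ^ (i + 1) * (pc G' α).card
        = (2 * Fintype.card α) ^ i * (2 * Fintype.card α * (pc G' α).card) := by ring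
      _ ≤ (2 * Fintype.card α) ^ i * ((2 * Fintype.card α - 1) * (pc G α).card) := by gcongr
      _ = (2 * Fintype.card α - 1) * ((2 * Fintype.card α) ^ i * (pc G α).card) := by ring
      _ ≤ (2 * Fintype.card α - 1) *
        ((2 * Fintype.card α - 1) ^ i * Fintype.card α ^ Fintype.card V) := by gcongr
      _ = _ := by ring

end

lemma exists_C (q : ℕ) (hq : 0 < q) : ∃ C, 0 < C ∧ (2 * q - 1) ^ C * q < (2 * q) ^ C := by
  have hq' : (0 : ℝ) < q := by exact_mod_cast hq
  obtain ⟨C, hC⟩ := exists_pow_lt_of_lt_one (show (0 : ℝ) < 1 / (q + 1) by positivity)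
    (show ((2 * q - 1 : ℝ) / (2 * q)) < 1 by rw [div_lt_one (by positivity)]; linarith)
  refine ⟨C, ?_, ?_⟩
  · rcases Nat.eq_zero_or_pos C with rfl | h
    · rw [pow_zero, lt_div_iff₀ (by positivity)] at hC
      linarith
    · exact h
  · have h0 : (0 : ℝ) ≤ (2 * q - 1) ^ C := by
      have : (1 : ℝ) ≤ q := by exact_mod_cast hq
      exact pow_nonneg (by linarith) _
    rw [div_pow, div_lt_div_iff₀ (by positivity) (by positivity)] at hC
    have : ((2 * q - 1 : ℕ) : ℝ) = 2 * q - 1 := by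
      rw [Nat.cast_sub (by omega)]; push_cast; ring
    have h2 : (((2 * q - 1) ^ C * q : ℕ) : ℝ) < (((2 * q) ^ C : ℕ) : ℝ) := by
      push_cast
      rw [this]
      nlinarith
    exact_mod_cast h2

lemma exists_high {α : Type} [Fintype α] (hq : 0 < Fintype.card α) (k : ℕ) :
    ∃ (n : ℕ) (G : SimpleGraph (Fin n)), (k : ℕ∞) ≤ G.egirth ∧ IsEmpty (G.Coloring α) := by
  obtain ⟨C, hC, hlt⟩ := exists_C _ hq
  set q := Fintype.card α
  set n := 4 * q * (16 * q * C + 1) ^ k with hn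
  have hnpos : 0 < n := by positivity
  obtain ⟨G, h1, -, -, h4⟩ := iter (V := Fin n) (α := α) k (16 * q * C) C hC hq rfl (by simp [hn, q])
    (C * n) (by simp)
  refine ⟨n, G, h1, ⟨fun f => ?_⟩⟩
  have hpos : 1 ≤ (pc G α).card := by
    refine card_pos.2 ⟨f, ?_⟩
    simp only [pc, mem_filter, mem_univ, true_and]
    intro x y h
    exact f.valid h
  have h5 : ((2 * q - 1) ^ C * q) ^ n < ((2 * q) ^ C) ^ n := Nat.pow_lt_pow_left hlt (by omega)
  rw [mul_pow, ← pow_mul, ← pow_mul] at h5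
  have h6 := Nat.mul_le_mul_left ((2 * q) ^ (C * n)) hpos
  rw [Fintype.card_fin] at h4
  change (2 * q) ^ (C * n) * _ ≤ (2 * q - 1) ^ (C * n) * q ^ n at h4
  omega

lemma walk_const {V β : Type} {H : SimpleGraph V} {f : V → β} (hH : ∀ x y, H.Adj x y → f x = f y)
    {u v : V} (w : H.Walk u v) : ∀ x ∈ w.support, f x = f u := by
  induction w with
  | nil => simp
  | cons h p ih =>
    intro x hx
    rw [Walk.support_cons, List.mem_cons] at hx
    rcases hx with rfl | hx
    · rfl
    · rw [ih x hx, hH _ _ h]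

lemma proper_of_acyclic {V : Type} {r : ℕ} (G : SimpleGraph V) (f : V → Fin r)
    (hf : IsAcyclicGraphColoring G f) : Nonempty (G.Coloring (Fin r × Fin 2)) := by
  let H : SimpleGraph V :=
    { Adj := fun x y => G.Adj x y ∧ f x = f y
      symm := ⟨fun x y h => ⟨h.1.symm, h.2.symm⟩⟩
      loopless := ⟨fun x h => G.loopless.irrefl x h.1⟩ }
  have hle : H ≤ G := fun x y h => h.1
  have hac : H.IsAcyclic := by
    intro v w hw
    obtain ⟨x, hx, hne⟩ := hf v (w.mapLe hle) (hw.mapLe hle)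
    rw [Walk.support_mapLe_eq_support] at hx
    exact hne (walk_const (H := H) (f := f) (fun _ _ h => h.2) w x hx)
  let g := hac.coloringTwo
  refine ⟨Coloring.mk (fun v => (f v, g v)) ?_⟩
  intro v w h he
  rw [Prod.mk.injEq] at he
  exact g.valid (v := v) (w := w) ⟨h, he.1⟩ he.2

end Gadget

open SimpleGraph in
theorem exists_same_color_gadget (r k : ℕ) (hr : 2 ≤ r) (hk : 3 ≤ k) :
    ∃ (V : Type) (_ : Fintype V) (G : SimpleGraph V) (u v : V),
      u ≠ v ∧
      (k : ℕ∞) ≤ G.egirth ∧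
      (∃ f : V → Fin r, IsAcyclicGraphColoring G f) ∧
      (∀ f : V → Fin r, IsAcyclicGraphColoring G f → f u = f v) ∧
      (∀ p : G.Walk u v, p.IsPath → k ≤ p.support.length) := by
  classical
  obtain ⟨n, G₀, hg₀, hG₀⟩ := Gadget.exists_high (α := Fin r × Fin 2) (by simp; omega) k
  obtain ⟨G, ⟨hg, hG⟩, hmin⟩ := exists_minimal_of_wellFoundedLT
    (fun G : SimpleGraph (Fin n) => (k : ℕ∞) ≤ G.egirth ∧
      ¬ ∃ f : Fin n → Fin r, IsAcyclicGraphColoring G f)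
    ⟨G₀, hg₀, fun ⟨f, hf⟩ => by
      obtain ⟨c⟩ := Gadget.proper_of_acyclic G₀ f hf
      exact hG₀.false c⟩
  have hbot : G ≠ ⊥ := by
    rintro rfl
    refine hG ⟨fun _ => ⟨0, by omega⟩, fun v w hw => ?_⟩
    exact absurd hw (isAcyclic_bot w)
  obtain ⟨u, v, huv⟩ := ne_bot_iff_exists_adj.1 hbot
  have hle : G.deleteEdges {s(u, v)} ≤ G := deleteEdges_le _
  have hg' : (k : ℕ∞) ≤ (G.deleteEdges {s(u, v)}).egirth := hg.trans (egirth_anti hle)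
  refine ⟨Fin n, inferInstance, G.deleteEdges {s(u, v)}, u, v, huv.ne, hg', ?_, ?_, ?_⟩
  · by_contra hcon
    have := hmin ⟨hg', hcon⟩ hle huv
    simp at this
  · intro f hf
    by_contra hne
    refine hG ⟨f, fun a w hw => ?_⟩
    by_cases he : s(u, v) ∈ w.edges
    · have hu := w.fst_mem_support_of_mem_edges he
      have hv := w.snd_mem_support_of_mem_edges he
      by_cases h : f u = f a
      · exact ⟨v, hv, fun h' => hne (h.trans h'.symm)⟩
      · exact ⟨u, hu, h⟩
    · have hed : ∀ e ∈ w.edges, e ∈ (G.deleteEdges {s(u, v)}).edgeSet := by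
        intro e hew
        rw [edgeSet_deleteEdges]
        exact ⟨w.edges_subset_edgeSet hew, fun h => he (by rw [Set.mem_singleton_iff] at h; rwa [← h])⟩
      obtain ⟨x, hx, hxa⟩ := hf a (w.transfer _ hed) (hw.transfer hed)
      rw [Walk.support_transfer] at hx
      exact ⟨x, hx, hxa⟩
  · intro p hp
    have hcyc : (Walk.cons huv.symm (p.mapLe hle)).IsCycle := by
      rw [Walk.cons_isCycle_iff]
      refine ⟨hp.mapLe hle, fun h => ?_⟩
      rw [Walk.edges_mapLe_eq_edges] at h
      have := p.edges_subset_edgeSet h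
      simp [Sym2.eq_swap] at this
    have := le_egirth.1 hg _ _ hcyc
    rw [Walk.length_cons] at this
    have h2 : k ≤ (p.mapLe hle).length + 1 := by exact_mod_cast this
    rw [Walk.length_support]
    simpa using h2
end

section
/- For all integers r ≥ 2 and k ≥ 3, there exists a finite simple graph J with two distinguished distinct vertices u and w such that: (1) J has girth at least k; (2) J admits an acyclic r-coloring; and (3) every acyclic r-coloring of J assigns different colors to u and w. -/
open SimpleGraph
/-- monochromatic subgraph -/
def monoG {V : Type} {r : ℕ} (G : SimpleGraph V) (f : V → Fin r) : SimpleGraph V where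
  Adj a b := G.Adj a b ∧ f a = f b
  symm := ⟨fun _ _ h => ⟨h.1.symm, h.2.symm⟩⟩
  loopless := ⟨fun _ h => h.1.ne rfl⟩

lemma monoG_le {V : Type} {r : ℕ} (G : SimpleGraph V) (f : V → Fin r) : monoG G f ≤ G :=
  fun _ _ h => h.1

lemma monoG_const {V : Type} {r : ℕ} (G : SimpleGraph V) (f : V → Fin r) {a b : V}
    (w : (monoG G f).Walk a b) : ∀ x ∈ w.support, f x = f a := by
  induction w with
  | nil => simp
  | cons h p ih =>
    intro x hx
    rw [Walk.support_cons, List.mem_cons] at hx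
    rcases hx with rfl | hx
    · rfl
    · rw [ih x hx, h.2]

lemma acyc_iff {V : Type} {r : ℕ} (G : SimpleGraph V) (f : V → Fin r) :
    IsAcyclicGraphColoring G f ↔ (monoG G f).IsAcyclic := by
  constructor
  · intro h v w hw
    obtain ⟨x, hx, hne⟩ := h v (w.mapLe (monoG_le G f)) (hw.mapLe _)
    exact hne (monoG_const G f w x (by simpa using hx))
  · intro h v w hw
    by_contra! hc
    refine h (w.transfer (monoG G f) ?_) (hw.transfer _)
    intro e he
    induction e with
    | _ a b =>
      have := w.fst_mem_support_of_mem_edges he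
      have h2 := w.snd_mem_support_of_mem_edges he
      exact ⟨w.adj_of_mem_edges he, by rw [hc _ this, hc _ h2]⟩

lemma part2 {W : Type} [Fintype W] (r k : ℕ) (hr : 2 ≤ r) (G₀ : SimpleGraph W) (z : W)
    (hz : ∀ a, ¬ G₀.Adj z a) (hg : (k : ℕ∞) ≤ G₀.egirth)
    (hn : ∀ f : W → Fin r, ¬ IsAcyclicGraphColoring G₀ f) :
    ∃ (V : Type) (_ : Fintype V) (G : SimpleGraph V) (u w : V),
      u ≠ w ∧
      (k : ℕ∞) ≤ G.egirth ∧
      (∃ f : V → Fin r, IsAcyclicGraphColoring G f) ∧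
      (∀ f : V → Fin r, IsAcyclicGraphColoring G f → f u ≠ f w) := by
  classical
  simp only [acyc_iff] at *
  obtain ⟨G, hGle, hGm⟩ := Finite.exists_le_minimal (p := fun G : SimpleGraph W => ∀ f : W → Fin r, ¬ (monoG G f).IsAcyclic) hn
  have hGn := hGm.prop
  have hGz : ∀ a, ¬ G.Adj z a := fun a h => hz a (hGle h)
  have hGg : (k : ℕ∞) ≤ G.egirth := hg.trans (egirth_anti hGle)
  -- an edge
  have : ∃ x y, G.Adj x y := by
    by_contra! hc
    refine hGn (fun _ => ⟨0, by omega⟩) ?_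
    convert isAcyclic_bot
    ext a b
    simp [monoG, hc]
  obtain ⟨x, y, hxy⟩ := this
  set G' := G.deleteEdges {s(x,y)} with hG'
  have hG'adj : ∀ a b, G'.Adj a b ↔ G.Adj a b ∧ s(a,b) ≠ s(x,y) := by
    intro a b; simp [hG']
  have hG'le : G' ≤ G := deleteEdges_le _
  have hxz : x ≠ z := by rintro rfl; exact hGz _ hxy
  have hyz : y ≠ z := by rintro rfl; exact hGz _ hxy.symm
  have hcol : ∃ f : W → Fin r, (monoG G' f).IsAcyclic := by
    by_contra! hc
    have := hGm.le_of_le hc hG'le hxy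
    simp [hG'adj] at this
  have key : ∀ f : W → Fin r, (monoG G' f).IsAcyclic → f x = f y ∧ (monoG G' f).Reachable x y := by
    intro f hf
    by_contra hc
    refine hGn f ?_
    by_cases hfxy : f x = f y
    · have hnr : ¬ (monoG G' f).Reachable x y := fun h => hc ⟨hfxy, h⟩
      refine IsAcyclic.anti ?_ ((isAcyclic_add_edge_iff_of_not_reachable x y hnr).2 hf)
      intro a b h
      by_cases hab : s(a,b) = s(x,y)
      · rw [sup_adj]; right; rw [edge, fromEdgeSet_adj]; exact ⟨hab, h.1.ne⟩
      · left; exact ⟨(hG'adj _ _).2 ⟨h.1, hab⟩, h.2⟩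
    · refine IsAcyclic.anti ?_ hf
      intro a b h
      refine ⟨(hG'adj _ _).2 ⟨h.1, ?_⟩, h.2⟩
      intro hab
      rw [Sym2.eq_iff] at hab
      rcases hab with ⟨rfl, rfl⟩ | ⟨rfl, rfl⟩
      · exact hfxy h.2
      · exact hfxy h.2.symm
  set J := G' ⊔ fromEdgeSet {s(x,z), s(z,y)} with hJ
  have hJadj : ∀ a b, J.Adj a b ↔ G'.Adj a b ∨ ((s(a,b) = s(x,z) ∨ s(a,b) = s(z,y)) ∧ a ≠ b) := by
    intro a b; simp [hJ, fromEdgeSet_adj]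
  have hJz : ∀ a, J.Adj z a → a = x ∨ a = y := by
    intro a h
    rw [hJadj] at h
    rcases h with h | h
    · exact absurd (hG'le h) (hGz a)
    · simp only [Sym2.eq_iff] at h; grind
  have hJG : ∀ a b, J.Adj a b → a ≠ z → b ≠ z → G'.Adj a b := by
    intro a b h ha hb
    rw [hJadj] at h
    simp only [Sym2.eq_iff] at h; grind
  have hJGe : ∀ {a b} (w : J.Walk a b), z ∉ w.support → ∀ e ∈ w.edges, e ∈ G'.edgeSet := by
    intro a b w hw e he
    induction e with
    | _ c d =>
      have h1 := w.fst_mem_support_of_mem_edges he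
      have h2 := w.snd_mem_support_of_mem_edges he
      exact hJG c d (w.adj_of_mem_edges he) (fun h => hw (h ▸ h1)) (fun h => hw (h ▸ h2))
  refine ⟨W, inferInstance, J, x, z, hxz, ?_, ?_, ?_⟩
  · rw [le_egirth] at hGg ⊢
    intro a w hw
    by_cases hzw : z ∈ w.support
    · have hc := hw.rotate hzw
      have hlen : (w.rotate z hzw).length = w.length := by simp
      rw [← hlen]
      generalize w.rotate z hzw = c at hc
      cases c with
      | nil => exact absurd hc (by simp)
      | @cons _ a _ h p =>
        rw [Walk.cons_isCycle_iff] at hc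
        obtain ⟨hp, he⟩ := hc
        obtain ⟨q', hq'⟩ : ∃ q', q' = p.reverse := ⟨_, rfl⟩
        have hqp : q'.IsPath := by rw [hq']; exact hp.reverse
        have hl : q'.length = p.length := by simp [hq']
        have he' : s(z,a) ∉ q'.edges := by simpa [hq'] using he
        clear hq'
        cases q' with
        | nil => exact absurd h (by simp)
        | @cons _ b _ h' q =>
          rw [Walk.cons_isPath_iff] at hqp
          have hab : G.Adj a b := by
            have hne : a ≠ b := by rintro rfl; simp at he'
            rcases hJz _ h with rfl | rfl <;> rcases hJz _ h' with rfl | rfl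
            · exact absurd rfl hne
            · exact hxy
            · exact hxy.symm
            · exact absurd rfl hne
          have hab2 : s(a,b) = s(x,y) := by
            have hne : a ≠ b := hab.ne
            rcases hJz _ h with rfl | rfl <;> rcases hJz _ h' with rfl | rfl
            · exact absurd rfl hne
            · rfl
            · exact Sym2.eq_swap
            · exact absurd rfl hne
          have hqe := hJGe q hqp.2
          have hqe2 : ∀ e ∈ q.edges, e ∈ G.edgeSet := fun e he => edgeSet_mono hG'le (hqe e he)
          have := hGg a (Walk.cons hab (q.transfer G hqe2)) (by
            rw [Walk.cons_isCycle_iff]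
            refine ⟨hqp.1.transfer _, ?_⟩
            rw [Walk.edges_transfer]
            intro hm
            have := hqe _ hm
            rw [mem_edgeSet, hG'adj] at this
            exact this.2 hab2)
          refine this.trans ?_
          simp only [Walk.length_cons, Walk.length_transfer] at hl ⊢
          exact_mod_cast (by omega)
    · have h1 := hJGe w hzw
      have := hGg a (w.transfer G (fun e he => edgeSet_mono hG'le (h1 e he))) (hw.transfer _)
      simpa using this
  · obtain ⟨f, hf⟩ := hcol
    obtain ⟨hfxy, -⟩ := key f hf
    have : ∃ c : Fin r, c ≠ f x := by
      have : Nontrivial (Fin r) := Fin.nontrivial_iff_two_le.2 hr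
      exact exists_ne _
    obtain ⟨c, hc⟩ := this
    refine ⟨Function.update f z c, IsAcyclic.anti ?_ hf⟩
    intro a b h
    obtain ⟨h1, h2⟩ := h
    have haz : a ≠ z := by
      rintro rfl
      have hba := h1.ne
      rcases hJz _ h1 with rfl | rfl
      · simp [Function.update_of_ne hba.symm] at h2; exact hc h2
      · simp [Function.update_of_ne hba.symm] at h2; exact hc (h2.trans hfxy.symm)
    have hbz : b ≠ z := by
      rintro rfl
      have hba := h1.ne
      rcases hJz _ h1.symm with rfl | rfl
      · simp [Function.update_of_ne hba] at h2; exact hc h2.symm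
      · simp [Function.update_of_ne hba] at h2; exact hc (h2.symm.trans hfxy.symm)
    rw [Function.update_of_ne haz, Function.update_of_ne hbz] at h2
    exact ⟨hJG _ _ h1 haz hbz, h2⟩
  · intro f hf hfx
    have hle : monoG G' f ≤ monoG J f := fun a b h => ⟨(hJadj _ _).2 (Or.inl h.1), h.2⟩
    obtain ⟨hfxy, hR⟩ := key f (hf.anti hle)
    have hadj : (monoG J f).Adj x z := ⟨(hJadj _ _).2 (Or.inr ⟨Or.inl rfl, hxz⟩), hfx⟩
    have hadj2 : (monoG J f).Adj y z := ⟨(hJadj _ _).2 (Or.inr ⟨Or.inr Sym2.eq_swap, hyz⟩), hfxy ▸ hfx⟩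
    have hb := (isAcyclic_iff_forall_adj_isBridge.1 hf) hadj
    rw [isBridge_iff] at hb
    refine hb ?_
    have h1 : ((monoG J f).deleteEdges {s(x,z)}).Reachable x y := by
      refine hR.mono ?_
      intro a b h
      rw [deleteEdges_adj]
      refine ⟨hle h, ?_⟩
      intro hh
      simp only [Set.mem_singleton_iff, Sym2.eq_iff] at hh
      rcases hh with ⟨rfl, rfl⟩ | ⟨rfl, rfl⟩
      · exact hGz _ (hG'le h.1).symm
      · exact hGz _ (hG'le h.1)
    refine h1.trans (Adj.reachable ?_)
    rw [deleteEdges_adj]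
    refine ⟨hadj2, ?_⟩
    have := hxy.ne
    simp only [Set.mem_singleton_iff, Sym2.eq_iff]
    grind

/-- indices of good monochromatic edges -/
def goodP {V : Type} [DecidableEq V] {r : ℕ} (z : V) (c : V → Fin r) (p : V × V) : Prop :=
  p.1 ≠ z ∧ p.2 ≠ z ∧ c p.1 = c p.2

instance {V : Type} [DecidableEq V] {r : ℕ} (z : V) (c : V → Fin r) : DecidablePred (goodP z c) :=
  fun p => by unfold goodP; infer_instance

/-- condition for a closed chain -/
def chainP {V I : Type} (l : ℕ) (f : I → V × V)
    (p : (Fin (l+1) → I) × (Fin (l+1) → V)) : Prop :=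
  Function.Injective p.1 ∧ ∀ j, s((f (p.1 j)).1, (f (p.1 j)).2) = s(p.2 j, p.2 (j+1))

open Classical in
/-- the closed chains -/
noncomputable def shortC {V I : Type} [Fintype V] [Fintype I] (l : ℕ) (f : I → V × V) :
    Finset ((Fin (l+1) → I) × (Fin (l+1) → V)) := Finset.univ.filter (chainP l f)

lemma acyclic_card {V : Type} [Fintype V] [Nonempty V] (G : SimpleGraph V) (h : G.IsAcyclic)
    [Fintype G.edgeSet] :
    G.edgeFinset.card < Fintype.card V := by
  classical
  obtain ⟨T, hT1, hT2, hT3⟩ := (connected_top (V := V)).exists_isTree_le_of_le_of_isAcyclic (le_top (a := G)) h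
  have := hT3.card_edgeFinset
  have h2 : G.edgeFinset.card ≤ T.edgeFinset.card := Finset.card_le_card (edgeFinset_mono ‹_›)
  omega

lemma det {V I : Type} [Fintype V] [DecidableEq V] [Fintype I] [DecidableEq I] (r k : ℕ)
    (hk : 3 ≤ k) (z : V) (f : I → V × V)
    (hs : ∑ l ∈ Finset.range k, (shortC l f).card < Fintype.card V)
    (hm : ∀ c : V → Fin r, 2 * Fintype.card V ≤ (Finset.univ.filter (fun i => goodP z c (f i))).card) :
    ∃ G : SimpleGraph V, (∀ a, ¬ G.Adj z a) ∧ (k : ℕ∞) ≤ G.egirth ∧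
      ∀ c : V → Fin r, ¬ IsAcyclicGraphColoring G c := by
  classical
  set D : Finset I := (Finset.range k).biUnion (fun l => (shortC l f).image (fun p => p.1 0)) with hD
  have hDc : D.card < Fintype.card V := by
    refine lt_of_le_of_lt ?_ hs
    refine Finset.card_biUnion_le.trans (Finset.sum_le_sum fun l _ => Finset.card_image_le)
  have hno : ∀ l < k, ∀ p, chainP l f p → p.1 0 ∈ D := by
    intro l hl p hp
    rw [hD, Finset.mem_biUnion]
    refine ⟨l, Finset.mem_range.2 hl, Finset.mem_image.2 ⟨p, ?_, rfl⟩⟩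
    simpa [shortC] using hp
  set e : I → Sym2 V := fun i => s((f i).1, (f i).2) with he
  have hloop : ∀ i ∉ D, (f i).1 ≠ (f i).2 := by
    intro i hi hh
    refine hi (hno 0 (by omega) (fun _ => i, fun _ => (f i).1) ⟨?_, ?_⟩)
    · intro a b _; exact Subsingleton.elim (α := Fin 1) a b
    · intro j; simp [← hh]
  have hinj : ∀ i ∉ D, ∀ j ∉ D, e i = e j → i = j := by
    intro i hi j hj hh
    by_contra hne
    refine hi (hno 1 (by omega) (![i, j], ![(f i).1, (f i).2]) ⟨?_, ?_⟩)
    · intro a b; fin_cases a <;> fin_cases b <;> simp [hne, Ne.symm hne]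
    · intro a
      fin_cases a
      · simp
      · simp [he] at hh ⊢
        grind
  set G : SimpleGraph V := 
    fromEdgeSet {x | ∃ i, i ∉ D ∧ (f i).1 ≠ z ∧ (f i).2 ≠ z ∧ e i = x} with hG
  have hGadj : ∀ a b, G.Adj a b → ∃ i, i ∉ D ∧ (f i).1 ≠ z ∧ (f i).2 ≠ z ∧ e i = s(a,b) := by
    intro a b h
    rw [hG, fromEdgeSet_adj] at h
    exact h.1
  refine ⟨G, ?_, ?_, ?_⟩
  · intro a h
    obtain ⟨i, -, h1, h2, h3⟩ := hGadj _ _ h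
    simp only [he, Sym2.eq_iff] at h3
    grind
  · rw [le_egirth]
    intro a w hw
    by_contra! hlt
    have hlt : w.length < k := by exact_mod_cast hlt
    obtain ⟨l, hl⟩ : ∃ l, w.length = l + 1 := ⟨w.length - 1, by have := hw.three_le_length; omega⟩
    have hadj : ∀ j : Fin (l+1), G.Adj (w.getVert j) (w.getVert (j+1)) := 
      fun j => w.adj_getVert_succ (by omega)
    choose i hiD _ _ hie using fun j => hGadj _ _ (hadj j)
    refine hiD 0 (hno l (by omega) (i, fun j => w.getVert j) ⟨?_, ?_⟩)
    · intro j j' hjj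
      simp only at hjj
      have h1 : s(w.getVert j, w.getVert (j+1)) = s(w.getVert j', w.getVert (j'+1)) := by
        rw [← hie, ← hie, hjj]
      have hnd := hw.edges_nodup
      have hj : (j : ℕ) < w.edges.length := by rw [Walk.length_edges]; omega
      have hj' : (j' : ℕ) < w.edges.length := by rw [Walk.length_edges]; omega
      have e1 : w.edges[(j:ℕ)] = s(w.getVert j, w.getVert (j+1)) := by
        simp [Walk.getElem_edges]
      have e2 : w.edges[(j':ℕ)] = s(w.getVert j', w.getVert (j'+1)) := by
        simp [Walk.getElem_edges]
      have := (hnd.getElem_inj_iff (hi := hj) (hj := hj')).1 (by rw [e1, e2, h1])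
      exact Fin.ext this
    · intro j
      have := hie j
      simp only [he] at this
      rw [this]
      have hv : w.getVert ((j:ℕ) + 1) = w.getVert ((j + 1 : Fin (l+1)) : ℕ) := ?_
      · rw [hv]
      rcases eq_or_ne j (Fin.last l) with rfl | hjl
      · simp only [Fin.val_last, Fin.last_add_one, Fin.val_zero, Walk.getVert_zero]
        rw [← hl, Walk.getVert_length]
      · rw [Fin.val_add_one_of_lt (Fin.lt_last_iff_ne_last.2 hjl)]
  · intro c hc
    rw [acyc_iff] at hc
    have : Nonempty V := ⟨z⟩
    have h1 := acyclic_card _ hc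
    have h2 := hm c
    set A := Finset.univ.filter (fun i => goodP z c (f i)) with hA
    have h3 : (A \ D).card ≤ (monoG G c).edgeFinset.card := by
      refine Finset.card_le_card_of_injOn e ?_ ?_
      · intro i hi
        rw [Finset.mem_coe, Finset.mem_sdiff, hA, Finset.mem_filter] at hi
        replace hi := And.intro hi.1.2 hi.2
        simp only [Finset.mem_coe, mem_edgeFinset, he, mem_edgeSet]
        refine ⟨?_, hi.1.2.2⟩
        rw [hG, fromEdgeSet_adj]
        exact ⟨⟨i, hi.2, hi.1.1, hi.1.2.1, rfl⟩, hloop i hi.2⟩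
      · intro i hi j hj hij
        rw [Finset.mem_coe, Finset.mem_sdiff] at hi hj
        exact hinj i hi.2 j hj.2 hij
    have h4 := Finset.le_card_sdiff D A
    omega

lemma good_card {V : Type} [Fintype V] [DecidableEq V] {r : ℕ} (z : V) (c : V → Fin r) :
    (Fintype.card V - 1) ^ 2 ≤ r * (Finset.univ.filter (goodP z c)).card := by
  classical
  set S : Finset V := Finset.univ.erase z with hS
  have hSc : S.card = Fintype.card V - 1 := by simp [hS]
  have h1 : S.card = ∑ d : Fin r, (S.filter (fun a => c a = d)).card :=
    Finset.card_eq_sum_card_fiberwise (fun _ _ => by simp)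
  have h2 := sq_sum_le_card_mul_sum_sq (s := (Finset.univ : Finset (Fin r)))
    (f := fun d => (S.filter (fun a => c a = d)).card)
  rw [← h1, hSc] at h2
  simp only [Finset.card_univ, Fintype.card_fin, Nat.cast_id] at h2
  refine h2.trans (Nat.mul_le_mul_left _ (le_of_eq ?_))
  rw [Finset.card_eq_sum_card_fiberwise (f := fun p : V × V => c p.1) (t := Finset.univ) (fun _ _ => by simp)]
  refine Finset.sum_congr rfl fun d _ => ?_
  rw [sq, ← Finset.card_product]
  congr 1
  ext ⟨a, b⟩
  simp [hS, goodP]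
  grind

lemma count1 {V I : Type} [Fintype V] [DecidableEq V] [Fintype I] [DecidableEq I] {r : ℕ}
    (hr : 2 ≤ r) (hV : 2 ≤ Fintype.card V) (z : V) (c : V → Fin r) :
    ∑ f : I → V × V, (1/2 : ℝ) ^ (Finset.univ.filter (fun i => goodP z c (f i))).card ≤
      ((Fintype.card V : ℝ) ^ 2 * (1 - 1 / (8 * r))) ^ Fintype.card I := by
  classical
  have h1 : ∀ f : I → V × V, (1/2 : ℝ) ^ (Finset.univ.filter (fun i => goodP z c (f i))).card =
      ∏ i, (if goodP z c (f i) then (1/2 : ℝ) else 1) := by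
    intro f
    rw [Finset.prod_ite]
    simp
  simp_rw [h1]
  rw [← Fintype.prod_sum (fun (_ : I) (p : V × V) => (if goodP z c p then (1/2 : ℝ) else 1))]
  rw [Finset.prod_const, Finset.card_univ]
  refine pow_le_pow_left₀ (Finset.sum_nonneg fun p _ => by split_ifs <;> norm_num) ?_ _
  have h2 : ∑ p : V × V, (if goodP z c p then (1/2 : ℝ) else 1) =
      (Fintype.card V : ℝ) ^ 2 - (Finset.univ.filter (goodP z c)).card / 2 := by
    have : ∀ p : V × V, (if goodP z c p then (1/2 : ℝ) else 1) = 1 - (if goodP z c p then (1/2 : ℝ) else 0) := by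
      intro p; split_ifs <;> norm_num
    simp_rw [this]
    rw [Finset.sum_sub_distrib, ← Finset.sum_filter]
    simp [Fintype.card_prod]
    ring
  rw [h2]
  have h3 := good_card z c
  obtain ⟨m, hm⟩ : ∃ m, Fintype.card V = m + 1 := ⟨Fintype.card V - 1, by omega⟩
  rw [hm] at h3 ⊢
  have h3' : (m : ℝ) ^ 2 ≤ r * (Finset.univ.filter (goodP z c)).card := by exact_mod_cast h3
  have hm1 : (1 : ℝ) ≤ m := by exact_mod_cast (by omega : 1 ≤ m)
  have hr0 : (0 : ℝ) < r := by positivity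
  have h4 : ((m : ℝ) + 1) ^ 2 / (4 * r) ≤ (Finset.univ.filter (goodP z c)).card := by
    rw [div_le_iff₀ (by positivity)]
    nlinarith
  push_cast
  have h5 : ((m : ℝ) + 1) ^ 2 * (1 - 1 / (8 * r)) = ((m : ℝ) + 1) ^ 2 - (((m : ℝ) + 1) ^ 2 / (4 * r)) / 2 := by
    field_simp; ring
  rw [h5]
  linarith

lemma count2a {V I : Type} [Fintype V] [DecidableEq V] [Fintype I] [DecidableEq I] (L : ℕ)
    (i : Fin L → I) (hi : Function.Injective i) (x y : Fin L → V) :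
    (Finset.univ.filter (fun f : I → V × V => ∀ j, s((f (i j)).1, (f (i j)).2) = s(x j, y j))).card
      * (Fintype.card V ^ 2) ^ L ≤ 2 ^ L * (Fintype.card V ^ 2) ^ Fintype.card I := by
  classical
  set A : I → Finset (V × V) := fun m => Finset.univ.filter
    (fun p => ∀ j, i j = m → s(p.1, p.2) = s(x j, y j)) with hA
  have h1 : (Finset.univ.filter (fun f : I → V × V => ∀ j, s((f (i j)).1, (f (i j)).2) = s(x j, y j)))
      = Fintype.piFinset A := by
    ext f
    simp only [hA, Fintype.mem_piFinset, Finset.mem_filter, Finset.mem_univ, true_and]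
    exact ⟨fun h a j hj => hj ▸ h j, fun h j => h _ j rfl⟩
  rw [h1, Fintype.card_piFinset]
  set S : Finset I := Finset.univ.image i with hS
  have hSc : S.card = L := by rw [hS, Finset.card_image_of_injective _ hi]; simp
  rw [← Finset.prod_mul_prod_compl S]
  have h2 : ∏ m ∈ S, (A m).card ≤ 2 ^ L := by
    rw [← hSc]
    refine Finset.prod_le_pow_card _ _ _ ?_
    intro m hm
    obtain ⟨j, -, rfl⟩ := Finset.mem_image.1 hm
    have : A (i j) ⊆ {(x j, y j), (y j, x j)} := by
      intro p hp
      simp only [hA, Finset.mem_filter] at hp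
      have := hp.2 j rfl
      rw [Sym2.eq_iff] at this
      rcases p with ⟨a, b⟩
      simpa using this
    exact (Finset.card_le_card this).trans Finset.card_le_two
  have h3 : ∏ m ∈ Sᶜ, (A m).card ≤ (Fintype.card V ^ 2) ^ Sᶜ.card := by
    refine Finset.prod_le_pow_card _ _ _ ?_
    intro m _
    refine (Finset.card_le_univ _).trans (by simp [Fintype.card_prod, sq])
  have h4 : Sᶜ.card + L = Fintype.card I := by
    rw [← hSc, add_comm]; exact Finset.card_add_card_compl S
  rw [← h4, pow_add, ← mul_assoc]
  exact Nat.mul_le_mul_right _ (Nat.mul_le_mul h2 h3)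

lemma count2 {V I : Type} [Fintype V] [DecidableEq V] [Fintype I] [DecidableEq I] (l : ℕ)
    (hV : 0 < Fintype.card V) :
    (∑ f : I → V × V, (shortC l f).card) * Fintype.card V ^ (l+1) ≤
      (2 * Fintype.card I) ^ (l+1) * (Fintype.card V ^ 2) ^ Fintype.card I := by
  classical
  have h1 : ∑ f : I → V × V, (shortC l f).card =
      ∑ p : (Fin (l+1) → I) × (Fin (l+1) → V), (Finset.univ.filter (fun f : I → V × V => chainP l f p)).card := by
    simp only [shortC, Finset.card_filter]
    exact Finset.sum_comm
  have h2 : ∀ p : (Fin (l+1) → I) × (Fin (l+1) → V),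
      (Finset.univ.filter (fun f : I → V × V => chainP l f p)).card * (Fintype.card V ^ 2) ^ (l+1) ≤
        2 ^ (l+1) * (Fintype.card V ^ 2) ^ Fintype.card I := by
    intro p
    by_cases hp : Function.Injective p.1
    · refine le_trans (le_of_eq ?_) (count2a (l+1) p.1 hp p.2 (fun j => p.2 (j+1)))
      simp [chainP, hp]
    · simp [chainP, hp]
  have h3 : (∑ f : I → V × V, (shortC l f).card) * (Fintype.card V ^ 2) ^ (l+1) ≤
      (Fintype.card I ^ (l+1) * Fintype.card V ^ (l+1)) * (2 ^ (l+1) * (Fintype.card V ^ 2) ^ Fintype.card I) := by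
    rw [h1, Finset.sum_mul]
    refine (Finset.sum_le_card_nsmul _ _ _ fun p _ => h2 p).trans (le_of_eq ?_)
    simp
  refine Nat.le_of_mul_le_mul_right ?_ (pow_pos hV (l+1))
  calc _ = (∑ f : I → V × V, (shortC l f).card) * (Fintype.card V ^ 2) ^ (l+1) := by ring
    _ ≤ _ := h3
    _ = _ := by ring

set_option maxHeartbeats 1000000 in
lemma part1 (r k : ℕ) (hr : 2 ≤ r) (hk : 3 ≤ k) :
    ∃ (n : ℕ) (z : Fin n) (G : SimpleGraph (Fin n)), (∀ a, ¬ G.Adj z a) ∧ (k : ℕ∞) ≤ G.egirth ∧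
      ∀ c : Fin n → Fin r, ¬ IsAcyclicGraphColoring G c := by
  classical
  have hr0 : (2 : ℝ) ≤ r := by exact_mod_cast hr
  set q : ℝ := 1 - 1 / (8 * r) with hq
  have hq8 : 1 / (8 * (r:ℝ)) ≤ 1 := by
    rw [div_le_one (by positivity)]; linarith
  have hq0 : 0 ≤ q := by rw [hq]; linarith
  have hq1 : q < 1 := by
    have : 0 < 1 / (8 * (r:ℝ)) := by positivity
    rw [hq]; linarith
  obtain ⟨C, hC⟩ := exists_pow_lt_of_lt_one (show (0:ℝ) < 1 / (8 * r) by positivity) hq1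
  set K : ℕ := ∑ l ∈ Finset.range k, (2 * C) ^ (l+1) with hK
  obtain ⟨n, hn⟩ : ∃ n, n = 2 * K + 2 := ⟨_, rfl⟩
  have hn0 : (0:ℝ) < n := by rw [hn]; positivity
  set z : Fin n := ⟨0, by omega⟩
  set N : ℝ := ((n : ℝ) ^ 2) ^ (C * n) with hN
  have hNpos : 0 < N := by positivity
  -- first sum
  have s1 : ∀ c : Fin n → Fin r, ∑ f : Fin (C * n) → Fin n × Fin n,
      (1/2 : ℝ) ^ (Finset.univ.filter (fun i => goodP z c (f i))).card ≤ N * (q ^ C) ^ n := by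
    intro c
    have := count1 (I := Fin (C * n)) hr (by simp; omega) z c
    simp only [Fintype.card_fin] at this
    refine this.trans (le_of_eq ?_)
    rw [mul_pow, hN, ← pow_mul q]
  have s2 : ∀ l, (∑ f : Fin (C * n) → Fin n × Fin n, ((shortC l f).card : ℝ)) ≤ (2 * C) ^ (l+1) * N := by
    intro l
    have := count2 (V := Fin n) (I := Fin (C * n)) l (by simp; omega)
    simp only [Fintype.card_fin] at this
    have h : (∑ f : Fin (C * n) → Fin n × Fin n, ((shortC l f).card : ℝ)) * n ^ (l+1) ≤
      (2 * (C * n)) ^ (l+1) * N := by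
      rw [hN]; exact_mod_cast this
    refine le_of_mul_le_mul_right (h.trans (le_of_eq ?_)) (pow_pos hn0 (l+1))
    rw [← mul_assoc, mul_pow]; ring
  have ex : ∃ f : Fin (C * n) → Fin n × Fin n,
      (∑ c : Fin n → Fin r, (4:ℝ) ^ n * (1/2 : ℝ) ^ (Finset.univ.filter (fun i => goodP z c (f i))).card)
        + (∑ l ∈ Finset.range k, ((shortC l f).card : ℝ)) / n < 1 := by
    by_contra! hcon
    have hsum := Finset.sum_le_sum (fun f (_ : f ∈ (Finset.univ : Finset (Fin (C * n) → Fin n × Fin n))) => hcon f)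
    rw [Finset.sum_add_distrib, Finset.sum_comm, ← Finset.sum_div, Finset.sum_comm (s := Finset.univ) (t := Finset.range k)] at hsum
    have e0 : ∑ f : Fin (C * n) → Fin n × Fin n, (1:ℝ) = N := by
      simp [hN, Fintype.card_prod, sq]
    rw [e0] at hsum
    have e1 : ∑ c : Fin n → Fin r, ∑ f : Fin (C * n) → Fin n × Fin n, (4:ℝ) ^ n * (1/2 : ℝ) ^ (Finset.univ.filter (fun i => goodP z c (f i))).card
        ≤ (4 * r * q ^ C) ^ n * N := by
      refine (Finset.sum_le_card_nsmul _ _ (4 ^ n * (N * (q ^ C) ^ n)) fun c _ => ?_).trans (le_of_eq ?_)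
      · rw [← Finset.mul_sum]
        exact mul_le_mul_of_nonneg_left (s1 c) (by positivity)
      · simp; ring
    have e2 : (4 * r * q ^ C) ^ n ≤ 1 / 2 := by
      have b : 4 * r * q ^ C ≤ 1 / 2 := by
        have : 4 * r * q ^ C ≤ 4 * r * (1 / (8 * r)) := mul_le_mul_of_nonneg_left hC.le (by positivity)
        refine this.trans (le_of_eq ?_)
        field_simp; norm_num
      have b0 : 0 ≤ 4 * r * q ^ C := by positivity
      calc (4 * r * q ^ C) ^ n ≤ (4 * r * q ^ C) ^ 1 := pow_le_pow_of_le_one b0 (by linarith) (by omega)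
        _ ≤ 1 / 2 := by simpa using b
    have e3 : (∑ l ∈ Finset.range k, ∑ f : Fin (C * n) → Fin n × Fin n, ((shortC l f).card : ℝ)) ≤ K * N := by
      refine (Finset.sum_le_sum fun l _ => s2 l).trans (le_of_eq ?_)
      rw [← Finset.sum_mul, hK]; push_cast; rfl
    have e4 : (∑ l ∈ Finset.range k, ∑ f : Fin (C * n) → Fin n × Fin n, ((shortC l f).card : ℝ)) / n < N / 2 := by
      rw [div_lt_iff₀ hn0]
      refine e3.trans_lt ?_
      have : (n : ℝ) = 2 * K + 2 := by rw [hn]; push_cast; ring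
      rw [this]; nlinarith
    have e5 : (4 * r * q ^ C) ^ n * N ≤ 1 / 2 * N := mul_le_mul_of_nonneg_right e2 hNpos.le
    linarith
  obtain ⟨f, hf⟩ := ex
  refine ⟨n, z, det r k hk z f ?_ ?_⟩
  · have h1 : (∑ l ∈ Finset.range k, ((shortC l f).card : ℝ)) / n < 1 := by
      refine lt_of_le_of_lt ?_ hf
      exact le_add_of_nonneg_left (Finset.sum_nonneg fun _ _ => by positivity)
    rw [div_lt_one hn0] at h1
    simp only [Fintype.card_fin]
    exact_mod_cast h1
  · intro c
    by_contra! hlt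
    simp only [Fintype.card_fin] at hlt
    have h1 : (4:ℝ) ^ n * (1/2 : ℝ) ^ (Finset.univ.filter (fun i => goodP z c (f i))).card < 1 := by
      refine lt_of_le_of_lt ?_ hf
      refine le_trans ?_ (le_add_of_nonneg_right (div_nonneg (Finset.sum_nonneg fun l _ => Nat.cast_nonneg _) hn0.le))
      exact Finset.single_le_sum (f := fun c : Fin n → Fin r => (4:ℝ) ^ n * (1/2 : ℝ) ^ (Finset.univ.filter (fun i => goodP z c (f i))).card)
        (fun _ _ => by positivity) (Finset.mem_univ c)
    have h2 : (1/2 : ℝ) ^ (2 * n) ≤ (1/2 : ℝ) ^ (Finset.univ.filter (fun i => goodP z c (f i))).card :=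
      pow_le_pow_of_le_one (by norm_num) (by norm_num) hlt.le
    have h3 : (4:ℝ) ^ n * (1/2 : ℝ) ^ (2 * n) = 1 := by
      rw [pow_mul, ← mul_pow]; norm_num
    have : (4:ℝ) ^ n * (1/2 : ℝ) ^ (2 * n) ≤ (4:ℝ) ^ n * (1/2 : ℝ) ^ (Finset.univ.filter (fun i => goodP z c (f i))).card :=
      mul_le_mul_of_nonneg_left h2 (by positivity)
    linarith

/-- For all `r ≥ 2`, `k ≥ 3` there is a finite simple graph `J` with girth at
least `k`, admitting an acyclic `r`-coloring, with two distinct vertices `u`,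
`w` that get different colors in every acyclic `r`-coloring. -/
theorem exists_diff_color_gadget (r k : ℕ) (hr : 2 ≤ r) (hk : 3 ≤ k) :
    ∃ (V : Type) (_ : Fintype V) (G : SimpleGraph V) (u w : V),
      u ≠ w ∧
      (k : ℕ∞) ≤ G.egirth ∧
      (∃ f : V → Fin r, IsAcyclicGraphColoring G f) ∧
      (∀ f : V → Fin r, IsAcyclicGraphColoring G f → f u ≠ f w) := by
  obtain ⟨n, z, G, hz, hg, hc⟩ := part1 r k hr hk
  exact part2 r k hr G z hz hg hc
end

section
/- For all integers r ≥ 2 and k ≥ 3, there exists a finite digraph J with two distinguished distinct vertices u and v such that: (1) J has directed girth at least k (every directed cycle of J has length at least k); (2) J admits an acyclic r-coloring; (3) every acyclic r-coloring of J assigns the same color to u and v; and (4) every directed path in J from u to v has at least k vertices. -/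
/-- `f` is an acyclic coloring of the digraph with arc relation `Adj`: no
directed cycle is monochromatic. -/
def IsAcyclicDigraphColoring {V : Type} {r : ℕ} (Adj : V → V → Prop) (f : V → Fin r) : Prop :=
  ∀ (ℓ : ℕ) (c : ZMod ℓ → V), IsDicycle Adj ℓ c → ∃ i j : ZMod ℓ, f (c i) ≠ f (c j)

/-- A directed path on `ℓ + 1` distinct vertices in the digraph `Adj`. -/
def IsDipath {V : Type} (Adj : V → V → Prop) (ℓ : ℕ) (c : Fin (ℓ + 1) → V) : Prop :=
  Function.Injective c ∧ ∀ i : Fin ℓ, Adj (c i.castSucc) (c i.succ)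

lemma dicycle_lift {V : Type} {k : ℕ} {Adj : V → V → Prop} (i : ZMod k) {ℓ : ℕ} {c : ZMod ℓ → V}
    (h : IsDicycle Adj ℓ c) :
    IsDicycle (fun p q : ZMod k × V => q.1 = p.1 + 1 ∨ (p.1 = q.1 ∧ Adj p.2 q.2)) ℓ
      (fun j => (i, c j)) := by
  refine ⟨h.1, fun a b hab => h.2.1 (Prod.ext_iff.1 hab).2, fun j => Or.inr ⟨rfl, h.2.2 j⟩⟩

lemma exists_big (k : ℕ) (hk : 3 ≤ k) (r : ℕ) :
    ∃ (V : Type) (_ : Fintype V) (Adj : V → V → Prop),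
      (∀ w : V, ¬ Adj w w) ∧
      (∀ (ℓ : ℕ) (c : ZMod ℓ → V), IsDicycle Adj ℓ c → k ≤ ℓ) ∧
      (∀ (S : Finset ℕ) (f : V → ℕ), S.card = r → (∀ v, f v ∈ S) →
        ∃ (ℓ : ℕ) (c : ZMod ℓ → V), IsDicycle Adj ℓ c ∧ ∀ i j, f (c i) = f (c j)) := by
  induction r with
  | zero =>
    refine ⟨Unit, inferInstance, fun _ _ => False, fun _ h => h, ?_, ?_⟩
    · intro ℓ c h
      exact (h.2.2 0).elim
    · intro S f hS hf
      have := hf ()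
      rw [Finset.card_eq_zero.1 hS] at this
      simp at this
  | succ r ih =>
    obtain ⟨V, _, Adj, hirr, hg, hcol⟩ := ih
    have : NeZero k := ⟨by omega⟩
    have : Fact (1 < k) := ⟨by omega⟩
    refine ⟨ZMod k × V, inferInstance,
      fun p q => q.1 = p.1 + 1 ∨ (p.1 = q.1 ∧ Adj p.2 q.2), ?_, ?_, ?_⟩
    · rintro ⟨i, a⟩ (h | h)
      · simp at h
      · exact hirr _ h.2
    · intro ℓ c ⟨h2, hinj, hadj⟩
      have : NeZero ℓ := ⟨by omega⟩
      classical
      by_cases hall : ∀ j, (c (j+1)).1 ≠ (c j).1 + 1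
      · have hstep : ∀ j, (c j).1 = (c (j+1)).1 ∧ Adj (c j).2 (c (j+1)).2 := fun j =>
          (hadj j).resolve_left (hall j)
        have hconst : ∀ n : ℕ, (c (n : ZMod ℓ)).1 = (c 0).1 := by
          intro n
          induction n with
          | zero => simp
          | succ n ih => rw [← ih, (hstep n).1]; push_cast; rfl
        have hconst' : ∀ j, (c j).1 = (c 0).1 := fun j => by
          have := hconst j.val
          rwa [ZMod.natCast_zmod_val] at this
        refine hg ℓ (fun j => (c j).2) ⟨h2, ?_, fun j => (hstep j).2⟩
        intro a b hab
        exact hinj (Prod.ext ((hconst' a).trans (hconst' b).symm) hab)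
      · push Not at hall
        obtain ⟨j0, hj0⟩ := hall
        have hsum : ∑ j : ZMod ℓ, ((c (j+1)).1 - (c j).1) = 0 := by
          rw [Finset.sum_sub_distrib, sub_eq_zero]
          exact Equiv.sum_comp (Equiv.addRight (1 : ZMod ℓ)) (fun j => (c j).1)
        have hd : ∀ j, (c (j+1)).1 - (c j).1 = if (c (j+1)).1 = (c j).1 + 1 then 1 else 0 := by
          intro j
          split_ifs with h
          · rw [h]; ring
          · rw [((hadj j).resolve_left h).1]; ring
        rw [Finset.sum_congr rfl (fun j _ => hd j), Finset.sum_boole,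
          ZMod.natCast_eq_zero_iff] at hsum
        have h1 := Nat.le_of_dvd (Finset.card_pos.2 ⟨j0, by simp [hj0]⟩) hsum
        refine h1.trans ((Finset.card_le_univ _).trans ?_)
        rw [ZMod.card]
    · intro S f hS hf
      by_contra hno
      obtain ⟨s, hs⟩ := Finset.card_pos.1 (by omega : 0 < S.card)
      have key : ∀ i : ZMod k, ∃ a, f (i, a) = s := by
        intro i
        by_contra hne
        push Not at hne
        obtain ⟨ℓ, c, hc, hm⟩ := hcol (S.erase s) (fun a => f (i, a))
          (by rw [Finset.card_erase_of_mem hs]; omega)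
          (fun a => Finset.mem_erase.2 ⟨hne a, hf _⟩)
        exact hno ⟨ℓ, _, dicycle_lift i hc, hm⟩
      choose a ha using key
      refine hno ⟨k, fun i => (i, a i), ⟨by omega, fun x y h => (Prod.ext_iff.1 h).1,
        fun j => Or.inl rfl⟩, fun i j => by rw [ha, ha]⟩

/-- For all `r ≥ 2`, `k ≥ 3` there is a finite digraph `J` with directed girth
at least `k`, admitting an acyclic `r`-coloring, with two distinct vertices
`u`, `v` that get the same color in every acyclic `r`-coloring, and such that
every directed path from `u` to `v` has at least `k` vertices. -/
theorem exists_same_color_digraph_gadget (r k : ℕ) (hr : 2 ≤ r) (hk : 3 ≤ k) :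
    ∃ (V : Type) (_ : Fintype V) (Adj : V → V → Prop) (u v : V),
      u ≠ v ∧
      (∀ w : V, ¬ Adj w w) ∧
      (∀ (ℓ : ℕ) (c : ZMod ℓ → V), IsDicycle Adj ℓ c → k ≤ ℓ) ∧
      (∃ f : V → Fin r, IsAcyclicDigraphColoring Adj f) ∧
      (∀ f : V → Fin r, IsAcyclicDigraphColoring Adj f → f u = f v) ∧
      (∀ (ℓ : ℕ) (c : Fin (ℓ + 1) → V),
        IsDipath Adj ℓ c → c 0 = u → c (Fin.last ℓ) = v → k ≤ ℓ + 1) := by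
  obtain ⟨V, hV, A0, hirr, hg, hcol⟩ := exists_big k hk r
  let P : Set (V → V → Prop) :=
    {A | A ≤ A0 ∧ ¬ ∃ f : V → Fin r, IsAcyclicDigraphColoring A f}
  have hP : A0 ∈ P := by
    refine ⟨le_rfl, ?_⟩
    rintro ⟨f, hf⟩
    obtain ⟨ℓ, c, hc, hm⟩ := hcol (Finset.range r) (fun v => (f v : ℕ)) (by simp) (by simp)
    obtain ⟨i, j, hij⟩ := hf ℓ c hc
    exact hij (Fin.ext (hm i j))
  obtain ⟨A, hA⟩ := (Set.toFinite P).exists_minimal ⟨A0, hP⟩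
  have hsub : ∀ a b, A a b → A0 a b := hA.1.1
  have hnc := hA.1.2
  have hex : ∃ x y, A x y := by
    by_contra hno
    push Not at hno
    exact hnc ⟨fun _ => ⟨0, by omega⟩, fun ℓ c hc => (hno _ _ (hc.2.2 0)).elim⟩
  obtain ⟨x, y, hxy⟩ := hex
  have hne : y ≠ x := by
    rintro rfl
    exact hirr _ (hsub _ _ hxy)
  let B : V → V → Prop := fun a b => A a b ∧ ¬ (a = x ∧ b = y)
  have hBA : B ≤ A := fun a b h => h.1
  have mono : ∀ ℓ c, IsDicycle A ℓ c → IsDicycle A0 ℓ c := fun ℓ c h =>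
    ⟨h.1, h.2.1, fun j => hsub _ _ (h.2.2 j)⟩
  refine ⟨V, hV, B, y, x, hne, fun w h => hirr w (hsub _ _ h.1), ?_, ?_, ?_, ?_⟩
  · intro ℓ c h
    exact hg ℓ c (mono ℓ c ⟨h.1, h.2.1, fun j => (h.2.2 j).1⟩)
  · by_contra hB
    have h := hA.2 (show B ∈ P from ⟨hBA.trans hA.1.1, hB⟩) hBA x y hxy
    exact h.2 ⟨rfl, rfl⟩
  · intro f hf
    by_contra hfne
    refine hnc ⟨f, fun ℓ c hc => ?_⟩
    by_contra hm
    push Not at hm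
    obtain ⟨i, j, hij⟩ := hf ℓ c ⟨hc.1, hc.2.1, fun j => ⟨hc.2.2 j, fun h => by
      apply hfne
      rw [← h.1, ← h.2]
      exact hm _ _⟩⟩
    exact hij (hm i j)
  · intro ℓ c hc h0 hl
    have hpos : ℓ ≠ 0 := by
      rintro rfl
      exact hne (h0.symm.trans hl)
    have h2 : 2 ≤ ℓ + 1 := by omega
    refine hg (ℓ + 1) c (mono (ℓ + 1) c ⟨h2, hc.1, ?_⟩)
    have key : ∀ j : Fin (ℓ + 1), A (c j) (c (j + 1 : Fin (ℓ + 1))) := by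
      intro j
      induction j using Fin.lastCases with
      | last => rw [Fin.last_add_one, h0, hl]; exact hxy
      | cast i =>
        have e : (i.castSucc + 1 : Fin (ℓ + 1)) = i.succ := Fin.coeSucc_eq_succ
        rw [e]
        exact (hc.2 i).1
    exact key
end
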